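/- arXiv:2407.14610 — 2 statements merged into one kernel-verified Lean document; each statement's English description precedes it below -/
import Mathlib

section
/- Let K ⊆ Ĉ be compact, let P ⊆ Ĉ contain exactly one point from each connected component of Ĉ \ K, and suppose f is holomorphic in an open neighborhood U of K (holomorphic at ∞ meaning that w ↦ f(1/w) is holomorphic in a neighborhood of 0). Then there exist constants A, B ∈ (1, ∞) and a sequence of rational functions R_n of degree ≤ n whose poles lie in P, such that sup_{z ∈ K} |f(z) − R_n(z)| ≤ A/Bⁿ for all n ∈ ℕ. -/
open Set Metric Topology Filter Polynomial

noncomputable section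

/-- A Jordan curve: a set homeomorphic to the unit circle. -/
def IsJordanCurve {X : Type*} [TopologicalSpace X] (E : Set X) : Prop :=
  Nonempty (E ≃ₜ (Metric.sphere (0 : ℂ) 1 : Set ℂ))

/-- A simple arc: a set homeomorphic to the open unit interval `(0,1)`. -/
def IsSimpleArc {X : Type*} [TopologicalSpace X] (E : Set X) : Prop :=
  Nonempty (E ≃ₜ (Set.Ioo (0 : ℝ) 1 : Set ℝ))

/-- The connected components of a set. -/
def setComponents {X : Type*} [TopologicalSpace X] (A : Set X) : Set (Set X) :=
  {C | ∃ x ∈ A, C = connectedComponentIn A x}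

/-- The edges of the pair `(G, V)`: the connected components of `G \ V`. -/
def graphEdges {X : Type*} [TopologicalSpace X] (G V : Set X) : Set (Set X) :=
  setComponents (G \ V)

/-- The degree of a vertex `v`: the number of edges `e` with `v ∈ closure e \ e`,
where an edge is counted twice if `closure e \ e = {v}`. -/
def vertexDegree {X : Type*} [TopologicalSpace X] (G V : Set X) (v : X) : ℕ :=
  {e ∈ graphEdges G V | v ∈ closure e \ e}.ncard +
    {e ∈ graphEdges G V | closure e \ e = {v}}.ncard

/-- `G` is a lemniscate graph with (finite) vertex set `V`. -/
structure IsLemniscateGraphWith {X : Type*} [TopologicalSpace X] (G V : Set X) : Prop where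
  vertex_subset : V ⊆ G
  vertex_finite : V.Finite
  edges_finite : (graphEdges G V).Finite
  edge_shape : ∀ e ∈ graphEdges G V, IsJordanCurve e ∨ (IsSimpleArc e ∧ closure e \ e ⊆ V)
  degree_even : ∀ v ∈ V, Even (vertexDegree G V v)
  degree_ge_four : ∀ v ∈ V, 4 ≤ vertexDegree G V v

/-- `G` is a lemniscate graph (for some finite vertex set). -/
def IsLemniscateGraph {X : Type*} [TopologicalSpace X] (G : Set X) : Prop :=
  ∃ V, IsLemniscateGraphWith G V

/-- The faces of `G`: the connected components of the complement of `G`. -/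
def graphFaces {X : Type*} [TopologicalSpace X] (G : Set X) : Set (Set X) :=
  setComponents Gᶜ

/-- A 2-coloring of the faces of `G`, recorded by the set `grey` of grey faces:
two distinct faces whose closures share a common edge get different colors. -/
def IsTwoColoring {X : Type*} [TopologicalSpace X] (G V : Set X) (grey : Set (Set X)) : Prop :=
  grey ⊆ graphFaces G ∧
    ∀ F₁ ∈ graphFaces G, ∀ F₂ ∈ graphFaces G, F₁ ≠ F₂ →
      (∃ e ∈ graphEdges G V, e ⊆ closure F₁ ∧ e ⊆ closure F₂) →
      (F₁ ∈ grey ↔ F₂ ∉ grey)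

/-- The distance function of a metric space structure on the Riemann sphere. -/
def mdist (m : MetricSpace (OnePoint ℂ)) : OnePoint ℂ → OnePoint ℂ → ℝ :=
  m.toPseudoMetricSpace.toDist.dist

/-- The metric space structure `m` induces the standard topology of the Riemann sphere. -/
def InducesSphereTopology (m : MetricSpace (OnePoint ℂ)) : Prop :=
  m.toPseudoMetricSpace.toUniformSpace.toTopologicalSpace =
    (inferInstance : TopologicalSpace (OnePoint ℂ))

/-- `E` and `F` are `ε`-homeomorphic with respect to the metric `m`: there is a
homeomorphism of the sphere carrying `E` to `F` and moving points less than `ε`. -/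
def EpsHomeomorphic (m : MetricSpace (OnePoint ℂ)) (ε : ℝ) (E F : Set (OnePoint ℂ)) : Prop :=
  ∃ φ : OnePoint ℂ ≃ₜ OnePoint ℂ, φ '' E = F ∧ ∃ c < ε, ∀ z, mdist m (φ z) z ≤ c

/-- `r` is a rational map on the Riemann sphere: the continuous extension of `p/q`
for coprime polynomials `p`, `q`, not both constant. -/
def IsRationalMap (r : OnePoint ℂ → OnePoint ℂ) : Prop :=
  Continuous r ∧ ∃ p q : ℂ[X], IsCoprime p q ∧ ¬(p.natDegree = 0 ∧ q.natDegree = 0) ∧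
    ∀ z : ℂ, q.eval z ≠ 0 → r (z : OnePoint ℂ) = ((p.eval z / q.eval z : ℂ) : OnePoint ℂ)

/-- The lemniscate of `r` : the preimage of the unit circle. -/
def lemniscate (r : OnePoint ℂ → OnePoint ℂ) : Set (OnePoint ℂ) :=
  r ⁻¹' ((fun w : ℂ => (w : OnePoint ℂ)) '' {w : ℂ | ‖w‖ = 1})

/-- The copy of a planar set inside the Riemann sphere. -/
def toSphere (s : Set ℂ) : Set (OnePoint ℂ) := (fun z : ℂ => (z : OnePoint ℂ)) '' s


/-- `r` is a rational map of degree at most `n` (constants are allowed,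
so that degree `≤ n` makes sense for every `n`): the continuous extension of
`p/q` with `p`, `q` coprime, `q ≠ 0`, and `max (deg p) (deg q) ≤ n`. -/
def IsRationalMapDegLE (r : OnePoint ℂ → OnePoint ℂ) (n : ℕ) : Prop :=
  Continuous r ∧ ∃ p q : ℂ[X], IsCoprime p q ∧ q ≠ 0 ∧
    p.natDegree ≤ n ∧ q.natDegree ≤ n ∧
    ∀ z : ℂ, q.eval z ≠ 0 → r (z : OnePoint ℂ) = ((p.eval z / q.eval z : ℂ) : OnePoint ℂ)

/-- `f : Ĉ → ℂ` is holomorphic on the open set `U ⊆ Ĉ` : holomorphic at every finite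
point of `U`, and at `∞` (if `∞ ∈ U`) the function `w ↦ f(1/w)` is holomorphic in a
neighborhood of `0`. -/
def SphereHolomorphicOn (f : OnePoint ℂ → ℂ) (U : Set (OnePoint ℂ)) : Prop :=
  (∀ z : ℂ, (z : OnePoint ℂ) ∈ U → DifferentiableAt ℂ (fun w : ℂ => f (w : OnePoint ℂ)) z) ∧
  (OnePoint.infty ∈ U → ∃ s ∈ 𝓝 (0 : ℂ), DifferentiableOn ℂ
      (fun w : ℂ => f (if w = 0 then OnePoint.infty else ((w⁻¹ : ℂ) : OnePoint ℂ))) s)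

/-- The Wirtinger derivative `∂g/∂z̄`. -/
def wirtingerBar (g : ℂ → ℂ) (w : ℂ) : ℂ :=
  (fderiv ℝ g w 1 + Complex.I * fderiv ℝ g w Complex.I) / 2

theorem wirtingerBar_eq_zero {g : ℂ → ℂ} {w : ℂ} (h : DifferentiableAt ℂ g w) :
    wirtingerBar g w = 0 := by
  have h1 : fderiv ℝ g w = (fderiv ℂ g w).restrictScalars ℝ := h.fderiv_restrictScalars ℝ
  have h2 : fderiv ℂ g w Complex.I = Complex.I * fderiv ℂ g w 1 := by
    rw [← smul_eq_mul, ← map_smul, smul_eq_mul, mul_one]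
  simp only [wirtingerBar, h1, ContinuousLinearMap.coe_restrictScalars', h2]
  rw [← mul_assoc, Complex.I_mul_I]
  ring

theorem continuous_wirtingerBar {g : ℂ → ℂ} (hg : ContDiff ℝ 1 g) :
    Continuous (wirtingerBar g) := by
  have h := hg.continuous_fderiv one_ne_zero
  unfold wirtingerBar
  fun_prop

theorem wirtingerBar_comp_const_add (g : ℂ → ℂ) (z w : ℂ) :
    wirtingerBar (fun v => g (z + v)) w = wirtingerBar g (z + w) := by
  simp only [wirtingerBar, fderiv_comp_add_left]

/-- In polar coordinates, `∂g/∂z̄` splits into a radial and an angular derivative. -/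
theorem conj_circle_mul_wirtingerBar (g : ℂ → ℂ) (w : ℂ) (θ : ℝ) :
    Complex.exp (-(θ * Complex.I)) * wirtingerBar g w =
      (fderiv ℝ g w (Complex.exp (θ * Complex.I)) +
        Complex.I * fderiv ℝ g w (Complex.I * Complex.exp (θ * Complex.I))) / 2 := by
  have e1 : Complex.exp (θ * Complex.I) =
      Real.cos θ • (1 : ℂ) + Real.sin θ • Complex.I := by
    rw [Complex.exp_mul_I]; simp
  have e2 : Complex.I * Complex.exp (θ * Complex.I) =
      (-Real.sin θ) • (1 : ℂ) + Real.cos θ • Complex.I := by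
    rw [e1]; apply Complex.ext <;> simp
  have e3 : Complex.exp (-(θ * Complex.I)) = Real.cos θ - Real.sin θ * Complex.I := by
    rw [← neg_mul, Complex.exp_mul_I]; simp [sub_eq_add_neg]
  rw [e2, e1, e3]
  simp only [map_add, map_smul, wirtingerBar]
  simp only [Complex.real_smul, Complex.ofReal_neg]
  linear_combination (- Real.sin θ * fderiv ℝ g w Complex.I/2) * Complex.I_mul_I

/-- A continuous function vanishing for large radii is integrable on the polar coordinate strip. -/
theorem integrableOn_polar {E : Type*} [NormedAddCommGroup E] {G : ℝ × ℝ → E} (hG : Continuous G)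
    {M : ℝ} (h0 : ∀ r θ, M < r → G (r, θ) = 0) :
    MeasureTheory.IntegrableOn G (Ioi 0 ×ˢ Ioo (-Real.pi) Real.pi)
      (MeasureTheory.volume.prod MeasureTheory.volume) := by
  have h1 : MeasureTheory.IntegrableOn G (Icc 0 M ×ˢ Icc (-Real.pi) Real.pi)
      (MeasureTheory.volume.prod MeasureTheory.volume) :=
    hG.continuousOn.integrableOn_compact (isCompact_Icc.prod isCompact_Icc)
  refine MeasureTheory.IntegrableOn.of_forall_sdiff_eq_zero h1
    (measurableSet_Ioi.prod measurableSet_Ioo) ?_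
  rintro ⟨r, θ⟩ ⟨⟨hr, hθ⟩, hn⟩
  refine h0 r θ ?_
  by_contra hM
  exact hn ⟨⟨le_of_lt hr, not_lt.1 hM⟩, Ioo_subset_Icc_self hθ⟩

theorem integral_inv_mul_wirtingerBar_zero {g : ℂ → ℂ} (hg : ContDiff ℝ 1 g)
    (hc : HasCompactSupport g) :
    ∫ w, w⁻¹ * wirtingerBar g w = -Real.pi * g 0 := by
  have hD := hg.continuous_fderiv one_ne_zero
  obtain ⟨M, hM⟩ := hc.isCompact.isBounded.subset_closedBall 0
  have hzero : ∀ w : ℂ, M < ‖w‖ → g w = 0 := fun w hw => by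
    refine image_eq_zero_of_notMem_tsupport fun hmem => ?_
    have := hM hmem
    rw [mem_closedBall_zero_iff] at this
    linarith
  have hDzero : ∀ w : ℂ, M < ‖w‖ → fderiv ℝ g w = 0 := fun w hw => by
    refine image_eq_zero_of_notMem_tsupport fun hmem => ?_
    have := hM (tsupport_fderiv_subset ℝ hmem)
    rw [mem_closedBall_zero_iff] at this
    linarith
  set c : ℝ × ℝ → ℂ := fun p => p.1 * Complex.exp (p.2 * Complex.I) with hcdef
  have hcc : Continuous c := by fun_prop
  have hcn : ∀ r θ : ℝ, M < r → M < ‖c (r, θ)‖ := fun r θ h => by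
    simp only [hcdef, norm_mul, Complex.norm_exp_ofReal_mul_I, mul_one, Complex.norm_real]
    exact h.trans_le (le_abs_self r)
  set R : ℝ × ℝ → ℂ := fun p => fderiv ℝ g (c p) (Complex.exp (p.2 * Complex.I)) with hR
  set T : ℝ × ℝ → ℂ := fun p =>
    fderiv ℝ g (c p) (Complex.I * Complex.exp (p.2 * Complex.I)) with hT
  have hRc : Continuous R := (hD.comp hcc).clm_apply (by fun_prop)
  have hTc : Continuous T := (hD.comp hcc).clm_apply (by fun_prop)
  have hR0 : ∀ r θ, M < r → R (r, θ) = 0 := fun r θ h => by simp [hR, hDzero _ (hcn r θ h)]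
  have hT0 : ∀ r θ, M < r → T (r, θ) = 0 := fun r θ h => by simp [hT, hDzero _ (hcn r θ h)]
  have hRi := integrableOn_polar hRc hR0
  have hTi := integrableOn_polar hTc hT0
  have hgd : ∀ w, HasFDerivAt g (fderiv ℝ g w) w := fun w =>
    (hg.differentiable one_ne_zero w).hasFDerivAt
  have hdr : ∀ r θ : ℝ, HasDerivAt (fun r : ℝ => g (c (r, θ))) (R (r, θ)) r := fun r θ => by
    have h1 : HasDerivAt (fun r : ℝ => c (r, θ)) (Complex.exp (θ * Complex.I)) r := by
      simpa using (Complex.ofRealCLM.hasDerivAt (x := r)).mul_const (Complex.exp (θ * Complex.I))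
    exact (hgd _).comp_hasDerivAt r h1
  have hdθ : ∀ r θ : ℝ, HasDerivAt (fun θ : ℝ => g (c (r, θ))) (r * T (r, θ)) θ := fun r θ => by
    have h1 : HasDerivAt (fun θ : ℝ => c (r, θ)) (r • (Complex.I * Complex.exp (θ * Complex.I))) θ := by
      have := ((Complex.ofRealCLM.hasDerivAt (x := θ)).mul_const Complex.I).cexp.const_mul (r : ℂ)
      simp only [Complex.ofRealCLM_apply, Complex.ofReal_one, one_mul] at this
      rwa [Complex.real_smul, mul_comm Complex.I]
    have := (hgd _).comp_hasDerivAt θ h1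
    rw [map_smul, Complex.real_smul] at this
    exact this
  have hRint : ∫ p in Ioi (0 : ℝ) ×ˢ Ioo (-Real.pi) Real.pi, R p = -(2 * Real.pi) * g 0 := by
    have hRi' := hRi.swap
    rw [MeasureTheory.Measure.volume_eq_prod, ← MeasureTheory.setIntegral_prod_swap]
    refine (MeasureTheory.setIntegral_prod _ hRi').trans ?_
    have : ∀ θ : ℝ, ∫ r in Ioi (0 : ℝ), R (r, θ) = - g 0 := fun θ => by
      have h := MeasureTheory.integral_Ioi_of_hasDerivAt_of_tendsto' (a := 0) (m := 0)
        (f := fun r : ℝ => g (c (r, θ))) (fun r _ => hdr r θ) ?_ ?_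
      · rw [h]; simp [hcdef]
      · have h1 : MeasureTheory.IntegrableOn (fun r => R (r, θ)) (Icc 0 M) :=
          (hRc.comp (by fun_prop : Continuous fun r : ℝ => (r, θ))).continuousOn.integrableOn_compact
            isCompact_Icc
        refine h1.of_forall_sdiff_eq_zero measurableSet_Ioi ?_
        rintro r ⟨hr, hn⟩
        exact hR0 r θ (by by_contra hM; exact hn ⟨le_of_lt hr, not_lt.1 hM⟩)
      · refine tendsto_const_nhds.congr' ?_
        filter_upwards [eventually_gt_atTop M] with r hr
        exact (hzero _ (hcn r θ hr)).symm
    simp only [Function.comp_apply, Prod.swap_prod_mk, this]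
    simp [MeasureTheory.measureReal_def, Real.pi_pos.le]
    left; ring_nf
  have hTint : ∫ p in Ioi (0 : ℝ) ×ˢ Ioo (-Real.pi) Real.pi, T p = 0 := by
    rw [MeasureTheory.Measure.volume_eq_prod, MeasureTheory.setIntegral_prod _ hTi]
    refine MeasureTheory.setIntegral_eq_zero_of_forall_eq_zero fun r hr => ?_
    rw [← MeasureTheory.integral_Ioc_eq_integral_Ioo,
      ← intervalIntegral.integral_of_le (by linarith [Real.pi_pos])]
    have h := intervalIntegral.integral_eq_sub_of_hasDerivAt (a := -Real.pi) (b := Real.pi)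
      (f := fun θ : ℝ => g (c (r, θ))) (fun θ _ => hdθ r θ)
      (Continuous.intervalIntegrable (by fun_prop) _ _)
    rw [intervalIntegral.integral_const_mul] at h
    have e : c (r, Real.pi) = c (r, -Real.pi) := by
      simp [hcdef, Complex.exp_pi_mul_I, Complex.exp_neg]
    rw [e, sub_self] at h
    exact (mul_eq_zero.1 h).resolve_left (by exact_mod_cast (ne_of_gt hr))
  rw [← Complex.integral_comp_polarCoord_symm]
  have hpt : ∀ p ∈ polarCoord.target,
      p.1 • ((Complex.polarCoord.symm p)⁻¹ * wirtingerBar g (Complex.polarCoord.symm p)) =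
        (R p + Complex.I * T p) / 2 := by
    rintro ⟨r, θ⟩ ⟨hr, -⟩
    have hr : (r : ℂ) ≠ 0 := by exact_mod_cast (ne_of_gt hr)
    have e : Complex.polarCoord.symm (r, θ) = c (r, θ) := by
      rw [Complex.polarCoord_symm_apply, hcdef]
      simp [Complex.exp_mul_I]
    rw [e]
    simp only [hR, hT]
    rw [← conj_circle_mul_wirtingerBar, Complex.exp_neg, Complex.real_smul]
    simp only [hcdef]
    rw [mul_inv]
    field_simp
  rw [MeasureTheory.setIntegral_congr_fun polarCoord.open_target.measurableSet hpt]
  have hRi2 : MeasureTheory.IntegrableOn R polarCoord.target := hRi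
  have hTi2 : MeasureTheory.IntegrableOn T polarCoord.target := hTi
  rw [MeasureTheory.integral_div, MeasureTheory.integral_add hRi2 (hTi2.const_mul _),
    MeasureTheory.integral_const_mul]
  rw [polarCoord_target, hRint, hTint]
  ring

/-- The Cauchy–Pompeiu formula for compactly supported functions. -/
theorem integral_inv_sub_mul_wirtingerBar {g : ℂ → ℂ} (hg : ContDiff ℝ 1 g)
    (hc : HasCompactSupport g) (z : ℂ) :
    ∫ w, (w - z)⁻¹ * wirtingerBar g w = -Real.pi * g z := by
  have h := integral_inv_mul_wirtingerBar_zero (g := fun v => g (z + v)) (by fun_prop)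
    (hc.comp_homeomorph (Homeomorph.addLeft z))
  simp only [wirtingerBar_comp_const_add, add_zero] at h
  rw [← h, ← MeasureTheory.integral_add_left_eq_self _ z]
  simp

/-- The points `w` for which some polynomial `b` in `u` is so close to `z ↦ (w - z)⁻¹` on `K` that
`c = (w - z) b` is again a polynomial in `u`, at distance less than `1` from the constant `1`. -/
def polynomialResolventSet (K : Set ℂ) (u : ℂ → ℂ) : Set ℂ :=
  {w | ∃ b c : ℂ[X], ∃ ρ < (1 : ℝ), ∀ z ∈ K,
    c.eval (u z) = (w - z) * b.eval (u z) ∧ ‖1 - c.eval (u z)‖ ≤ ρ}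

theorem exists_norm_eval_le {K : Set ℂ} (hK : IsCompact K) {u : ℂ → ℂ} (hu : ContinuousOn u K)
    (b : ℂ[X]) : ∃ M > 0, ∀ z ∈ K, ‖b.eval (u z)‖ ≤ M := by
  obtain ⟨M, hM⟩ := hK.exists_bound_of_continuousOn (b.continuous.comp_continuousOn hu)
  exact ⟨max M 1, by positivity, fun z hz => (hM z hz).trans (le_max_left _ _)⟩

theorem isOpen_polynomialResolventSet {K : Set ℂ} (hK : IsCompact K) {u : ℂ → ℂ}
    (hu : ContinuousOn u K) : IsOpen (polynomialResolventSet K u) := by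
  rw [Metric.isOpen_iff]
  rintro w ⟨b, c, ρ, hρ, h⟩
  obtain ⟨M, hM0, hM⟩ := exists_norm_eval_le hK hu b
  refine ⟨(1 - ρ) / (2 * M), div_pos (by linarith) (by positivity), fun w' hw' => ?_⟩
  refine ⟨b, c + C (w' - w) * b, (1 + ρ) / 2, by linarith, fun z hz => ⟨?_, ?_⟩⟩
  · simp only [eval_add, eval_mul, eval_C, (h z hz).1]
    ring
  · simp only [eval_add, eval_mul, eval_C]
    rw [mem_ball_iff_norm] at hw'
    calc ‖1 - (c.eval (u z) + (w' - w) * b.eval (u z))‖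
        = ‖(1 - c.eval (u z)) - (w' - w) * b.eval (u z)‖ := by ring_nf
      _ ≤ ‖1 - c.eval (u z)‖ + ‖w' - w‖ * ‖b.eval (u z)‖ := by
        rw [← norm_mul]; exact norm_sub_le _ _
      _ ≤ ρ + (1 - ρ) / (2 * M) * M := by
        gcongr
        · exact (h z hz).2
        · exact hM z hz
      _ = (1 + ρ) / 2 := by field_simp; ring

/-- A Neumann series makes the defect in `polynomialResolventSet` as small as desired. -/
theorem exists_small_defect_of_mem_polynomialResolventSet {K : Set ℂ} {u : ℂ → ℂ} {w : ℂ}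
    (hw : w ∈ polynomialResolventSet K u) {ε : ℝ} (hε : 0 < ε) :
    ∃ b c : ℂ[X], ∀ z ∈ K,
      c.eval (u z) = (w - z) * b.eval (u z) ∧ ‖1 - c.eval (u z)‖ ≤ ε := by
  obtain ⟨b, c, ρ, hρ, h⟩ := hw
  obtain ⟨N, hN⟩ := exists_pow_lt_of_lt_one hε hρ
  refine ⟨b * ∑ j ∈ Finset.range N, (1 - c) ^ j, c * ∑ j ∈ Finset.range N, (1 - c) ^ j,
    fun z hz => ⟨?_, ?_⟩⟩
  · rw [eval_mul, eval_mul, (h z hz).1]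
    ring
  · have e : c * ∑ j ∈ Finset.range N, (1 - c) ^ j = 1 - (1 - c) ^ N := by
      rw [← mul_neg_geom_sum, sub_sub_cancel]
    rw [e, eval_sub, eval_one, sub_sub_cancel, eval_pow, eval_sub, eval_one, norm_pow]
    exact (pow_le_pow_left₀ (norm_nonneg _) (h z hz).2 N).trans hN.le

theorem exists_pos_le_norm_sub {K : Set ℂ} (hK : IsClosed K) {w : ℂ} (hw : w ∉ K) :
    ∃ d > 0, ∀ z ∈ K, d ≤ ‖w - z‖ := by
  obtain ⟨d, hd, h⟩ := Metric.isOpen_iff.1 hK.isOpen_compl w hw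
  refine ⟨d, hd, fun z hz => not_lt.1 fun hlt => h (?_ : z ∈ ball w d) hz⟩
  rwa [mem_ball_iff_norm, norm_sub_rev]

theorem mem_polynomialResolventSet_of_mem_closure {K : Set ℂ} (hK : IsClosed K) {u : ℂ → ℂ} {w : ℂ}
    (hw : w ∈ closure (polynomialResolventSet K u)) (hwK : w ∉ K) :
    w ∈ polynomialResolventSet K u := by
  obtain ⟨d, hd, hdK⟩ := exists_pos_le_norm_sub hK hwK
  obtain ⟨v, hv, hvw⟩ := Metric.mem_closure_iff.1 hw (d / 4) (by positivity)
  rw [dist_eq_norm] at hvw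
  obtain ⟨b, c, h⟩ := exists_small_defect_of_mem_polynomialResolventSet hv
    (by norm_num : (0 : ℝ) < 1 / 4)
  refine ⟨b, c + C (w - v) * b, 2 / 3, by norm_num, fun z hz => ⟨?_, ?_⟩⟩
  · simp only [eval_add, eval_mul, eval_C, (h z hz).1]
    ring
  · simp only [eval_add, eval_mul, eval_C]
    obtain ⟨h1, h2⟩ := h z hz
    have hvz : 3 * d / 4 ≤ ‖v - z‖ := by
      have := norm_sub_le_norm_sub_add_norm_sub w v z
      linarith [hdK z hz]
    have hc : ‖c.eval (u z)‖ ≤ 5 / 4 := by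
      have := norm_sub_norm_le (c.eval (u z)) 1
      rw [norm_sub_rev, norm_one] at this
      linarith
    rw [h1, norm_mul] at hc
    have hb : d * ‖b.eval (u z)‖ ≤ 5 / 3 := by
      nlinarith [mul_le_mul_of_nonneg_right hvz (norm_nonneg (b.eval (u z)))]
    calc ‖1 - (c.eval (u z) + (w - v) * b.eval (u z))‖
        = ‖(1 - c.eval (u z)) - (w - v) * b.eval (u z)‖ := by ring_nf
      _ ≤ ‖1 - c.eval (u z)‖ + ‖w - v‖ * ‖b.eval (u z)‖ := by
        rw [← norm_mul]; exact norm_sub_le _ _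
      _ ≤ 1 / 4 + d / 4 * ‖b.eval (u z)‖ := by gcongr
      _ ≤ 2 / 3 := by linarith

/-- On `K`, the function `g` is a quotient of polynomials of degree at most `n`, with all the zeros
of the denominator in `P`. -/
def IsRationalOn (P K : Set ℂ) (n : ℕ) (g : ℂ → ℂ) : Prop :=
  ∃ p q : ℂ[X], p.natDegree ≤ n ∧ q.natDegree ≤ n ∧ q ≠ 0 ∧ (∀ z, q.eval z = 0 → z ∈ P) ∧
    ∀ z ∈ K, g z = p.eval z / q.eval z

theorem IsRationalOn.add {P K : Set ℂ} (hPK : Disjoint P K) {m n : ℕ} {g h : ℂ → ℂ}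
    (hg : IsRationalOn P K m g) (hh : IsRationalOn P K n h) :
    IsRationalOn P K (m + n) (fun z => g z + h z) := by
  obtain ⟨p, q, hp, hq, hq0, hqP, hgz⟩ := hg
  obtain ⟨p', q', hp', hq', hq0', hqP', hhz⟩ := hh
  refine ⟨p * q' + q * p', q * q', ?_, ?_, mul_ne_zero hq0 hq0', ?_, fun z hz => ?_⟩
  · exact natDegree_add_le_of_degree_le (natDegree_mul_le_of_le hp hq')
      (natDegree_mul_le_of_le hq hp')
  · exact natDegree_mul_le_of_le hq hq'
  · intro z hz
    rw [eval_mul, mul_eq_zero] at hz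
    exact hz.elim (hqP z) (hqP' z)
  · have h1 : q.eval z ≠ 0 := fun h => hPK.notMem_of_mem_left (hqP z h) hz
    have h2 : q'.eval z ≠ 0 := fun h => hPK.notMem_of_mem_left (hqP' z h) hz
    simp only [hgz z hz, hhz z hz, eval_add, eval_mul]
    rw [div_add_div _ _ h1 h2]

/-- Approximability on `K` at a geometric rate by rational functions with poles in `P`. -/
def GeometricallyApproximable (P K : Set ℂ) (f : ℂ → ℂ) : Prop :=
  ∃ (C ρ : ℝ) (m : ℕ), 0 < ρ ∧ ρ < 1 ∧ ∀ N : ℕ, ∃ g, IsRationalOn P K (m * (N + 1)) g ∧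
    ∀ z ∈ K, ‖f z - g z‖ ≤ C * ρ ^ N

theorem GeometricallyApproximable.congr {P K : Set ℂ} {f g : ℂ → ℂ}
    (hf : GeometricallyApproximable P K f) (h : ∀ z ∈ K, f z = g z) :
    GeometricallyApproximable P K g := by
  obtain ⟨C, ρ, m, h0, h1, H⟩ := hf
  refine ⟨C, ρ, m, h0, h1, fun N => ?_⟩
  obtain ⟨r, hr, hb⟩ := H N
  exact ⟨r, hr, fun z hz => h z hz ▸ hb z hz⟩

theorem GeometricallyApproximable.zero (P K : Set ℂ) :
    GeometricallyApproximable P K (fun _ => 0) :=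
  ⟨0, 1 / 2, 0, by norm_num, by norm_num, fun _ => ⟨fun _ => 0,
    ⟨0, 1, by simp, by simp, one_ne_zero, by simp, by simp⟩, by simp⟩⟩

theorem GeometricallyApproximable.add {P K : Set ℂ} (hPK : Disjoint P K) {f g : ℂ → ℂ}
    (hf : GeometricallyApproximable P K f) (hg : GeometricallyApproximable P K g) :
    GeometricallyApproximable P K (fun z => f z + g z) := by
  obtain ⟨C, ρ, m, h0, h1, H⟩ := hf
  obtain ⟨C', ρ', m', h0', h1', H'⟩ := hg
  refine ⟨|C| + |C'|, max ρ ρ', m + m', lt_max_of_lt_left h0, max_lt h1 h1', fun N => ?_⟩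
  obtain ⟨r, hr, hb⟩ := H N
  obtain ⟨r', hr', hb'⟩ := H' N
  refine ⟨fun z => r z + r' z, by rw [add_mul]; exact hr.add hPK hr', fun z hz => ?_⟩
  calc ‖f z + g z - (r z + r' z)‖ = ‖(f z - r z) + (g z - r' z)‖ := by ring_nf
    _ ≤ C * ρ ^ N + C' * ρ' ^ N := (norm_add_le _ _).trans (add_le_add (hb z hz) (hb' z hz))
    _ ≤ |C| * max ρ ρ' ^ N + |C'| * max ρ ρ' ^ N := by
      gcongr
      · exact le_abs_self C
      · exact le_max_left _ _
      · exact le_abs_self C'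
      · exact le_max_right _ _
    _ = _ := by ring

/-- The function `u` is continuous on `K`, and its polynomials of degree at most `n` are rational
functions of degree at most `n` with poles in `P`. -/
def IsRationalGenerator (P K : Set ℂ) (u : ℂ → ℂ) : Prop :=
  ContinuousOn u K ∧
    ∀ (n : ℕ) (s : ℂ[X]), s.natDegree ≤ n → IsRationalOn P K n (fun z => s.eval (u z))

theorem eval_reflect_eq_pow_mul {n : ℕ} {p : ℂ[X]} (hp : p.natDegree ≤ n) {x : ℂ} (hx : x ≠ 0) :
    (p.reflect n).eval x = x ^ n * p.eval x⁻¹ := by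
  let _ : Invertible x⁻¹ := invertibleOfNonzero (inv_ne_zero hx)
  have h := eval₂_reflect_mul_pow (RingHom.id ℂ) x⁻¹ n p hp
  rw [invOf_eq_inv, inv_inv] at h
  rw [eval, eval, ← h, mul_left_comm, ← mul_pow, mul_inv_cancel₀ hx, one_pow, mul_one]

theorem isRationalGenerator_id (P K : Set ℂ) : IsRationalGenerator P K id :=
  ⟨continuousOn_id, fun _ s hs => ⟨s, 1, hs, by simp, one_ne_zero, by simp, by simp⟩⟩

theorem isRationalGenerator_inv_sub {P K : Set ℂ} (hPK : Disjoint P K) {a : ℂ} (ha : a ∈ P) :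
    IsRationalGenerator P K (fun z => (z - a)⁻¹) := by
  have hne : ∀ z ∈ K, z - a ≠ 0 := fun z hz h =>
    hPK.notMem_of_mem_left ha (sub_eq_zero.1 h ▸ hz)
  refine ⟨(by fun_prop : ContinuousOn (fun z => z - a) K).inv₀ hne, fun n s hs =>
    ⟨(s.reflect n).comp (X - C a), (X - C a) ^ n, ?_, ?_, pow_ne_zero _ (X_sub_C_ne_zero a), ?_,
      fun z hz => ?_⟩⟩
  · rw [natDegree_comp, natDegree_X_sub_C, mul_one]
    exact (natDegree_reflect_le).trans (max_le le_rfl hs)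
  · simp
  · intro z hz
    simp only [eval_pow, eval_sub, eval_X, eval_C] at hz
    rwa [sub_eq_zero.1 (eq_zero_of_pow_eq_zero hz)]
  · have h := hne z hz
    simp only [eval_comp, eval_pow, eval_sub, eval_X, eval_C]
    rw [eval_reflect_eq_pow_mul hs h, mul_div_cancel_left₀ _ (pow_ne_zero n h)]

theorem mem_polynomialResolventSet_id {K : Set ℂ} {M : ℝ} (hM : K ⊆ closedBall 0 M) {w : ℂ}
    (hw : M < ‖w‖) (hw0 : w ≠ 0) : w ∈ polynomialResolventSet K id := by
  have hw' : 0 < ‖w‖ := norm_pos_iff.2 hw0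
  refine ⟨C w⁻¹, 1 - C w⁻¹ * X, M / ‖w‖, (div_lt_one hw').2 hw, fun z hz => ⟨?_, ?_⟩⟩
  · simp only [eval_sub, eval_one, eval_mul, eval_C, eval_X, id]
    field_simp
  · simp only [eval_sub, eval_one, eval_mul, eval_C, eval_X, id, sub_sub_cancel, norm_mul, norm_inv]
    rw [inv_mul_eq_div]
    gcongr
    simpa using hM hz

theorem mem_polynomialResolventSet_inv_sub {K : Set ℂ} {a : ℂ} (ha : a ∉ K) :
    a ∈ polynomialResolventSet K (fun z => (z - a)⁻¹) := by
  refine ⟨-X, 1, 0, one_pos, fun z hz => ⟨?_, by simp⟩⟩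
  have : z - a ≠ 0 := fun h => ha (sub_eq_zero.1 h ▸ hz)
  simp only [eval_one, eval_neg, eval_X]
  field_simp
  ring

open MeasureTheory in
theorem exists_geometricallyApproximable_setIntegral {P K : Set ℂ} (hK : IsCompact K) {u : ℂ → ℂ}
    (hu : IsRationalGenerator P K u) {w₀ : ℂ} (hw₀ : w₀ ∉ K)
    (hw : w₀ ∈ polynomialResolventSet K u) {φ : ℂ → ℂ} (hφ : Integrable φ) :
    ∃ r > 0, (∀ z ∈ K, IntegrableOn (fun w => (w - z)⁻¹ * φ w) (ball w₀ r)) ∧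
      ∀ t ⊆ ball w₀ r, MeasurableSet t →
        GeometricallyApproximable P K (fun z => ∫ w in t, (w - z)⁻¹ * φ w) := by
  obtain ⟨b, c, ρ, hρ, h⟩ := hw
  obtain ⟨M, hM0, hM⟩ := exists_norm_eval_le hK hu.1 b
  obtain ⟨d, hd, hdK⟩ := exists_pos_le_norm_sub hK.isClosed hw₀
  set σ : ℝ := max ρ 0 with hσ
  have hσ1 : σ < 1 := max_lt hρ one_pos
  have hσ0 : 0 ≤ σ := le_max_right _ _
  set r : ℝ := min (d / 2) ((1 - σ) / (2 * M)) with hr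
  have hr0 : 0 < r := lt_min (by positivity) (div_pos (by linarith) (by positivity))
  have hfar : ∀ z ∈ K, ∀ w ∈ ball w₀ r, d / 2 ≤ ‖w - z‖ := fun z hz w hw => by
    rw [mem_ball_iff_norm, norm_sub_rev] at hw
    have h1 := norm_sub_le_norm_sub_add_norm_sub w₀ w z
    linarith [hdK z hz, min_le_left (d / 2) ((1 - σ) / (2 * M))]
  have hinv : ∀ z ∈ K, ∀ w ∈ ball w₀ r, ‖(w - z)⁻¹‖ ≤ 2 / d := fun z hz w hw => by
    rw [norm_inv, ← inv_div]
    exact inv_anti₀ (by positivity) (hfar z hz w hw)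
  have hint : ∀ (F : ℂ → ℂ) (B : ℝ) (t : Set ℂ), Measurable F → (∀ w ∈ t, ‖F w‖ ≤ B) →
      MeasurableSet t → IntegrableOn (fun w => F w * φ w) t := fun F B t hF hB ht =>
    hφ.integrableOn.bdd_mul hF.aestronglyMeasurable (ae_restrict_of_forall_mem ht hB)
  have hcauchy : ∀ z ∈ K, ∀ t ⊆ ball w₀ r, MeasurableSet t →
      IntegrableOn (fun w => (w - z)⁻¹ * φ w) t := fun z hz t ht htm =>
    hint _ (2 / d) t (by fun_prop) (fun w hw => hinv z hz w (ht hw)) htm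
  refine ⟨r, hr0, fun z hz => hcauchy z hz _ subset_rfl measurableSet_ball, fun t ht htm => ?_⟩
  set D := max b.natDegree c.natDegree with hD
  set moment : ℕ → ℂ := fun k => ∫ w in t, (w - w₀) ^ k * φ w with hmom
  set τ := (1 + σ) / 2 with hτ
  refine ⟨2 / d * ∫ w, ‖φ w‖, τ, D, by linarith, by linarith, fun N => ?_⟩
  set s : ℂ[X] := ∑ j ∈ Finset.range N, ∑ k ∈ Finset.range (j + 1),
    C (moment k) * (b * ((-b) ^ k * (1 - c) ^ (j - k) * (j.choose k : ℂ[X]))) with hs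
  have hsdeg : s.natDegree ≤ D * (N + 1) := by
    refine natDegree_sum_le_of_forall_le _ _ fun j hj => natDegree_sum_le_of_forall_le _ _
      fun k hk => ?_
    have hb : b.natDegree ≤ D := le_max_left _ _
    have hb' : (-b).natDegree ≤ D := by rwa [natDegree_neg]
    have hc' : (1 - c).natDegree ≤ D :=
      (natDegree_sub_le _ _).trans (max_le (by simp) (le_max_right _ _))
    have h1 : (b * ((-b) ^ k * (1 - c) ^ (j - k) * (j.choose k : ℂ[X]))).natDegree ≤
        D + (k * D + (j - k) * D + 0) :=
      natDegree_mul_le_of_le hb (natDegree_mul_le_of_le (natDegree_mul_le_of_le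
        (natDegree_pow_le_of_le k hb') (natDegree_pow_le_of_le _ hc')) (natDegree_natCast _).le)
    refine (natDegree_C_mul_le _ _).trans (h1.trans ?_)
    have h2 : k + (j - k) + 1 ≤ N + 1 := by
      have := Finset.mem_range.1 hj; have := Finset.mem_range.1 hk; omega
    calc D + (k * D + (j - k) * D + 0) = D * (k + (j - k) + 1) := by ring
      _ ≤ _ := Nat.mul_le_mul_left D h2
  refine ⟨_, hu.2 _ s hsdeg, fun z hz => ?_⟩
  obtain ⟨hcz, hρz⟩ := h z hz
  set β := b.eval (u z) with hβ
  set α := 1 - c.eval (u z) with hα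
  have hsz : s.eval (u z) =
      ∫ w in t, (β * ∑ j ∈ Finset.range N, (-(w - w₀) * β + α) ^ j) * φ w := by
    have e : ∀ w, (β * ∑ j ∈ Finset.range N, (-(w - w₀) * β + α) ^ j) * φ w =
        ∑ j ∈ Finset.range N, ∑ k ∈ Finset.range (j + 1),
          ((w - w₀) ^ k * φ w) * (β * ((-β) ^ k * α ^ (j - k) * (j.choose k : ℂ))) := fun w => by
      rw [Finset.mul_sum, Finset.sum_mul]
      refine Finset.sum_congr rfl fun j _ => ?_
      rw [add_pow, Finset.mul_sum, Finset.sum_mul]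
      refine Finset.sum_congr rfl fun k _ => ?_
      rw [neg_mul_comm, mul_pow]
      ring
    have hmi : ∀ k, IntegrableOn (fun w => (w - w₀) ^ k * φ w) t := fun k => by
      refine hint _ (r ^ k) t (by fun_prop) (fun w hw => ?_) htm
      rw [norm_pow]
      exact pow_le_pow_left₀ (norm_nonneg _) (mem_ball_iff_norm.1 (ht hw)).le k
    simp_rw [e]
    rw [integral_finsetSum _ fun j _ => integrable_finsetSum _ fun k _ => (hmi k).mul_const _]
    simp only [hs, eval_finsetSum]
    refine Finset.sum_congr rfl fun j _ => ?_
    rw [integral_finsetSum _ fun k _ => (hmi k).mul_const _]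
    refine Finset.sum_congr rfl fun k _ => ?_
    rw [integral_mul_const]
    simp [hmom, hα, hβ]
  have hdefect : ∀ w ∈ ball w₀ r, (w - z)⁻¹ * φ w -
      (β * ∑ j ∈ Finset.range N, (-(w - w₀) * β + α) ^ j) * φ w =
        ((w - z)⁻¹ * (-(w - w₀) * β + α) ^ N) * φ w := fun w hw => by
    have hwz : w - z ≠ 0 := norm_pos_iff.1 (lt_of_lt_of_le (by positivity) (hfar z hz w hw))
    have e1 : (w - z) * β = 1 - (-(w - w₀) * β + α) := by
      rw [hα, hcz]; ring
    have e2 := mul_neg_geom_sum (-(w - w₀) * β + α) N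
    rw [← e1] at e2
    generalize -(w - w₀) * β + α = e at e2 ⊢
    field_simp
    linear_combination (-φ w) * e2
  have hτw : ∀ w ∈ ball w₀ r, ‖-(w - w₀) * β + α‖ ≤ τ := fun w hw => by
    have hw' : ‖w - w₀‖ ≤ (1 - σ) / (2 * M) :=
      (mem_ball_iff_norm.1 hw).le.trans (min_le_right _ _)
    calc ‖-(w - w₀) * β + α‖ ≤ ‖w - w₀‖ * ‖β‖ + ‖α‖ := by
          refine (norm_add_le _ _).trans ?_
          rw [norm_mul, norm_neg]
      _ ≤ (1 - σ) / (2 * M) * M + σ := by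
        gcongr
        · exact hM z hz
        · exact hρz.trans (le_max_left _ _)
      _ = τ := by rw [hτ]; field_simp; ring
  have hbound : ∀ w ∈ t, ‖(w - z)⁻¹ * (-(w - w₀) * β + α) ^ N‖ ≤ 2 / d * τ ^ N := fun w hw => by
    rw [norm_mul, norm_pow]
    have := hinv z hz w (ht hw)
    have := hτw w (ht hw)
    gcongr
  have hdiff := hint _ _ t (by fun_prop) hbound htm
  have hsub : (∫ w in t, (w - z)⁻¹ * φ w) - s.eval (u z) =
      ∫ w in t, ((w - z)⁻¹ * (-(w - w₀) * β + α) ^ N) * φ w := by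
    have hi : IntegrableOn
        (fun w => (β * ∑ j ∈ Finset.range N, (-(w - w₀) * β + α) ^ j) * φ w) t := by
      refine ((hcauchy z hz t ht htm).sub hdiff).congr_fun (fun w hw => ?_) htm
      simp only [Pi.sub_apply]
      rw [← hdefect w (ht hw), sub_sub_cancel]
    rw [hsz, ← integral_sub (hcauchy z hz t ht htm) hi]
    exact setIntegral_congr_fun htm fun w hw => hdefect w (ht hw)
  rw [hsub]
  calc ‖∫ w in t, ((w - z)⁻¹ * (-(w - w₀) * β + α) ^ N) * φ w‖
      ≤ ∫ w in t, (2 / d * τ ^ N) * ‖φ w‖ := by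
        refine norm_integral_le_of_norm_le (hφ.norm.integrableOn.const_mul _)
          (ae_restrict_of_forall_mem htm fun w hw => ?_)
        rw [norm_mul]
        exact mul_le_mul_of_nonneg_right (hbound w hw) (norm_nonneg _)
    _ = (2 / d * τ ^ N) * ∫ w in t, ‖φ w‖ := integral_const_mul _ _
    _ ≤ (2 / d * τ ^ N) * ∫ w, ‖φ w‖ := by
        have hτ0 : 0 ≤ τ := by linarith
        exact mul_le_mul_of_nonneg_left (setIntegral_le_integral hφ.norm
          (Eventually.of_forall fun w => norm_nonneg _)) (by positivity)
    _ = _ := by ring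

open MeasureTheory in
theorem geometricallyApproximable_setIntegral {P K : Set ℂ} (hK : IsCompact K)
    (hPK : Disjoint P K) {L : Set ℂ} (hL : IsCompact L) (hLK : Disjoint L K)
    (hres : ∀ w ∈ L, ∃ u, IsRationalGenerator P K u ∧ w ∈ polynomialResolventSet K u)
    {φ : ℂ → ℂ} (hφ : Integrable φ) :
    GeometricallyApproximable P K (fun z => ∫ w in L, (w - z)⁻¹ * φ w) := by
  have key : ∃ s ⊇ L, MeasurableSet s ∧
      (∀ z ∈ K, IntegrableOn (fun w => (w - z)⁻¹ * φ w) s) ∧ ∀ t ⊆ s, MeasurableSet t →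
        GeometricallyApproximable P K (fun z => ∫ w in t, (w - z)⁻¹ * φ w) := by
    refine hL.induction_on (p := fun L => ∃ s ⊇ L, MeasurableSet s ∧
      (∀ z ∈ K, IntegrableOn (fun w => (w - z)⁻¹ * φ w) s) ∧ ∀ t ⊆ s, MeasurableSet t →
        GeometricallyApproximable P K (fun z => ∫ w in t, (w - z)⁻¹ * φ w)) ?_ ?_ ?_ ?_
    · refine ⟨∅, subset_rfl, MeasurableSet.empty, by simp, fun t ht _ => ?_⟩
      rw [subset_empty_iff.1 ht]
      simpa using GeometricallyApproximable.zero P K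
    · rintro L L' hLL' ⟨s, hs, h⟩
      exact ⟨s, hLL'.trans hs, h⟩
    · rintro L L' ⟨s, hs, hsm, hsi, h⟩ ⟨s', hs', hsm', hsi', h'⟩
      refine ⟨s ∪ s', union_subset_union hs hs', hsm.union hsm',
        fun z hz => (hsi z hz).union (hsi' z hz), fun t ht htm => ?_⟩
      refine ((h (t ∩ s) inter_subset_right (htm.inter hsm)).add hPK
        (h' (t \ s) (sdiff_subset_iff.2 ht) (htm.diff hsm))).congr fun z hz => ?_
      exact integral_inter_add_sdiff hsm (((hsi z hz).union (hsi' z hz)).mono_set ht)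
    · intro w hw
      obtain ⟨u, hu, hwu⟩ := hres w hw
      obtain ⟨r, hr, h⟩ := exists_geometricallyApproximable_setIntegral hK hu
        (hLK.notMem_of_mem_left hw) hwu hφ
      exact ⟨ball w r, mem_nhdsWithin_of_mem_nhds (ball_mem_nhds w hr), ball w r, subset_rfl,
        measurableSet_ball, h⟩
  obtain ⟨s, hs, -, -, h⟩ := key
  exact h L hs hL.measurableSet

open MeasureTheory Manifold in
theorem geometricallyApproximable_of_differentiableOn {P K U : Set ℂ} (hK : IsCompact K)
    (hPK : Disjoint P K) (hU : IsOpen U) (hKU : K ⊆ U) {f : ℂ → ℂ} (hf : DifferentiableOn ℂ f U)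
    (hres : ∀ w ∉ K, ∃ u, IsRationalGenerator P K u ∧ w ∈ polynomialResolventSet K u) :
    GeometricallyApproximable P K f := by
  obtain ⟨M, hM⟩ := hK.isBounded.subset_ball 0
  obtain ⟨χ, hχ0, hχ1, -⟩ := exists_contMDiffMap_zero_one_nhds_of_isClosed (n := 1) 𝓘(ℝ, ℂ)
    (hU.inter isOpen_ball).isClosed_compl hK.isClosed
    (disjoint_compl_left_iff_subset.2 (subset_inter hKU hM))
  have hχd : ContDiff ℝ 1 χ := χ.contMDiff.contDiff
  rw [eventually_nhdsSet_iff_forall] at hχ0 hχ1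
  set g : ℂ → ℂ := fun z => χ z • f z with hg
  have hg0 : ∀ z ∉ U ∩ ball 0 M, g =ᶠ[𝓝 z] 0 := fun z hz => by
    filter_upwards [hχ0 z hz] with w hw
    simp [hg, hw]
  have hgf : ∀ z ∈ K, g =ᶠ[𝓝 z] f := fun z hz => by
    filter_upwards [hχ1 z hz] with w hw
    simp [hg, hw]
  have hgd : ContDiff ℝ 1 g := contDiff_iff_contDiffAt.2 fun z => by
    by_cases hz : z ∈ U ∩ ball 0 M
    · exact hχd.contDiffAt.smul
        (((hf.contDiffOn hU).contDiffAt (hU.mem_nhds hz.1)).restrict_scalars ℝ)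
    · exact contDiffAt_const.congr_of_eventuallyEq (hg0 z hz)
  have hgs : tsupport g ⊆ closedBall 0 M := fun z hz => by
    by_contra h
    exact notMem_tsupport_iff_eventuallyEq.2
      (hg0 z fun h' => h (ball_subset_closedBall h'.2)) hz
  have hgc : HasCompactSupport g :=
    (isCompact_closedBall (0 : ℂ) M).of_isClosed_subset (isClosed_tsupport g) hgs
  have hsupp : tsupport (wirtingerBar g) ⊆ tsupport g :=
    closure_minimal (fun z hz => tsupport_fderiv_subset ℝ
      (subset_tsupport _ fun h => hz (by simp [wirtingerBar, h]))) (isClosed_tsupport g)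
  have hwc : HasCompactSupport (wirtingerBar g) :=
    hgc.isCompact.of_isClosed_subset (isClosed_tsupport _) hsupp
  have hdisj : Disjoint (tsupport (wirtingerBar g)) K := by
    refine Set.disjoint_right.2 fun z hz => notMem_tsupport_iff_eventuallyEq.2 ?_
    filter_upwards [(hgf z hz).eventuallyEq_nhds, hU.mem_nhds (hKU hz)] with w hw hwU
    exact wirtingerBar_eq_zero
      ((hf.differentiableAt (hU.mem_nhds hwU)).congr_of_eventuallyEq hw)
  have happrox := geometricallyApproximable_setIntegral hK hPK hwc.isCompact hdisj
    (fun w hw => hres w (hdisj.notMem_of_mem_left hw))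
    (((continuous_wirtingerBar hgd).integrable_of_hasCompactSupport hwc).mul_const
      (-(Real.pi : ℂ)⁻¹))
  refine happrox.congr fun z hz => ?_
  rw [setIntegral_eq_integral_of_forall_compl_eq_zero fun w hw => by
    rw [image_eq_zero_of_notMem_tsupport hw, zero_mul, mul_zero]]
  simp_rw [← mul_assoc]
  rw [integral_mul_const, integral_inv_sub_mul_wirtingerBar hgd hgc, (hgf z hz).eq_of_nhds]
  have : (Real.pi : ℂ) ≠ 0 := by exact_mod_cast Real.pi_ne_zero
  field_simp

theorem GeometricallyApproximable.exists_forall_isRationalOn {P K : Set ℂ} {f : ℂ → ℂ}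
    (hf : GeometricallyApproximable P K f) {M : ℝ} (hM : ∀ z ∈ K, ‖f z‖ ≤ M) :
    ∃ A B : ℝ, 1 < A ∧ 1 < B ∧ ∀ n : ℕ, ∃ g, IsRationalOn P K n g ∧
      ∀ z ∈ K, ‖f z - g z‖ ≤ A / B ^ n := by
  obtain ⟨C, ρ, m, h0, h1, H⟩ := hf
  set A : ℝ := 2 + |C| / ρ ^ 2 + |M| / ρ with hA
  set B : ℝ := (ρ⁻¹) ^ ((m + 1 : ℕ) : ℝ)⁻¹ with hB
  have hB1 : 1 < B := Real.one_lt_rpow ((one_lt_inv₀ h0).2 h1) (by positivity)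
  have hBm : B ^ (m + 1) = ρ⁻¹ := Real.rpow_inv_natCast_pow (by positivity) (Nat.succ_ne_zero m)
  refine ⟨A, B, ?_, hB1, fun n => ?_⟩
  · have : 0 ≤ |C| / ρ ^ 2 + |M| / ρ := by positivity
    linarith
  set k := n / (m + 1) with hk
  have hBn : ρ ^ (k + 1) ≤ (B ^ n)⁻¹ := by
    have : B ^ n ≤ (ρ ^ (k + 1))⁻¹ := by
      rw [← inv_pow, ← hBm, ← pow_mul]
      exact pow_le_pow_right₀ hB1.le (Nat.lt_mul_div_succ n (Nat.succ_pos m)).le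
    rwa [le_inv_comm₀ (by positivity) (by positivity)]
  rcases Nat.eq_zero_or_pos k with h | h
  · refine ⟨fun _ => 0, ⟨0, 1, by simp, by simp, one_ne_zero, by simp, by simp⟩, fun z hz => ?_⟩
    rw [h, zero_add, pow_one] at hBn
    calc ‖f z - 0‖ ≤ |M| := by rw [sub_zero]; exact (hM z hz).trans (le_abs_self M)
      _ = |M| / ρ * ρ := by field_simp
      _ ≤ A * (B ^ n)⁻¹ := by
        gcongr
        rw [hA]
        have : 0 ≤ |C| / ρ ^ 2 := by positivity
        linarith
  · obtain ⟨g, ⟨p, q, hp, hq, hg⟩, hb⟩ := H (k - 1)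
    have hdeg : m * (k - 1 + 1) ≤ n := by
      rw [Nat.sub_add_cancel h]
      exact (Nat.mul_le_mul_right k (Nat.le_succ m)).trans (Nat.mul_div_le n (m + 1))
    refine ⟨g, ⟨p, q, hp.trans hdeg, hq.trans hdeg, hg⟩, fun z hz => ?_⟩
    calc ‖f z - g z‖ ≤ C * ρ ^ (k - 1) := hb z hz
      _ ≤ |C| * ρ ^ (k - 1) := by gcongr; exact le_abs_self C
      _ = |C| / ρ ^ 2 * ρ ^ (k + 1) := by
        obtain ⟨j, hj⟩ : ∃ j, k = j + 1 := ⟨k - 1, (Nat.sub_add_cancel h).symm⟩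
        rw [hj, Nat.add_sub_cancel]
        field_simp
        ring
      _ ≤ A * (B ^ n)⁻¹ := by
        gcongr
        rw [hA]
        have : 0 ≤ |M| / ρ := by positivity
        linarith

/-- The point of the Riemann sphere with homogeneous coordinates `(a, b)`. -/
def homogeneousPoint (x : ℂ × ℂ) : OnePoint ℂ :=
  if x.2 = 0 then OnePoint.infty else ((x.1 / x.2 : ℂ) : OnePoint ℂ)

theorem continuousAt_homogeneousPoint {x : ℂ × ℂ} (hx : x ≠ 0) :
    ContinuousAt homogeneousPoint x := by
  by_cases h : x.2 = 0
  · have h1 : x.1 ≠ 0 := fun h1 => hx (Prod.ext h1 h)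
    have e : homogeneousPoint x = OnePoint.infty := by simp [homogeneousPoint, h]
    rw [ContinuousAt, e, (OnePoint.hasBasis_nhds_infty (X := ℂ)).tendsto_right_iff]
    rintro s ⟨-, hs⟩
    obtain ⟨M, hM⟩ := hs.isBounded.subset_closedBall 0
    have hev : ∀ᶠ y : ℂ × ℂ in 𝓝 x, M * ‖y.2‖ < ‖y.1‖ := by
      have hc : ContinuousAt (fun y : ℂ × ℂ => M * ‖y.2‖) x := by fun_prop
      have hc' : ContinuousAt (fun y : ℂ × ℂ => ‖y.1‖) x := by fun_prop
      exact hc.eventually_lt hc' (by simpa [h] using h1)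
    filter_upwards [hev] with y hy
    by_cases hy2 : y.2 = 0
    · right; simp [homogeneousPoint, hy2]
    · left
      refine ⟨y.1 / y.2, fun hmem => ?_, by simp [homogeneousPoint, hy2]⟩
      have := hM hmem
      rw [mem_closedBall_zero_iff, norm_div, div_le_iff₀ (norm_pos_iff.2 hy2)] at this
      linarith
  · have hc : ContinuousAt (fun y : ℂ × ℂ => ((y.1 / y.2 : ℂ) : OnePoint ℂ)) x :=
      OnePoint.continuous_coe.continuousAt.comp (continuousAt_fst.div continuousAt_snd h)
    refine hc.congr ?_
    filter_upwards [continuousAt_snd.eventually_ne h] with y hy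
    simp [homogeneousPoint, hy]

theorem homogeneousPoint_mul {c : ℂ} (hc : c ≠ 0) (a b : ℂ) :
    homogeneousPoint (c * a, c * b) = homogeneousPoint (a, b) := by
  simp [homogeneousPoint, hc, mul_div_mul_left]

/-- The map of the Riemann sphere given by the quotient `p / q` of two polynomials of degree at
most `n`, via the homogeneous forms of degree `n` attached to `p` and `q`. -/
def sphereQuotient (n : ℕ) (p q : ℂ[X]) (x : OnePoint ℂ) : OnePoint ℂ :=
  x.elim (homogeneousPoint (p.coeff n, q.coeff n)) fun z => homogeneousPoint (p.eval z, q.eval z)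

theorem sphereQuotient_coe (n : ℕ) (p q : ℂ[X]) (z : ℂ) :
    sphereQuotient n p q z = homogeneousPoint (p.eval z, q.eval z) := rfl

theorem sphereQuotient_infty (n : ℕ) (p q : ℂ[X]) :
    sphereQuotient n p q OnePoint.infty = homogeneousPoint (p.coeff n, q.coeff n) := rfl

theorem sphereQuotient_coe_of_ne {n : ℕ} {p q : ℂ[X]} {z : ℂ} (h : q.eval z ≠ 0) :
    sphereQuotient n p q z = ((p.eval z / q.eval z : ℂ) : OnePoint ℂ) := by
  simp [sphereQuotient_coe, homogeneousPoint, h]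

theorem continuous_sphereQuotient {n : ℕ} {p q : ℂ[X]} (hp : p.natDegree ≤ n)
    (hq : q.natDegree ≤ n) (hpq : ∀ z, p.eval z = 0 → q.eval z ≠ 0)
    (hn : p.coeff n = 0 → q.coeff n ≠ 0) : Continuous (sphereQuotient n p q) := by
  rw [continuous_iff_continuousAt, OnePoint.forall]
  constructor
  · rw [OnePoint.continuousAt_infty', Filter.coclosedCompact_eq_cocompact,
      ← Metric.cobounded_eq_cocompact, sphereQuotient_infty]
    have e : ∀ r : ℂ[X], (r.reflect n).eval 0 = r.coeff n := fun r => by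
      rw [← coeff_zero_eq_eval_zero, coeff_reflect, revAt_zero]
    have hc : ContinuousAt
        (fun w : ℂ => homogeneousPoint ((p.reflect n).eval w, (q.reflect n).eval w)) 0 := by
      refine ContinuousAt.comp (g := homogeneousPoint) (continuousAt_homogeneousPoint fun h => ?_)
        (by fun_prop)
      simp only [e, Prod.mk_eq_zero] at h
      exact hn h.1 h.2
    have ht := hc.tendsto.comp (tendsto_inv₀_cobounded (α := ℂ))
    simp only [e] at ht
    refine ht.congr' ?_
    filter_upwards [Bornology.eventually_ne_cobounded (0 : ℂ)] with z hz
    have hz' := inv_ne_zero hz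
    simp only [Function.comp_apply, sphereQuotient_coe, eval_reflect_eq_pow_mul hp hz',
      eval_reflect_eq_pow_mul hq hz', inv_inv]
    exact homogeneousPoint_mul (pow_ne_zero n hz') _ _
  · intro z
    rw [OnePoint.continuousAt_coe]
    refine ContinuousAt.comp (g := homogeneousPoint)
      (f := fun z => (p.eval z, q.eval z)) (continuousAt_homogeneousPoint fun h => ?_)
      (by fun_prop)
    rw [Prod.mk_eq_zero] at h
    exact hpq z h.1 h.2

theorem exists_isCoprime_mul_eq (p : ℂ[X]) {q : ℂ[X]} (hq : q ≠ 0) :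
    ∃ g p' q' : ℂ[X], IsCoprime p' q' ∧ g ≠ 0 ∧ q' ≠ 0 ∧ p = g * p' ∧ q = g * q' ∧
      p'.natDegree ≤ p.natDegree ∧ q'.natDegree ≤ q.natDegree := by
  have hbez := EuclideanDomain.gcd_eq_gcd_ab p q
  have hg : EuclideanDomain.gcd p q ≠ 0 := fun h => hq (EuclideanDomain.gcd_eq_zero_iff.1 h).2
  obtain ⟨p', hp'⟩ := EuclideanDomain.gcd_dvd_left p q
  obtain ⟨q', hq'⟩ := EuclideanDomain.gcd_dvd_right p q
  generalize EuclideanDomain.gcdA p q = a at hbez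
  generalize EuclideanDomain.gcdB p q = b at hbez
  generalize EuclideanDomain.gcd p q = g at *
  subst hp'
  have hq0 : q' ≠ 0 := fun h => hq (by rw [hq', h, mul_zero])
  have hdeg : ∀ r : ℂ[X], r.natDegree ≤ (g * r).natDegree := fun r => by
    rcases eq_or_ne r 0 with rfl | hr
    · simp
    · rw [natDegree_mul hg hr]; exact Nat.le_add_left _ _
  refine ⟨g, p', q', ⟨a, b, mul_left_cancel₀ hg ?_⟩, hg, hq0, rfl, hq', hdeg p', ?_⟩
  · calc g * (a * p' + b * q') = g * p' * a + g * q' * b := by ring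
      _ = g * 1 := by rw [← hq', ← hbez, mul_one]
  · rw [hq']
    exact hdeg q'

theorem exists_continuous_eq_div (p : ℂ[X]) {q : ℂ[X]} (hq : q ≠ 0) :
    ∃ r : OnePoint ℂ → OnePoint ℂ, Continuous r ∧
      (∀ z : ℂ, q.eval z ≠ 0 → r z = ((p.eval z / q.eval z : ℂ) : OnePoint ℂ)) ∧
      ∀ z : ℂ, r z = OnePoint.infty → q.eval z = 0 := by
  obtain ⟨g, p', q', hco, hg, hq', rfl, rfl, -, -⟩ := exists_isCoprime_mul_eq p hq
  have key : ∀ z : ℂ, (g * q').eval z ≠ 0 → sphereQuotient (max p'.natDegree q'.natDegree) p' q' z =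
      (((g * p').eval z / (g * q').eval z : ℂ) : OnePoint ℂ) := fun z hz => by
    rw [eval_mul] at hz
    rw [sphereQuotient_coe_of_ne (right_ne_zero_of_mul hz), eval_mul, eval_mul,
      mul_div_mul_left _ _ (left_ne_zero_of_mul hz)]
  refine ⟨sphereQuotient (max p'.natDegree q'.natDegree) p' q',
    continuous_sphereQuotient (le_max_left _ _) (le_max_right _ _) (fun z h h' => ?_)
      (fun h h' => ?_), key, fun z hz => ?_⟩
  · obtain ⟨a, b, hab⟩ := hco
    have := congrArg (eval z) hab
    simp [h, h'] at this
  · rcases le_total p'.natDegree q'.natDegree with hle | hle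
    · rw [max_eq_right hle, coeff_natDegree, leadingCoeff_eq_zero] at h'
      exact hq' h'
    · rw [max_eq_left hle] at h h'
      rw [coeff_natDegree, leadingCoeff_eq_zero] at h
      subst h
      rw [natDegree_zero] at hle h'
      have : q'.natDegree = 0 := Nat.le_zero.1 hle
      rw [← this, coeff_natDegree, leadingCoeff_eq_zero] at h'
      exact hq' h'
  · by_contra h
    exact OnePoint.coe_ne_infty _ ((key z h).symm.trans hz)

theorem isRationalMapDegLE_of_continuous {r : OnePoint ℂ → OnePoint ℂ} (hr : Continuous r) {n : ℕ}
    {p q : ℂ[X]} (hp : p.natDegree ≤ n) (hq : q.natDegree ≤ n) (hq0 : q ≠ 0) {S : Set ℂ}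
    (hS : S.Finite)
    (h : ∀ z ∉ S, q.eval z ≠ 0 → r z = ((p.eval z / q.eval z : ℂ) : OnePoint ℂ)) :
    IsRationalMapDegLE r n := by
  obtain ⟨g, p', q', hco, hg, hq', rfl, rfl, hpd, hqd⟩ := exists_isCoprime_mul_eq p hq0
  refine ⟨hr, p', q', hco, hq', hpd.trans hp, hqd.trans hq, fun z hz => ?_⟩
  have hc : ContinuousAt (fun w : ℂ => ((p'.eval w / q'.eval w : ℂ) : OnePoint ℂ)) z :=
    OnePoint.continuous_coe.continuousAt.comp
      (p'.continuous.continuousAt.div q'.continuous.continuousAt hz)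
  have hc' : ContinuousAt (fun w : ℂ => r w) z :=
    (hr.comp OnePoint.continuous_coe).continuousAt
  have hfin : (S ∪ {w | (g * q').IsRoot w}).Finite :=
    hS.union (finite_setOfPred_isRoot hq0)
  refine tendsto_nhds_unique_of_eventuallyEq (hc'.tendsto.mono_left nhdsWithin_le_nhds)
    (hc.tendsto.mono_left (nhdsWithin_le_nhds (s := {z}ᶜ))) ?_
  have hz' : z ∉ (S ∪ {w | (g * q').IsRoot w}) \ {z} := fun h => h.2 rfl
  filter_upwards [mem_nhdsWithin_of_mem_nhds
    ((hfin.subset sdiff_subset).isClosed.isOpen_compl.mem_nhds hz'), self_mem_nhdsWithin]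
    with w hw hwz
  have hw' : w ∉ S ∪ {w | (g * q').IsRoot w} := fun h => hw ⟨h, hwz⟩
  have hgw : (g * q').eval w ≠ 0 := fun h => hw' (Or.inr h)
  rw [h w (fun h => hw' (Or.inl h)) hgw]
  rw [eval_mul] at hgw
  rw [eval_mul, eval_mul, mul_div_mul_left _ _ (left_ne_zero_of_mul hgw)]

theorem isRationalMapDegLE_const (c : ℂ) (n : ℕ) :
    IsRationalMapDegLE (fun _ => (c : OnePoint ℂ)) n :=
  ⟨continuous_const, C c, 1, isCoprime_one_right, one_ne_zero, by simp, by simp, by simp⟩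

theorem mem_polynomialResolventSet_of_isPreconnected {K : Set ℂ} (hK : IsClosed K) {u : ℂ → ℂ}
    {F V : Set (OnePoint ℂ)} (hV : IsOpen V)
    (hVu : ∀ z : ℂ, (z : OnePoint ℂ) ∈ V ↔ z ∈ polynomialResolventSet K u)
    (hF : IsPreconnected F) (hFK : ∀ z ∈ K, (z : OnePoint ℂ) ∉ F) (hne : (F ∩ V).Nonempty)
    (hinf : OnePoint.infty ∈ F → OnePoint.infty ∈ V) {w : ℂ} (hw : (w : OnePoint ℂ) ∈ F) :
    w ∈ polynomialResolventSet K u := by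
  refine (hVu w).1 (hF.subset_of_closure_inter_subset hV hne ?_ hw)
  rintro x ⟨hxV, hxF⟩
  induction x using OnePoint.rec with
  | infty => exact hinf hxF
  | coe z =>
    refine (hVu z).2 (mem_polynomialResolventSet_of_mem_closure hK ?_ fun h => hFK z h hxF)
    have hz : z ∈ ((↑) : ℂ → OnePoint ℂ) ⁻¹' closure V := hxV
    rw [OnePoint.isOpenMap_coe.preimage_closure_eq_closure_preimage OnePoint.continuous_coe] at hz
    rwa [← show ((↑) : ℂ → OnePoint ℂ) ⁻¹' V = polynomialResolventSet K u from Set.ext hVu]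

/-- If a connected set of the sphere avoids `K`, then each of its finite points is resolved by a
single rational generator, with pole at any prescribed point of the set. -/
theorem exists_isRationalGenerator_of_isPreconnected {P K : Set ℂ} (hK : IsCompact K)
    (hPK : Disjoint P K) {F : Set (OnePoint ℂ)} (hF : IsPreconnected F)
    (hFK : ∀ z ∈ K, (z : OnePoint ℂ) ∉ F) {a : OnePoint ℂ} (haF : a ∈ F)
    (haP : ∀ z : ℂ, a = z → z ∈ P) (hinf : OnePoint.infty ∈ F → a = OnePoint.infty) {w : ℂ}
    (hw : (w : OnePoint ℂ) ∈ F) :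
    ∃ u, IsRationalGenerator P K u ∧ w ∈ polynomialResolventSet K u := by
  induction a using OnePoint.rec with
  | infty =>
    have hid := isRationalGenerator_id P K
    obtain ⟨M, hM0, hM⟩ := hK.isBounded.subset_closedBall_lt 0 0
    have hball : IsOpen (((↑) '' closedBall (0 : ℂ) M)ᶜ : Set (OnePoint ℂ)) :=
      OnePoint.isOpen_compl_image_coe.2 ⟨isClosed_closedBall, isCompact_closedBall _ _⟩
    refine ⟨id, hid, mem_polynomialResolventSet_of_isPreconnected hK.isClosed
      ((OnePoint.isOpen_image_coe.2 (isOpen_polynomialResolventSet hK hid.1)).union hball)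
      (fun z => ⟨?_, fun h => Or.inl (mem_image_of_mem _ h)⟩) hF hFK
      ⟨_, haF, Or.inr (by simp)⟩ (fun _ => Or.inr (by simp)) hw⟩
    rintro (⟨z', hz', h⟩ | h)
    · rwa [← OnePoint.coe_injective h]
    · have hz : M < ‖z‖ := by
        rw [← not_le, ← mem_closedBall_zero_iff]
        exact fun h' => h (mem_image_of_mem _ h')
      exact mem_polynomialResolventSet_id hM hz (norm_pos_iff.1 (hM0.trans hz))
  | coe b =>
    have hb := haP b rfl
    have hgen := isRationalGenerator_inv_sub hPK hb
    exact ⟨_, hgen, mem_polynomialResolventSet_of_isPreconnected hK.isClosed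
      (OnePoint.isOpen_image_coe.2 (isOpen_polynomialResolventSet hK hgen.1))
      (fun z => OnePoint.coe_injective.mem_set_image) hF hFK
      ⟨_, haF, mem_image_of_mem _
        (mem_polynomialResolventSet_inv_sub (hPK.notMem_of_mem_left hb))⟩
      (fun h => absurd (hinf h) (OnePoint.coe_ne_infty b)) hw⟩

/-- The Möbius transformation `z ↦ (z - a)⁻¹` of the Riemann sphere. -/
def invSubHomeomorph (a : ℂ) : OnePoint ℂ ≃ₜ OnePoint ℂ where
  toFun := sphereQuotient 1 1 (X - C a)
  invFun := sphereQuotient 1 (C a * X + 1) X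
  left_inv x := by
    induction x using OnePoint.rec with
    | infty => simp [sphereQuotient_infty, sphereQuotient_coe, homogeneousPoint, coeff_one]
    | coe z =>
      by_cases hz : z - a = 0
      · simp [sphereQuotient_coe, homogeneousPoint, sphereQuotient_infty, coeff_one,
          sub_eq_zero.1 hz]
      · simp [sphereQuotient_coe, homogeneousPoint, hz]
        field_simp
        ring
  right_inv x := by
    induction x using OnePoint.rec with
    | infty => simp [sphereQuotient_infty, sphereQuotient_coe, homogeneousPoint, coeff_one]
    | coe z =>
      by_cases hz : z = 0
      · simp [sphereQuotient_coe, homogeneousPoint, hz, sphereQuotient_infty, coeff_one]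
      · have h : (a * z + 1) / z - a = z⁻¹ := by field_simp; ring
        simp [sphereQuotient_coe, homogeneousPoint, hz, h]
  continuous_toFun := continuous_sphereQuotient (by simp) (natDegree_X_sub_C_le a) (by simp)
    (by simp)
  continuous_invFun := continuous_sphereQuotient (by compute_degree) natDegree_X_le
    (fun z h h' => by
      rw [eval_X] at h'
      simp [h'] at h)
    (by simp)

theorem invSubHomeomorph_coe_of_ne {a z : ℂ} (h : z ≠ a) :
    invSubHomeomorph a z = (((z - a)⁻¹ : ℂ) : OnePoint ℂ) := by
  have h' : (X - C a).eval z ≠ 0 := by simpa [sub_eq_zero] using h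
  exact (sphereQuotient_coe_of_ne (n := 1) (p := 1) h').trans (by simp)

theorem invSubHomeomorph_coe_self (a : ℂ) : invSubHomeomorph a a = OnePoint.infty :=
  (sphereQuotient_coe 1 1 (X - C a) a).trans (by simp [homogeneousPoint])

theorem invSubHomeomorph_symm_coe_of_ne (a : ℂ) {w : ℂ} (h : w ≠ 0) :
    (invSubHomeomorph a).symm w = ((a + w⁻¹ : ℂ) : OnePoint ℂ) := by
  have h' : (X : ℂ[X]).eval w ≠ 0 := by simpa using h
  refine (sphereQuotient_coe_of_ne (n := 1) (p := C a * X + 1) h').trans ?_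
  congr 1
  simp only [eval_add, eval_mul, eval_C, eval_X, eval_one]
  field_simp

theorem invSubHomeomorph_symm_zero (a : ℂ) :
    (invSubHomeomorph a).symm (0 : ℂ) = OnePoint.infty :=
  (sphereQuotient_coe 1 (C a * X + 1) X 0).trans (by simp [homogeneousPoint])

theorem SphereHolomorphicOn.differentiableAt_comp_invSubHomeomorph_symm {f : OnePoint ℂ → ℂ}
    {U : Set (OnePoint ℂ)} (hf : SphereHolomorphicOn f U) (a : ℂ) {w : ℂ}
    (hw : (invSubHomeomorph a).symm w ∈ U) :
    DifferentiableAt ℂ (fun v : ℂ => f ((invSubHomeomorph a).symm v)) w := by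
  rcases eq_or_ne w 0 with rfl | h
  · rw [invSubHomeomorph_symm_zero] at hw
    obtain ⟨s, hs, hd⟩ := hf.2 hw
    set H : ℂ → ℂ := fun v => f (if v = 0 then OnePoint.infty else ((v⁻¹ : ℂ) : OnePoint ℂ)) with hH
    have hd0 := hd.differentiableAt hs
    have hne : ∀ᶠ v : ℂ in 𝓝 0, 1 + a * v ≠ 0 := by
      refine ContinuousAt.eventually_ne (by fun_prop) (by simp)
    have hg : DifferentiableAt ℂ (fun v : ℂ => v / (1 + a * v)) 0 :=
      differentiableAt_id.div (by fun_prop) (by simp)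
    have hg0 : (0 : ℂ) / (1 + a * 0) = 0 := by simp
    rw [← hg0] at hd0
    refine (hd0.comp (0 : ℂ) hg).congr_of_eventuallyEq ?_
    filter_upwards [hne] with v hv
    rcases eq_or_ne v 0 with rfl | hv0
    · simp [hH, invSubHomeomorph_symm_zero]
    · rw [invSubHomeomorph_symm_coe_of_ne a hv0]
      have e : a + v⁻¹ = (1 + a * v) / v := by field_simp; ring
      simp only [hH, Function.comp_apply, div_eq_zero_iff, hv0, hv, or_self, if_false, inv_div, e]
  · rw [invSubHomeomorph_symm_coe_of_ne a h] at hw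
    have hg : DifferentiableAt ℂ (fun v : ℂ => a + v⁻¹) w :=
      (differentiableAt_inv h).const_add a
    refine ((hf.1 _ hw).comp w hg).congr_of_eventuallyEq ?_
    filter_upwards [eventually_ne_nhds h] with v hv
    simp only [Function.comp_apply, invSubHomeomorph_symm_coe_of_ne a hv]

theorem isRationalMapDegLE_comp_invSubHomeomorph {r : OnePoint ℂ → OnePoint ℂ} (hr : Continuous r)
    {n : ℕ} {p q : ℂ[X]} (hp : p.natDegree ≤ n) (hq : q.natDegree ≤ n) (hq0 : q ≠ 0)
    (h : ∀ z : ℂ, q.eval z ≠ 0 → r z = ((p.eval z / q.eval z : ℂ) : OnePoint ℂ)) (a : ℂ) :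
    IsRationalMapDegLE (r ∘ invSubHomeomorph a) n := by
  have hdeg : ∀ s : ℂ[X], s.natDegree ≤ n → ((s.reflect n).comp (X - C a)).natDegree ≤ n :=
    fun s hs => by
      rw [natDegree_comp, natDegree_X_sub_C, mul_one]
      exact (natDegree_reflect_le).trans (max_le le_rfl hs)
  have heval : ∀ s : ℂ[X], s.natDegree ≤ n → ∀ z : ℂ, z ≠ a →
      ((s.reflect n).comp (X - C a)).eval z = (z - a) ^ n * s.eval (z - a)⁻¹ := fun s hs z hz => by
    rw [eval_comp, eval_sub, eval_X, eval_C, eval_reflect_eq_pow_mul hs (sub_ne_zero.2 hz)]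
  refine isRationalMapDegLE_of_continuous (hr.comp (invSubHomeomorph a).continuous) (hdeg p hp)
    (hdeg q hq) ?_ (finite_singleton a) fun z hz hqz => ?_
  · intro h0
    rw [comp_eq_zero_iff] at h0
    rcases h0 with h0 | ⟨-, h0⟩
    · exact hq0 (by simpa using h0)
    · have := congrArg natDegree h0
      simp at this
  · have hz' : z ≠ a := hz
    rw [heval q hq z hz'] at hqz ⊢
    rw [heval p hp z hz', Function.comp_apply, invSubHomeomorph_coe_of_ne hz',
      h _ (right_ne_zero_of_mul hqz), mul_div_mul_left _ _ (left_ne_zero_of_mul hqz)]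

/-- Any point of the sphere can be moved to `∞` by a homeomorphism that respects holomorphic
functions and rational maps. -/
theorem exists_homeomorph_apply_eq_infty (x : OnePoint ℂ) :
    ∃ T : OnePoint ℂ ≃ₜ OnePoint ℂ, T x = OnePoint.infty ∧
      (∀ (f : OnePoint ℂ → ℂ) (U : Set (OnePoint ℂ)), SphereHolomorphicOn f U → ∀ z : ℂ,
        T.symm z ∈ U → DifferentiableAt ℂ (fun w : ℂ => f (T.symm w)) z) ∧
      ∀ (r : OnePoint ℂ → OnePoint ℂ) (n : ℕ) (p q : ℂ[X]), Continuous r → p.natDegree ≤ n →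
        q.natDegree ≤ n → q ≠ 0 →
        (∀ z : ℂ, q.eval z ≠ 0 → r z = ((p.eval z / q.eval z : ℂ) : OnePoint ℂ)) →
        IsRationalMapDegLE (r ∘ T) n := by
  induction x using OnePoint.rec with
  | infty =>
    exact ⟨Homeomorph.refl _, rfl, fun f U hf z hz => hf.1 z hz, fun r n p q hr hp hq hq0 h =>
      isRationalMapDegLE_of_continuous hr hp hq hq0 finite_empty fun z _ => h z⟩
  | coe a =>
    exact ⟨invSubHomeomorph a, invSubHomeomorph_coe_self a,
      fun f U hf z hz => hf.differentiableAt_comp_invSubHomeomorph_symm a hz,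
      fun r n p q hr hp hq hq0 h => isRationalMapDegLE_comp_invSubHomeomorph hr hp hq hq0 h a⟩

theorem SphereHolomorphicOn.eq_apply_infty {f : OnePoint ℂ → ℂ} (hf : SphereHolomorphicOn f univ)
    (x : OnePoint ℂ) : f x = f OnePoint.infty := by
  induction x using OnePoint.rec with
  | infty => rfl
  | coe z =>
    have hd : Differentiable ℂ fun w : ℂ => f w := fun w => hf.1 w (mem_univ _)
    refine hd.apply_eq_of_tendsto_cocompact z ?_
    obtain ⟨s, hs, hs'⟩ := hf.2 (mem_univ _)
    have ht := (hs'.differentiableAt hs).continuousAt.tendsto.comp (tendsto_inv₀_cobounded (α := ℂ))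
    rw [if_pos rfl] at ht
    rw [← Metric.cobounded_eq_cocompact]
    refine ht.congr' ?_
    filter_upwards [Bornology.eventually_ne_cobounded (0 : ℂ)] with w hw
    simp [hw]

/-- **Theorem B** (quantitative Runge theorem): a function holomorphic in a
neighborhood of a compact set `K ⊆ Ĉ` can be approximated at a geometric rate by
rational maps of degree `≤ n` whose poles lie in a set `P` having exactly one point
in each complementary component of `K`. -/
theorem quantitative_runge
    (K : Set (OnePoint ℂ)) (hK : IsCompact K)
    (P : Set (OnePoint ℂ))
    (hP₁ : ∀ F ∈ graphFaces K, ∃! z, z ∈ P ∩ F)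
    (hP₂ : P ⊆ Kᶜ)
    (f : OnePoint ℂ → ℂ) (U : Set (OnePoint ℂ)) (hUopen : IsOpen U) (hKU : K ⊆ U)
    (hf : SphereHolomorphicOn f U) :
    ∃ A B : ℝ, 1 < A ∧ 1 < B ∧
      ∃ R : ℕ → (OnePoint ℂ → OnePoint ℂ), ∀ n : ℕ,
        IsRationalMapDegLE (R n) n ∧ (R n) ⁻¹' {OnePoint.infty} ⊆ P ∧
        ∀ z ∈ K, ∃ w : ℂ, R n z = (w : OnePoint ℂ) ∧ ‖f z - w‖ ≤ A / B ^ n := by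
  have hface : ∀ x ∈ Kᶜ, ∃! z, z ∈ P ∩ connectedComponentIn Kᶜ x :=
    fun x hx => hP₁ _ ⟨x, hx, rfl⟩
  rcases P.eq_empty_or_nonempty with rfl | ⟨x₀, hx₀⟩
  · have hKuniv : K = univ := eq_univ_of_forall fun x => by
      by_contra hx
      obtain ⟨z, hz, -⟩ := hface x hx
      exact hz.1
    have hUuniv : U = univ := univ_subset_iff.1 (hKuniv ▸ hKU)
    rw [hUuniv] at hf
    refine ⟨2, 2, by norm_num, by norm_num, fun _ _ => (f OnePoint.infty : OnePoint ℂ), fun n =>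
      ⟨isRationalMapDegLE_const _ n, fun x hx => OnePoint.coe_ne_infty _ hx, fun z _ =>
        ⟨_, rfl, ?_⟩⟩⟩
    rw [hf.eq_apply_infty z, sub_self, norm_zero]
    positivity
  obtain ⟨T, hTx₀, hTd, hTr⟩ := exists_homeomorph_apply_eq_infty x₀
  have hTinf : T.symm OnePoint.infty = x₀ := by rw [← hTx₀, T.symm_apply_apply]
  set φ : ℂ → OnePoint ℂ := fun z => T.symm z
  have hφc : Continuous φ := T.symm.continuous.comp OnePoint.continuous_coe
  have hTK : ((↑) : ℂ → OnePoint ℂ) '' (φ ⁻¹' K) = T.symm ⁻¹' K := by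
    ext y
    induction y using OnePoint.rec with
    | infty => simpa [hTinf] using hP₂ hx₀
    | coe z => exact OnePoint.coe_injective.mem_set_image
  have hK' : IsCompact (φ ⁻¹' K) := by
    refine (OnePoint.isClosed_image_coe.1 ?_).2
    rw [hTK]
    exact hK.isClosed.preimage T.symm.continuous
  have hPK : Disjoint (φ ⁻¹' P) (φ ⁻¹' K) :=
    (disjoint_left.2 fun x hx => hP₂ hx).preimage φ
  have hd : DifferentiableOn ℂ (f ∘ φ) (φ ⁻¹' U) := fun z hz =>
    (hTd f U hf z hz).differentiableWithinAt
  have hres : ∀ w ∉ φ ⁻¹' K, ∃ u, IsRationalGenerator (φ ⁻¹' P) (φ ⁻¹' K) u ∧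
      w ∈ polynomialResolventSet (φ ⁻¹' K) u := fun w hw => by
    obtain ⟨x, ⟨hxP, hxF⟩, huniq⟩ := hface (φ w) hw
    refine exists_isRationalGenerator_of_isPreconnected hK' hPK
      (F := T.symm ⁻¹' connectedComponentIn Kᶜ (φ w)) ?_ (fun z hz hzF => ?_) (a := T x) ?_
      (fun z hz => ?_) (fun h => ?_) (mem_connectedComponentIn hw)
    · rw [← T.image_eq_preimage_symm]
      exact isPreconnected_connectedComponentIn.image _ T.continuous.continuousOn
    · exact connectedComponentIn_subset _ _ hzF hz
    · rwa [mem_preimage, T.symm_apply_apply]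
    · change T.symm z ∈ P
      rwa [← hz, T.symm_apply_apply]
    · rw [mem_preimage, hTinf] at h
      rw [← huniq x₀ ⟨hx₀, h⟩, hTx₀]
  obtain ⟨M, hM⟩ := hK'.exists_bound_of_continuousOn
    (hd.continuousOn.mono (preimage_mono hKU))
  obtain ⟨A, B, hA, hB, H⟩ := (geometricallyApproximable_of_differentiableOn hK' hPK
    (hUopen.preimage hφc) (preimage_mono hKU) hd hres).exists_forall_isRationalOn hM
  choose g hg hgf using H
  choose p q hp hq hq0 hqP hgpq using hg
  choose r hrc hr hrinf using fun n => exists_continuous_eq_div (p n) (hq0 n)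
  refine ⟨A, B, hA, hB, fun n => r n ∘ T, fun n =>
    ⟨hTr _ n _ _ (hrc n) (hp n) (hq n) (hq0 n) (hr n), fun x hx => ?_, fun x hx => ?_⟩⟩
  · obtain ⟨y, rfl⟩ := T.symm.surjective x
    induction y using OnePoint.rec with
    | infty => rwa [hTinf]
    | coe z =>
      refine hqP n z (hrinf n z ?_)
      simpa using hx
  · obtain ⟨y, rfl⟩ := T.symm.surjective x
    induction y using OnePoint.rec with
    | infty => exact absurd hx (hTinf ▸ hP₂ hx₀)
    | coe z =>
      refine ⟨g n z, ?_, hgf n z hx⟩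
      have hz : (q n).eval z ≠ 0 := fun h => disjoint_left.1 hPK (hqP n z h) hx
      change r n (T (T.symm z)) = _
      rw [T.apply_symm_apply, hr n z hz, hgpq n z hx]

end
end

section
/- Let ε > 0 and let A₁, A₂ ⊆ Ĉ be open, nonempty, disjoint sets with common boundary J satisfying ∂A₁ = ∂A₂ = J and Ĉ = A₁ ⊔ A₂ ⊔ J. Then there exist a rational map r : Ĉ → Ĉ and two distinct fixed points w₁, w₂ of r such that, setting 𝒜ᵢ := {z ∈ Ĉ : the iterates r^[n](z) converge to wᵢ as n → ∞} for i = 1, 2 and 𝒥 := Ĉ \ (𝒜₁ ∪ 𝒜₂), the sets 𝒜₁ and 𝒜₂ are open and disjoint, ∂𝒜₁ = ∂𝒜₂ = 𝒥, and the Hausdorff distances satisfy d_H(Aᵢ, 𝒜ᵢ) < ε for i = 1, 2 and d_H(J, 𝒥) < ε. Moreover, if A₁ has finitely many connected components, P ⊆ A₁ contains exactly one point from each component of A₁, and p ∈ P, then r may be chosen so that r(p) = p, r⁻¹({p}) = P, w₁ = p, and 𝒜₁ is the basin {z : r^[n](z) → p}. -/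
open Set Metric Topology Filter Polynomial

noncomputable section

/-- The basin of attraction of the point `w` for the map `r`. -/
def basin (r : OnePoint ℂ → OnePoint ℂ) (w : OnePoint ℂ) : Set (OnePoint ℂ) :=
  {z | Tendsto (fun n => r^[n] z) atTop (𝓝 w)}

/-- The conclusion of the Julia set approximation theorem: the two basins are open,
disjoint, share the common boundary `𝒥 := Ĉ \ (𝒜₁ ∪ 𝒜₂)`, and `𝒜₁, 𝒜₂, 𝒥`
approximate `A₁, A₂, J` in Hausdorff distance (with respect to the metric `m`). -/
def GoodBasins (m : MetricSpace (OnePoint ℂ)) (ε : ℝ) (A₁ A₂ J : Set (OnePoint ℂ))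
    (r : OnePoint ℂ → OnePoint ℂ) (w₁ w₂ : OnePoint ℂ) : Prop :=
  IsOpen (basin r w₁) ∧ IsOpen (basin r w₂) ∧ Disjoint (basin r w₁) (basin r w₂) ∧
  frontier (basin r w₁) = (basin r w₁ ∪ basin r w₂)ᶜ ∧
  frontier (basin r w₂) = (basin r w₁ ∪ basin r w₂)ᶜ ∧
  @Metric.hausdorffDist _ m.toPseudoMetricSpace A₁ (basin r w₁) < ε ∧
  @Metric.hausdorffDist _ m.toPseudoMetricSpace A₂ (basin r w₂) < ε ∧
  @Metric.hausdorffDist _ m.toPseudoMetricSpace J ((basin r w₁ ∪ basin r w₂)ᶜ) < ε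

instance : LocallyConnectedSpace (OnePoint ℂ) := by
  have : Fact (Module.finrank ℝ (EuclideanSpace ℝ (Fin 3)) = 2 + 1) := ⟨by simp⟩
  have : LocallyConnectedSpace (sphere (0 : EuclideanSpace ℝ (Fin 3)) 1) :=
    ChartedSpace.locallyConnectedSpace (EuclideanSpace ℝ (Fin 2)) _
  exact (onePointEquivSphereOfFinrankEq (ι := Fin 3) (V := ℂ) (by simp)).locallyConnectedSpace

/-- Disjoint open sets that contain suitable compact parts of `A₁` and `A₂` approximate
`A₁`, `A₂`, and the complement of their union approximates the common frontier. -/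
theorem exists_isCompact_forall_hausdorffDist_lt {X : Type*} [MetricSpace X] [CompactSpace X]
    [LocallyConnectedSpace X] {ε : ℝ} (hε : 0 < ε) {A₁ A₂ J : Set X}
    (h₂ : IsOpen A₂) (hdisj : Disjoint A₁ A₂)
    (hJ₁ : frontier A₁ = J) (hJ₂ : frontier A₂ = J) (hcover : A₁ ∪ A₂ ∪ J = univ) :
    ∃ C : Set X, IsCompact C ∧ C ⊆ A₁ ∧ ∀ B₁ B₂ : Set X, IsOpen B₁ → IsOpen B₂ →
      Disjoint B₁ B₂ → C ⊆ B₁ → A₂ ⊆ B₂ →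
      hausdorffDist A₁ B₁ < ε ∧ hausdorffDist A₂ B₂ < ε ∧
        hausdorffDist J (B₁ ∪ B₂)ᶜ < ε := by
  have hV : ∀ x : X, ∃ V : Set X, V ⊆ ball x (ε / 4) ∧ IsOpen V ∧ x ∈ V ∧ IsConnected V :=
    fun x => locallyConnectedSpace_iff_subsets_isOpen_isConnected.1 ‹_› x _
      (ball_mem_nhds x (by positivity))
  choose V hVb hVo hxV hVc using hV
  have hVd : ∀ x, ∀ y ∈ V x, ∀ z ∈ V x, dist y z ≤ ε / 2 := by
    intro x y hy z hz
    have h1 := mem_ball.1 (hVb x hy)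
    have h2 := mem_ball.1 (hVb x hz)
    have := dist_triangle_right y z x
    linarith
  obtain ⟨t, ht⟩ := isCompact_univ.elim_finite_subcover V hVo
    (fun x _ => mem_iUnion.2 ⟨x, hxV x⟩)
  have hmeet₁ : ∀ x, (V x ∩ J).Nonempty → (V x ∩ A₁).Nonempty := by
    rintro x ⟨y, hy, hyJ⟩
    rw [← hJ₁] at hyJ
    exact mem_closure_iff.1 hyJ.1 _ (hVo x) hy
  have hmeet₂ : ∀ x, (V x ∩ J).Nonempty → (V x ∩ A₂).Nonempty := by
    rintro x ⟨y, hy, hyJ⟩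
    rw [← hJ₂] at hyJ
    exact mem_closure_iff.1 hyJ.1 _ (hVo x) hy
  classical
  let bad : Finset X := t.filter fun x => (V x ∩ J).Nonempty
  choose! a ha using hmeet₁
  choose! b hb using hmeet₂
  have hbad : ∀ x ∈ bad, (V x ∩ J).Nonempty := fun x hx => (Finset.mem_filter.1 hx).2
  let N : Set X := ⋃ x ∈ bad, V x
  have hNo : IsOpen N := isOpen_biUnion fun x _ => hVo x
  have hJN : J ⊆ N := by
    intro y hy
    obtain ⟨x, hx, hyx⟩ := mem_iUnion₂.1 (ht (mem_univ y))
    exact mem_iUnion₂.2 ⟨x, Finset.mem_filter.2 ⟨hx, y, hyx, hy⟩, hyx⟩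
  have hE : ∀ y, y ∉ N → y ∈ A₁ ∨ y ∈ A₂ := by
    intro y hy
    have : y ∈ A₁ ∪ A₂ ∪ J := hcover ▸ mem_univ y
    rcases this with h | h
    · exact h
    · exact absurd (hJN h) hy
  have hC : Nᶜ ∩ A₁ = (N ∪ A₂)ᶜ := by
    ext y
    constructor
    · rintro ⟨hy, hy1⟩ (h | h)
      · exact hy h
      · exact hdisj.le_bot ⟨hy1, h⟩
    · intro hy
      have hyN : y ∉ N := fun h => hy (Or.inl h)
      exact ⟨hyN, (hE y hyN).resolve_right fun h => hy (Or.inr h)⟩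
  refine ⟨(Nᶜ ∩ A₁) ∪ a '' bad, ?_, ?_, ?_⟩
  · rw [hC]
    exact (hNo.union h₂).isClosed_compl.isCompact.union (bad.finite_toSet.image a).isCompact
  · rintro y (hy | ⟨x, hx, rfl⟩)
    · exact hy.2
    · exact (ha x (hbad x hx)).2
  intro B₁ B₂ hB₁ hB₂ hB hCB hAB
  have haB : ∀ x ∈ bad, a x ∈ B₁ := fun x hx => hCB (Or.inr ⟨x, hx, rfl⟩)
  have hlt : ε / 2 < ε := by linarith
  refine ⟨lt_of_le_of_lt (hausdorffDist_le_of_mem_dist (by positivity) ?_ ?_) hlt,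
    lt_of_le_of_lt (hausdorffDist_le_of_mem_dist (by positivity) ?_ ?_) hlt,
    lt_of_le_of_lt (hausdorffDist_le_of_mem_dist (by positivity) ?_ ?_) hlt⟩
  · intro y hy
    by_cases hyN : y ∈ N
    · obtain ⟨x, hx, hyx⟩ := mem_iUnion₂.1 hyN
      exact ⟨a x, haB x hx, hVd x _ hyx _ (ha x (hbad x hx)).1⟩
    · exact ⟨y, hCB (Or.inl ⟨hyN, hy⟩), by simpa using by positivity⟩
  · intro y hy
    by_cases hyN : y ∈ N
    · obtain ⟨x, hx, hyx⟩ := mem_iUnion₂.1 hyN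
      exact ⟨a x, (ha x (hbad x hx)).2, hVd x _ hyx _ (ha x (hbad x hx)).1⟩
    · refine ⟨y, (hE y hyN).resolve_right fun h => hB.le_bot ⟨hy, hAB h⟩, ?_⟩
      simpa using by positivity
  · intro y hy
    exact ⟨y, hAB hy, by simpa using by positivity⟩
  · intro y hy
    by_cases hyN : y ∈ N
    · obtain ⟨x, hx, hyx⟩ := mem_iUnion₂.1 hyN
      exact ⟨b x, (hb x (hbad x hx)).2, hVd x _ hyx _ (hb x (hbad x hx)).1⟩
    · refine ⟨y, (hE y hyN).resolve_left fun h => hB.le_bot ⟨hCB (Or.inl ⟨hyN, h⟩), hy⟩, ?_⟩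
      simpa using by positivity
  · intro y hy
    obtain ⟨x, hx, hyx⟩ := mem_iUnion₂.1 (hJN hy)
    by_contra! hcon
    have hsub : V x ⊆ B₁ ∪ B₂ := by
      intro z hz
      by_contra hzB
      exact absurd (hVd x _ hyx _ hz) (not_le.2 (hcon z hzB))
    obtain ⟨z, -, hz1, hz2⟩ := (hVc x).isPreconnected B₁ B₂ hB₁ hB₂ hsub
      ⟨a x, (ha x (hbad x hx)).1, haB x hx⟩
      ⟨b x, (hb x (hbad x hx)).1, hAB (hb x (hbad x hx)).2⟩
    exact hB.le_bot ⟨hz1, hz2⟩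
  · intro y hy
    have hyN : y ∈ N := by
      by_contra hyN
      rcases hE y hyN with h | h
      · exact hy (Or.inl (hCB (Or.inl ⟨hyN, h⟩)))
      · exact hy (Or.inr (hAB h))
    obtain ⟨x, hx, hyx⟩ := mem_iUnion₂.1 hyN
    obtain ⟨j, hj, hjJ⟩ := hbad x hx
    exact ⟨j, hjJ, hVd x _ hyx _ hj⟩

/-- Fekete points: an infinite compact set contains `n` distinct nodes for which every
Lagrange basis polynomial is bounded by `1` on the set. -/
theorem exists_fekete_points {K : Set ℂ} (hK : IsCompact K) (hinf : K.Infinite) (n : ℕ) :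
    ∃ x : Fin n → ℂ, Function.Injective x ∧ (∀ i, x i ∈ K) ∧
      ∀ i, ∀ z ∈ K, ∏ j ∈ Finset.univ.erase i, ‖z - x j‖ ≤
        ∏ j ∈ Finset.univ.erase i, ‖x i - x j‖ := by
  let W : (Fin n → ℂ) → ℝ := fun x => ∏ i, ∏ j ∈ Finset.univ.erase i, ‖x i - x j‖
  have hW : Continuous W := by fun_prop
  have := hinf.to_subtype
  obtain ⟨e⟩ : Nonempty (Fin n ↪ K) := ⟨(Fin.valEmbedding).trans (Infinite.natEmbedding K)⟩
  obtain ⟨x, hxK, hx⟩ := (isCompact_univ_pi fun _ : Fin n => hK).exists_isMaxOn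
    ⟨fun i => (e i : ℂ), fun i _ => (e i).2⟩ hW.continuousOn
  have hpos : 0 < W x := by
    refine lt_of_lt_of_le ?_ (hx (show (fun i => (e i : ℂ)) ∈ _ from fun i _ => (e i).2))
    refine Finset.prod_pos fun i _ => Finset.prod_pos fun j hj => ?_
    rw [norm_pos_iff, sub_ne_zero]
    exact fun h => (Finset.ne_of_mem_erase hj) (e.injective (Subtype.ext h)).symm
  have hxi : Function.Injective x := by
    intro i j hij
    by_contra hne
    refine hpos.ne' (Finset.prod_eq_zero (Finset.mem_univ i)
      (Finset.prod_eq_zero (Finset.mem_erase.2 ⟨fun h => hne h.symm, Finset.mem_univ j⟩) ?_))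
    simp [hij]
  have hfactor : ∀ (i : Fin n) (y : Fin n → ℂ), W y =
      (∏ j ∈ Finset.univ.erase i, ‖y i - y j‖) ^ 2 *
        ∏ k ∈ Finset.univ.erase i, ∏ j ∈ (Finset.univ.erase k).erase i, ‖y k - y j‖ := by
    intro i y
    have h : ∀ k ∈ Finset.univ.erase i, ∏ j ∈ Finset.univ.erase k, ‖y k - y j‖ =
        ‖y i - y k‖ * ∏ j ∈ (Finset.univ.erase k).erase i, ‖y k - y j‖ := by
      intro k hk
      rw [norm_sub_rev, Finset.mul_prod_erase _ (fun j => ‖y k - y j‖)]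
      exact Finset.mem_erase.2 ⟨(Finset.ne_of_mem_erase hk).symm, Finset.mem_univ i⟩
    simp only [W]
    rw [← Finset.mul_prod_erase _ _ (Finset.mem_univ i), Finset.prod_congr rfl h,
      Finset.prod_mul_distrib]
    ring
  refine ⟨x, hxi, fun i => hxK i (mem_univ i), fun i z hz => ?_⟩
  have hmax : W (Function.update x i z) ≤ W x := hx (by
    intro j _
    by_cases hj : j = i
    · subst hj; simpa using hz
    · simpa [hj] using hxK j (mem_univ j))
  rw [hfactor i, hfactor i x] at hmax
  rw [hfactor i] at hpos
  have hc : ∏ k ∈ Finset.univ.erase i, ∏ j ∈ (Finset.univ.erase k).erase i,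
      ‖Function.update x i z k - Function.update x i z j‖ =
      ∏ k ∈ Finset.univ.erase i, ∏ j ∈ (Finset.univ.erase k).erase i, ‖x k - x j‖ := by
    refine Finset.prod_congr rfl fun k hk => Finset.prod_congr rfl fun j hj => ?_
    rw [Function.update_of_ne (Finset.ne_of_mem_erase hk),
      Function.update_of_ne (Finset.ne_of_mem_erase hj)]
  have hc' : ∏ j ∈ Finset.univ.erase i, ‖Function.update x i z i - Function.update x i z j‖ =
      ∏ j ∈ Finset.univ.erase i, ‖z - x j‖ := by
    refine Finset.prod_congr rfl fun j hj => ?_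
    rw [Function.update_self, Function.update_of_ne (Finset.ne_of_mem_erase hj)]
  rw [hc, hc'] at hmax
  have hc0 : 0 < ∏ k ∈ Finset.univ.erase i, ∏ j ∈ (Finset.univ.erase k).erase i, ‖x k - x j‖ :=
    pos_of_mul_pos_right hpos (sq_nonneg _)
  exact (pow_le_pow_iff_left₀ (Finset.prod_nonneg fun _ _ => norm_nonneg _)
    (Finset.prod_nonneg fun _ _ => norm_nonneg _) two_ne_zero).1 (le_of_mul_le_mul_right hmax hc0)

theorem isCompact_compl_preimage_coe {U : Set (OnePoint ℂ)} (hU : IsOpen U)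
    (hinfty : OnePoint.infty ∈ U) : IsCompact {z : ℂ | (z : OnePoint ℂ) ∉ U} :=
  ((OnePoint.isOpen_iff_of_mem hinfty).1 hU).2

/-- Polynomial convexity: a point that can be joined to infinity off a compact set is separated
from this set by a polynomial. -/
theorem exists_polynomial_eval_eq_one {U : Set (OnePoint ℂ)} (hU : IsOpen U)
    (hconn : IsPreconnected U) (hinfty : OnePoint.infty ∈ U) {z₀ : ℂ}
    (hz₀ : (z₀ : OnePoint ℂ) ∈ U) {δ : ℝ} (hδ : 0 < δ) :
    ∃ Q : ℂ[X], Q.eval z₀ = 1 ∧ ∀ z : ℂ, (z : OnePoint ℂ) ∉ U → ‖Q.eval z‖ ≤ δ := by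
  set K : Set ℂ := {z : ℂ | (z : OnePoint ℂ) ∉ U} with hKdef
  have hK : IsCompact K := isCompact_compl_preimage_coe hU hinfty
  have : CompactSpace K := isCompact_iff_compactSpace.1 hK
  let S : Subalgebra ℂ C(K, ℂ) := (polynomialFunctions K).topologicalClosure
  have hS : IsClosed (S : Set C(K, ℂ)) := Subalgebra.isClosed_topologicalClosure _
  have : CompleteSpace S := hS.completeSpace_coe
  let x : S := ⟨(X : ℂ[X]).toContinuousMapOn K,
    Subalgebra.le_topologicalClosure _ ⟨X, trivial, rfl⟩⟩
  have hfr : frontier (spectrum ℂ x) ⊆ K := by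
    refine (Subalgebra.frontier_spectrum S x).trans ?_
    rw [ContinuousMap.spectrum_eq_range]
    rintro _ ⟨y, rfl⟩
    simp [x]
  have hσ : IsCompact (spectrum ℂ x) := spectrum.isCompact x
  have hnot : z₀ ∉ spectrum ℂ x := by
    intro hmem
    have hsub : ∀ w : ℂ, (w : OnePoint ℂ) ∈ U → w ∈ spectrum ℂ x →
        w ∈ interior (spectrum ℂ x) := by
      intro w hw hws
      by_contra hwi
      exact hfr ⟨subset_closure hws, hwi⟩ hw
    obtain ⟨y, -, ⟨w, hw, rfl⟩, hy⟩ := hconn (OnePoint.some '' interior (spectrum ℂ x))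
      (OnePoint.some '' spectrum ℂ x)ᶜ (OnePoint.isOpen_image_coe.2 isOpen_interior)
      (OnePoint.isOpen_compl_image_coe.2 ⟨hσ.isClosed, hσ⟩)
      (by
        intro u hu
        by_cases h : u ∈ ((↑) '' spectrum ℂ x : Set (OnePoint ℂ))
        · obtain ⟨w, hw, rfl⟩ := h
          exact Or.inl ⟨w, hsub w hu hw, rfl⟩
        · exact Or.inr h)
      ⟨z₀, hz₀, z₀, hsub z₀ hz₀ hmem, rfl⟩
      ⟨OnePoint.infty, hinfty, fun h => OnePoint.infty_notMem_image_coe h⟩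
    exact hy ⟨w, interior_subset hw, rfl⟩
  obtain ⟨u, hu⟩ := spectrum.notMem_iff.1 hnot
  set g : S := ↑u⁻¹ with hg
  have hmul : (algebraMap ℂ S z₀ - x) * g = 1 := by rw [← hu, hg, Units.mul_inv]
  set M : ℝ := ‖((algebraMap ℂ S z₀ - x : S) : C(K, ℂ))‖ with hM
  have hM0 : 0 < M + 1 := by positivity
  obtain ⟨h, hhS, hh⟩ := Metric.mem_closure_iff.1
    (show (g : C(K, ℂ)) ∈ closure (polynomialFunctions K : Set C(K, ℂ)) from g.2)
    (δ / (M + 1)) (by positivity)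
  obtain ⟨P, -, rfl⟩ := hhS
  refine ⟨1 - (C z₀ - X) * P, by simp, fun z hz => ?_⟩
  have hev : (z₀ - z) * (g : C(K, ℂ)) ⟨z, hz⟩ = 1 := by
    have := congrArg (fun s : S => (s : C(K, ℂ)) ⟨z, hz⟩) hmul
    simpa [x] using this
  have hd : ‖(g : C(K, ℂ)) ⟨z, hz⟩ - P.eval z‖ ≤ δ / (M + 1) := by
    rw [dist_eq_norm] at hh
    have := ((g : C(K, ℂ)) - P.toContinuousMapOn K).norm_coe_le_norm ⟨z, hz⟩
    simpa using this.trans hh.le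
  have hn : ‖z₀ - z‖ ≤ M := by
    have := ((algebraMap ℂ S z₀ - x : S) : C(K, ℂ)).norm_coe_le_norm ⟨z, hz⟩
    refine le_trans (le_of_eq ?_) this
    simp [x]
  calc ‖(1 - (C z₀ - X) * P).eval z‖
      = ‖(z₀ - z) * ((g : C(K, ℂ)) ⟨z, hz⟩ - P.eval z)‖ := by
        rw [mul_sub, hev]; simp
    _ ≤ (M + 1) * (δ / (M + 1)) := by
        rw [norm_mul]
        exact mul_le_mul (by linarith) hd (norm_nonneg _) hM0.le
    _ = δ := by field_simp

theorem exists_polynomial_of_mem_nhds {U : Set (OnePoint ℂ)} (hU : IsOpen U)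
    (hconn : IsPreconnected U) (hinfty : OnePoint.infty ∈ U) {x : OnePoint ℂ} (hx : x ∈ U) :
    ∃ Q : ℂ[X], (∀ z : ℂ, (z : OnePoint ℂ) ∉ U → ‖Q.eval z‖ ≤ 1) ∧
      ∃ V ∈ 𝓝 x, ∀ z : ℂ, (z : OnePoint ℂ) ∈ V → 2 ≤ ‖Q.eval z‖ := by
  induction x using OnePoint.rec with
  | infty =>
    obtain ⟨r, hr0, hr⟩ :=
      (isCompact_compl_preimage_coe hU hinfty).isBounded.exists_pos_norm_le
    refine ⟨C (r⁻¹ : ℂ) * X, fun z hz => ?_, ((↑) '' closedBall (0 : ℂ) (2 * r))ᶜ,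
      (OnePoint.isOpen_compl_image_coe.2 ⟨isClosed_closedBall,
        isCompact_closedBall _ _⟩).mem_nhds OnePoint.infty_notMem_image_coe, fun z hz => ?_⟩
    · have := hr z hz
      rw [eval_mul, eval_C, eval_X, norm_mul, norm_inv, Complex.norm_real,
        Real.norm_of_nonneg hr0.le, inv_mul_le_iff₀ hr0]
      linarith
    · have : 2 * r < ‖z‖ := by
        by_contra! h
        exact hz ⟨z, by simpa using h, rfl⟩
      rw [eval_mul, eval_C, eval_X, norm_mul, norm_inv, Complex.norm_real,
        Real.norm_of_nonneg hr0.le, le_inv_mul_iff₀ hr0]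
      linarith
  | coe z₀ =>
    obtain ⟨Q, h1, h2⟩ := exists_polynomial_eval_eq_one hU hconn hinfty hx
      (show (0 : ℝ) < 1 / 4 by norm_num)
    have hc : ContinuousAt (fun z => ‖(C 4 * Q).eval z‖) z₀ :=
      (C 4 * Q).continuous.norm.continuousAt
    refine ⟨C 4 * Q, fun z hz => ?_, (↑) '' {z : ℂ | 2 < ‖(C 4 * Q).eval z‖}, ?_, ?_⟩
    · have := h2 z hz
      simp only [eval_mul, eval_C, norm_mul, Complex.norm_ofNat]
      linarith
    · rw [OnePoint.nhds_coe_eq]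
      refine image_mem_map (hc.eventually (lt_mem_nhds ?_))
      simp [h1]; norm_num
    · rintro z ⟨w, hw, hwz⟩
      rw [OnePoint.coe_eq_coe] at hwz
      exact hwz ▸ hw.le

/-- Hilbert's lemniscate theorem: a polynomial that is small off a connected neighbourhood of
infinity and large on a given compact subset of this neighbourhood. -/
theorem exists_polynomial_lemniscate {U : Set (OnePoint ℂ)} (hU : IsOpen U)
    (hconn : IsPreconnected U) (hinfty : OnePoint.infty ∈ U) (hinf : Uᶜ.Infinite)
    {E : Set (OnePoint ℂ)} (hE : IsCompact E) (hEU : E ⊆ U) {B : ℝ} (hB : 0 < B) :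
    ∃ Q : ℂ[X], 0 < Q.natDegree ∧ (∀ z : ℂ, (z : OnePoint ℂ) ∉ U → ‖Q.eval z‖ ≤ B⁻¹) ∧
      ∀ z : ℂ, (z : OnePoint ℂ) ∈ E → B ≤ ‖Q.eval z‖ := by
  have hK := isCompact_compl_preimage_coe hU hinfty
  set K : Set ℂ := {z : ℂ | (z : OnePoint ℂ) ∉ U} with hKdef
  have hKinf : K.Infinite := by
    refine fun hfin => hinf ((hfin.image ((↑) : ℂ → OnePoint ℂ)).subset fun x hx => ?_)
    induction x using OnePoint.rec with
    | infty => exact absurd hinfty hx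
    | coe z => exact ⟨z, hx, rfl⟩
  have hloc := fun (x : OnePoint ℂ) (hx : x ∈ E) =>
    exists_polynomial_of_mem_nhds hU hconn hinfty (hEU hx)
  choose! q hq V hV hqV using hloc
  obtain ⟨t, htE, ht⟩ := hE.elim_nhds_subcover V hV
  obtain ⟨r, hr0, hr⟩ := hK.isBounded.exists_pos_norm_le
  obtain ⟨δ, hδ0, hδ⟩ := exists_pos_forall_lt_edist hK
    (hE.isClosed.preimage OnePoint.continuous_coe) (disjoint_left.2 fun z hz hzE => hz (hEU hzE))
  let d : ℕ := t.sup (fun x => (q x).natDegree) + 1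
  have hd : ∀ x ∈ t, (q x).natDegree < d := fun x hx =>
    Nat.lt_succ_of_le (Finset.le_sup (f := fun x => (q x).natDegree) hx)
  -- growth of the exponential beats the polynomial factor
  have hlim : ∃ k : ℕ, 0 < k ∧ (d * k : ℝ) * (B * (B * (2 * r))) ≤ δ * 2 ^ k := by
    have h0 : Tendsto (fun k : ℕ => (k : ℝ) ^ 1 / (2 : ℝ) ^ k) atTop (𝓝 0) :=
      tendsto_pow_const_div_const_pow_of_one_lt 1 one_lt_two
    have hd0 : (0 : ℝ) < d := by positivity
    have h1 : ∀ᶠ k : ℕ in atTop, (k : ℝ) ^ 1 / (2 : ℝ) ^ k < δ / (d * (B * (B * (2 * r)))) :=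
      h0.eventually (gt_mem_nhds (by positivity))
    obtain ⟨k, hk, hk0⟩ := (h1.and (eventually_gt_atTop 0)).exists
    refine ⟨k, hk0, ?_⟩
    rw [div_lt_div_iff₀ (by positivity) (by positivity)] at hk
    linarith
  obtain ⟨k, hk0, hk⟩ := hlim
  obtain ⟨x, hxi, hxK, hx⟩ := exists_fekete_points hK hKinf (d * k)
  have hn0 : 0 < d * k := by positivity
  have hnpos : ∀ i, 0 < ∏ j ∈ Finset.univ.erase i, ‖x i - x j‖ := fun i =>
    Finset.prod_pos fun j hj => norm_pos_iff.2
      (sub_ne_zero.2 fun h => Finset.ne_of_mem_erase hj (hxi h).symm)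
  obtain ⟨i₀, -, hi₀⟩ := Finset.exists_min_image Finset.univ
    (fun i => ∏ j ∈ Finset.univ.erase i, ‖x i - x j‖) ⟨⟨0, hn0⟩, Finset.mem_univ _⟩
  set μ : ℝ := ∏ j ∈ Finset.univ.erase i₀, ‖x i₀ - x j‖ with hμ
  have hμ0 : 0 < μ := hnpos i₀
  let F : ℂ[X] := Lagrange.nodal Finset.univ x
  have hF : ∀ z i, ‖F.eval z‖ = ‖z - x i‖ * ∏ j ∈ Finset.univ.erase i, ‖z - x j‖ := by
    intro z i
    rw [Lagrange.eval_nodal, norm_prod,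
      Finset.mul_prod_erase _ (fun j => ‖z - x j‖) (Finset.mem_univ i)]
  have hsc : 0 < (B * (2 * r) * μ)⁻¹ := by positivity
  have hscn : ∀ z : ℂ, ‖(C (((B * (2 * r) * μ)⁻¹ : ℝ) : ℂ) * F).eval z‖ =
      (B * (2 * r) * μ)⁻¹ * ‖F.eval z‖ := by
    intro z
    rw [eval_mul, eval_C, norm_mul, Complex.norm_real, Real.norm_of_nonneg hsc.le]
  refine ⟨C (((B * (2 * r) * μ)⁻¹ : ℝ) : ℂ) * F, ?_, fun z hz => ?_, fun z hz => ?_⟩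
  · rw [natDegree_C_mul (by exact_mod_cast hsc.ne'), Lagrange.natDegree_nodal]
    simpa using hn0
  · rw [hscn, inv_mul_le_iff₀ (by positivity), hF z i₀]
    have h1 : ‖z - x i₀‖ ≤ 2 * r := by
      have := norm_sub_le z (x i₀)
      have := hr z hz
      have := hr _ (hxK i₀)
      linarith
    calc _ ≤ (2 * r) * μ := mul_le_mul h1 (hx i₀ z hz)
            (Finset.prod_nonneg fun _ _ => norm_nonneg _) (by positivity)
      _ = _ := by field_simp
  · obtain ⟨y, hyt, hzy⟩ := mem_iUnion₂.1 (ht hz)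
    have hbig : (2 : ℝ) ^ k ≤ ‖((q y) ^ k).eval z‖ := by
      rw [eval_pow, norm_pow]
      exact pow_le_pow_left₀ zero_le_two (hqV y (htE y hyt) z hzy) k
    have hdeg : ((q y) ^ k).degree < (Finset.univ : Finset (Fin (d * k))).card := by
      refine degree_le_natDegree.trans_lt (Nat.cast_lt.2 ?_)
      rw [Finset.card_univ, Fintype.card_fin]
      refine (natDegree_pow_le).trans_lt ?_
      rw [mul_comm]
      exact Nat.mul_lt_mul_of_pos_right (hd y hyt) hk0
    have hdist : ∀ i, (δ : ℝ) ≤ ‖z - x i‖ := by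
      intro i
      have := hδ (x i) (hxK i) z hz
      rw [edist_comm, edist_nndist, ENNReal.coe_lt_coe] at this
      rw [← dist_eq_norm, ← coe_nndist]
      exact_mod_cast this.le
    have hbasis : ∀ i, ‖((Lagrange.basis Finset.univ x i).eval z)‖ ≤ ‖F.eval z‖ / (δ * μ) := by
      intro i
      have he : ‖((Lagrange.basis Finset.univ x i).eval z)‖ =
          (∏ j ∈ Finset.univ.erase i, ‖z - x j‖) / ∏ j ∈ Finset.univ.erase i, ‖x i - x j‖ := by
        rw [Lagrange.basis, eval_prod, norm_prod, ← Finset.prod_div_distrib]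
        refine Finset.prod_congr rfl fun j _ => ?_
        rw [Lagrange.basisDivisor, eval_mul, eval_C, eval_sub, eval_X, eval_C, norm_mul, norm_inv]
        field_simp
      rw [he, div_le_div_iff₀ (hnpos i) (by positivity), hF z i]
      have h1 := hdist i
      have h2 := hi₀ i (Finset.mem_univ i)
      have h3 : 0 ≤ ∏ j ∈ Finset.univ.erase i, ‖z - x j‖ :=
        Finset.prod_nonneg fun _ _ => norm_nonneg _
      calc _ ≤ (∏ j ∈ Finset.univ.erase i, ‖z - x j‖) *
            (‖z - x i‖ * ∏ j ∈ Finset.univ.erase i, ‖x i - x j‖) := by gcongr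
        _ = _ := by ring
    have hsum : ‖((q y) ^ k).eval z‖ ≤ (d * k : ℝ) * (‖F.eval z‖ / (δ * μ)) := by
      have hinterp := Lagrange.eq_interpolate (s := Finset.univ) (v := x) (hxi.injOn) hdeg
      rw [hinterp, Lagrange.interpolate_apply, eval_finsetSum]
      refine (norm_sum_le_of_le _ (fun i _ => ?_)).trans
        (le_of_eq (by
          rw [Finset.sum_const, Finset.card_univ, Fintype.card_fin, nsmul_eq_mul]
          push_cast
          rfl))
      rw [eval_mul, eval_C, norm_mul]
      refine (mul_le_of_le_one_left (norm_nonneg _) ?_).trans (hbasis i)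
      rw [eval_pow, norm_pow]
      exact pow_le_one₀ (norm_nonneg _) (hq y (htE y hyt) _ (hxK i))
    rw [hscn, le_inv_mul_iff₀ (by positivity)]
    have hdk : (0 : ℝ) < d * k := by exact_mod_cast hn0
    have h2 := hbig.trans hsum
    rw [← mul_div_assoc, le_div_iff₀ (by positivity)] at h2
    have h3 : (d * k : ℝ) * (B * (2 * r) * μ * B) ≤ (d * k : ℝ) * ‖F.eval z‖ := by
      refine le_trans (le_of_eq ?_) ((mul_le_mul_of_nonneg_right hk hμ0.le).trans
        ((le_of_eq ?_).trans h2)) <;> ring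
    exact le_of_mul_le_mul_left h3 hdk

theorem tendsto_nhds_infty_iff_norm {α : Type*} {l : Filter α} {h : α → OnePoint ℂ} :
    Tendsto h l (𝓝 OnePoint.infty) ↔ ∀ r : ℝ, ∀ᶠ x in l, ∀ w : ℂ, h x = w → r < ‖w‖ := by
  constructor
  · intro hl r
    have hmem : ((↑) '' closedBall (0 : ℂ) r : Set (OnePoint ℂ))ᶜ ∈ 𝓝 OnePoint.infty :=
      (OnePoint.isOpen_compl_image_coe.2 ⟨isClosed_closedBall,
        isCompact_closedBall _ _⟩).mem_nhds OnePoint.infty_notMem_image_coe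
    filter_upwards [hl hmem] with x hx w hw
    by_contra! hwr
    exact hx ⟨w, by simpa using hwr, hw.symm⟩
  · intro hr s hs
    obtain ⟨t, ⟨-, ht⟩, hts⟩ := OnePoint.hasBasis_nhds_infty.mem_iff.1 hs
    obtain ⟨r, hr0, hrt⟩ := ht.isBounded.exists_pos_norm_le
    rw [Filter.mem_map]
    filter_upwards [hr r] with x hx
    refine hts ?_
    rcases eq_or_ne (h x) OnePoint.infty with h0 | h0
    · exact Or.inr h0
    · obtain ⟨w, hw⟩ := OnePoint.ne_infty_iff_exists.1 h0
      exact Or.inl ⟨w, fun hwt => (hx w hw.symm).not_ge (hrt w hwt), hw⟩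

theorem mem_basin_iff_apply {r : OnePoint ℂ → OnePoint ℂ} {w x : OnePoint ℂ} :
    r x ∈ basin r w ↔ x ∈ basin r w := by
  simp only [basin, mem_ofPred_eq, ← Function.iterate_succ_apply]
  exact tendsto_add_atTop_iff_nat (f := fun n => r^[n] x) 1

theorem mem_basin_iff_iterate {r : OnePoint ℂ → OnePoint ℂ} {w x : OnePoint ℂ} (k : ℕ) :
    r^[k] x ∈ basin r w ↔ x ∈ basin r w := by
  induction k with
  | zero => rfl
  | succ k ih => rw [Function.iterate_succ_apply', mem_basin_iff_apply, ih]

theorem isOpen_basin {r : OnePoint ℂ → OnePoint ℂ} (hr : Continuous r) {w : OnePoint ℂ}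
    {T : Set (OnePoint ℂ)} (hT : T ∈ 𝓝 w) (hsub : T ⊆ basin r w) : IsOpen (basin r w) := by
  have h : basin r w = ⋃ k : ℕ, r^[k] ⁻¹' interior T := by
    ext x
    constructor
    · intro hx
      obtain ⟨k, hk⟩ := (hx.eventually (interior_mem_nhds.2 hT)).exists
      exact mem_iUnion.2 ⟨k, hk⟩
    · intro hx
      obtain ⟨k, hk⟩ := mem_iUnion.1 hx
      exact (mem_basin_iff_iterate k).1 (hsub (interior_subset hk))
  rw [h]
  exact isOpen_iUnion fun k => isOpen_interior.preimage (hr.iterate k)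

theorem disjoint_basin (r : OnePoint ℂ → OnePoint ℂ) {w₁ w₂ : OnePoint ℂ} (h : w₁ ≠ w₂) :
    Disjoint (basin r w₁) (basin r w₂) :=
  disjoint_left.2 fun _ h₁ h₂ => h (tendsto_nhds_unique h₁ h₂)

theorem hasDerivAt_iterate_prod {g : ℂ → ℂ} {w : ℂ} {k : ℕ}
    (h : ∀ j < k, DifferentiableAt ℂ g (g^[j] w)) :
    HasDerivAt g^[k] (∏ j ∈ Finset.range k, deriv g (g^[j] w)) w := by
  induction k with
  | zero => simpa using hasDerivAt_id w
  | succ k ih =>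
    rw [Function.iterate_succ', Finset.prod_range_succ, mul_comm]
    exact (h k k.lt_succ_self).hasDerivAt.comp w (ih fun j hj => h j (hj.trans k.lt_succ_self))

/-- A self-map of the sphere fixing infinity that is given by `g` off the set `S` of its finite
poles. -/
structure IsPolarExtension (f : OnePoint ℂ → OnePoint ℂ) (g : ℂ → ℂ) (S : Set ℂ) : Prop where
  continuous : Continuous f
  map_infty : f OnePoint.infty = OnePoint.infty
  map_pole : ∀ z ∈ S, f z = OnePoint.infty
  map_coe : ∀ z ∉ S, f z = (g z : OnePoint ℂ)
  differentiableAt : ∀ z ∉ S, DifferentiableAt ℂ g z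
  countable_fiber : ∀ y, (f ⁻¹' {y}).Countable

namespace IsPolarExtension

variable {f : OnePoint ℂ → OnePoint ℂ} {g : ℂ → ℂ} {S : Set ℂ}

theorem iterate_ne_infty (h : IsPolarExtension f g S) {w : ℂ} {k : ℕ}
    (hk : f^[k] w ≠ OnePoint.infty) :
    f^[k] w = (g^[k] w : OnePoint ℂ) ∧ ∀ j < k, g^[j] w ∉ S := by
  induction k with
  | zero => simp
  | succ k ih =>
    rw [Function.iterate_succ_apply'] at hk
    have hk' : f^[k] w ≠ OnePoint.infty := fun h0 => hk (by rw [h0, h.map_infty])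
    obtain ⟨h1, h2⟩ := ih hk'
    have h3 : g^[k] w ∉ S := fun hS => hk (by rw [h1, h.map_pole _ hS])
    refine ⟨by rw [Function.iterate_succ_apply', h1, h.map_coe _ h3, Function.iterate_succ_apply'],
      fun j hj => ?_⟩
    rcases Nat.lt_succ_iff_lt_or_eq.1 hj with hj | rfl
    · exact h2 j hj
    · exact h3

theorem hasDerivAt_iterate (h : IsPolarExtension f g S) {w : ℂ} {k : ℕ}
    (hk : f^[k] w ≠ OnePoint.infty) :
    HasDerivAt g^[k] (∏ j ∈ Finset.range k, deriv g (g^[j] w)) w :=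
  hasDerivAt_iterate_prod fun j hj => h.differentiableAt _ ((h.iterate_ne_infty hk).2 j hj)

theorem countable_iterate_eq_infty (h : IsPolarExtension f g S) (k : ℕ) :
    {w : ℂ | f^[k] w = OnePoint.infty}.Countable := by
  suffices hs : (f^[k] ⁻¹' {OnePoint.infty}).Countable from
    hs.preimage OnePoint.coe_injective
  induction k with
  | zero => simp
  | succ k ih =>
    rw [Function.iterate_succ, preimage_comp, ← biUnion_preimage_singleton]
    exact ih.biUnion fun y _ => h.countable_fiber y

end IsPolarExtension

/-- The reciprocal coordinate centred at `b`, vanishing at infinity. -/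
def recipCoord (b : ℂ) (x : OnePoint ℂ) : ℂ := x.elim 0 fun v => (v - b)⁻¹

theorem continuousAt_recipCoord {b : ℂ} {x : OnePoint ℂ} (hx : x ≠ b) :
    ContinuousAt (recipCoord b) x := by
  induction x using OnePoint.rec with
  | infty =>
    rw [OnePoint.continuousAt_infty', coclosedCompact_eq_cocompact, ← Metric.cobounded_eq_cocompact]
    exact tendsto_inv₀_cobounded.comp (tendsto_sub_const_cobounded b)
  | coe z =>
    rw [OnePoint.continuousAt_coe]
    have hz : z - b ≠ 0 := sub_ne_zero.2 fun h => hx (by rw [h])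
    exact (continuousAt_id.sub continuousAt_const).inv₀ hz

theorem not_bddAbove_two_pow {a : ℝ} (h : ∀ k : ℕ, (2 : ℝ) ^ k ≤ a) : False := by
  obtain ⟨k, hk⟩ := pow_unbounded_of_one_lt a one_lt_two
  exact (h k).not_gt hk

/-- Two attracting fixed points whose trapping regions carry everything but a set on which the
map expands: both basins have the same frontier. -/
theorem IsPolarExtension.basins {f : OnePoint ℂ → OnePoint ℂ} {g : ℂ → ℂ} {S : Set ℂ}
    (h : IsPolarExtension f g S) {b : ℂ} {M ρ : ℝ} (hM : 0 < M) (hρ : 0 < ρ)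
    (hfar : ∀ z : ℂ, M ≤ ‖z‖ → z ∉ S ∧ 2 * ‖z‖ ≤ ‖g z‖)
    (hnear : ∀ z : ℂ, ‖z - b‖ < ρ → z ∉ S ∧ ‖g z - b‖ ≤ 2⁻¹ * ‖z - b‖)
    (hexp : ∀ z ∉ S, ρ ≤ ‖g z - b‖ → ‖g z‖ ≤ M → 2 ≤ ‖deriv g z‖) :
    (∀ z : ℂ, M ≤ ‖z‖ → (z : OnePoint ℂ) ∈ basin f OnePoint.infty) ∧
    (∀ z : ℂ, ‖z - b‖ < ρ → (z : OnePoint ℂ) ∈ basin f b) ∧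
    IsOpen (basin f OnePoint.infty) ∧ IsOpen (basin f b) ∧
    frontier (basin f OnePoint.infty) = (basin f OnePoint.infty ∪ basin f b)ᶜ ∧
    frontier (basin f b) = (basin f OnePoint.infty ∪ basin f b)ᶜ := by
  have hfar' : ∀ z : ℂ, M ≤ ‖z‖ → (z : OnePoint ℂ) ∈ basin f OnePoint.infty := by
    intro z hz
    have hk : ∀ k : ℕ, ∃ w : ℂ, f^[k] z = w ∧ 2 ^ k * M ≤ ‖w‖ := by
      intro k
      induction k with
      | zero => exact ⟨z, rfl, by simpa using hz⟩
      | succ k ih =>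
        obtain ⟨w, hw, hwM⟩ := ih
        have h1 : (1 : ℝ) ≤ 2 ^ k := one_le_pow₀ one_le_two
        obtain ⟨h2, h3⟩ := hfar w (by nlinarith)
        refine ⟨g w, by rw [Function.iterate_succ_apply', hw, h.map_coe w h2], ?_⟩
        rw [pow_succ]
        linarith
    refine tendsto_nhds_infty_iff_norm.2 fun r => ?_
    have hlim : Tendsto (fun k : ℕ => (2 : ℝ) ^ k * M) atTop atTop :=
      (tendsto_pow_atTop_atTop_of_one_lt one_lt_two).atTop_mul_const hM
    filter_upwards [hlim.eventually_gt_atTop r] with k hkr w hw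
    obtain ⟨w', hw', hle⟩ := hk k
    rw [hw', OnePoint.coe_eq_coe] at hw
    rw [← hw]
    linarith
  have hnear' : ∀ z : ℂ, ‖z - b‖ < ρ → (z : OnePoint ℂ) ∈ basin f b := by
    intro z hz
    have hk : ∀ k : ℕ, f^[k] z = (g^[k] z : OnePoint ℂ) ∧
        ‖g^[k] z - b‖ ≤ 2⁻¹ ^ k * ‖z - b‖ := by
      intro k
      induction k with
      | zero => simp
      | succ k ih =>
        obtain ⟨hw, hwM⟩ := ih
        have h1 : (2⁻¹ : ℝ) ^ k ≤ 1 := pow_le_one₀ (by norm_num) (by norm_num)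
        obtain ⟨h2, h3⟩ := hnear (g^[k] z) (by nlinarith [norm_nonneg (z - b)])
        refine ⟨by rw [Function.iterate_succ_apply', hw, h.map_coe _ h2,
          Function.iterate_succ_apply'], ?_⟩
        rw [pow_succ, Function.iterate_succ_apply']
        linarith
    have hlim : Tendsto (fun k : ℕ => (2⁻¹ : ℝ) ^ k * ‖z - b‖) atTop (𝓝 0) := by
      simpa using (tendsto_pow_atTop_nhds_zero_of_lt_one (r := (2⁻¹ : ℝ)) (by norm_num)
        (by norm_num)).mul_const ‖z - b‖
    have hg : Tendsto (fun k => g^[k] z) atTop (𝓝 b) :=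
      tendsto_iff_norm_sub_tendsto_zero.2
        (squeeze_zero (fun _ => norm_nonneg _) (fun k => (hk k).2) hlim)
    have := (OnePoint.continuous_coe.tendsto b).comp hg
    exact this.congr fun k => ((hk k).1).symm
  have hinf_mem : OnePoint.infty ∈ basin f OnePoint.infty := by
    refine tendsto_const_nhds.congr fun k => ?_
    exact (Function.iterate_fixed h.map_infty k).symm
  have hBo : IsOpen (basin f OnePoint.infty) := by
    refine isOpen_basin h.continuous (T := ((↑) '' closedBall (0 : ℂ) M)ᶜ)
      ((OnePoint.isOpen_compl_image_coe.2 ⟨isClosed_closedBall,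
        isCompact_closedBall _ _⟩).mem_nhds OnePoint.infty_notMem_image_coe) fun x hx => ?_
    induction x using OnePoint.rec with
    | infty => exact hinf_mem
    | coe z =>
      refine hfar' z ?_
      by_contra! hz
      exact hx ⟨z, by simpa using hz.le, rfl⟩
  have hBo' : IsOpen (basin f b) := by
    refine isOpen_basin h.continuous (T := (↑) '' ball b ρ)
      ((OnePoint.isOpen_image_coe.2 isOpen_ball).mem_nhds ⟨b, mem_ball_self hρ, rfl⟩) ?_
    rintro _ ⟨z, hz, rfl⟩
    exact hnear' z (mem_ball_iff_norm.1 hz)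
  have hdisj := disjoint_basin f (OnePoint.infty_ne_coe b)
  -- points outside both basins stay in the region of expansion
  have hexpand : ∀ z : ℂ, (z : OnePoint ℂ) ∉ basin f OnePoint.infty →
      (z : OnePoint ℂ) ∉ basin f b → ∀ k, f^[k] z = (g^[k] z : OnePoint ℂ) ∧
        ‖g^[k] z‖ ≤ M ∧ ρ ≤ ‖g^[k] z - b‖ ∧
        2 ^ k ≤ ‖∏ j ∈ Finset.range k, deriv g (g^[j] z)‖ := by
    intro z h1 h2
    have hk : ∀ k, f^[k] z = (g^[k] z : OnePoint ℂ) ∧ ‖g^[k] z‖ ≤ M ∧ ρ ≤ ‖g^[k] z - b‖ := by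
      intro k
      have h3 : f^[k] z ∉ basin f OnePoint.infty := fun hc => h1 ((mem_basin_iff_iterate k).1 hc)
      have h4 : f^[k] z ∉ basin f b := fun hc => h2 ((mem_basin_iff_iterate k).1 hc)
      have h5 := (h.iterate_ne_infty (w := z) (k := k) fun hc => h3 (by rwa [hc])).1
      rw [h5] at h3 h4
      exact ⟨h5, le_of_not_ge fun hc => h3 (hfar' _ hc), le_of_not_gt fun hc => h4 (hnear' _ hc)⟩
    intro k
    refine ⟨(hk k).1, (hk k).2.1, (hk k).2.2, ?_⟩
    rw [norm_prod]
    have : ∏ _j ∈ Finset.range k, (2 : ℝ) = 2 ^ k := by simp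
    rw [← this]
    refine Finset.prod_le_prod (fun _ _ => zero_le_two) fun j hj => ?_
    have hne : f^[j + 1] z ≠ OnePoint.infty := by
      rw [(hk (j + 1)).1]; exact OnePoint.coe_ne_infty _
    have hj1 := hk (j + 1)
    rw [Function.iterate_succ_apply' g] at hj1
    exact hexp _ ((h.iterate_ne_infty hne).2 j j.lt_succ_self) hj1.2.2 hj1.2.1
  have hcl : ∀ x ∉ basin f OnePoint.infty ∪ basin f b, x ∈ closure (basin f OnePoint.infty) := by
    intro x hx
    by_contra hxc
    have hxi : x ≠ OnePoint.infty := by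
      rintro rfl
      exact hx (Or.inl hinf_mem)
    obtain ⟨z, rfl⟩ := OnePoint.ne_infty_iff_exists.1 hxi
    have hz := hexpand z (fun hc => hx (Or.inl hc)) fun hc => hx (Or.inr hc)
    obtain ⟨t, ht, hball⟩ := Metric.nhds_basis_closedBall.mem_iff.1
      ((isClosed_closure.isOpen_compl.preimage OnePoint.continuous_coe).mem_nhds hxc)
    have hout : ∀ w ∈ closedBall z t, ∀ k, f^[k] w ∉ basin f OnePoint.infty :=
      fun w hw k hc => hball hw (subset_closure ((mem_basin_iff_iterate k).1 hc))
    have hne : ∀ w ∈ closedBall z t, ∀ k, f^[k] w ≠ OnePoint.infty :=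
      fun w hw k hc => hout w hw k (by rwa [hc])
    refine not_bddAbove_two_pow (a := M / t) fun k => ?_
    have hbd : ∀ w ∈ closedBall z t, ‖g^[k] w‖ ≤ M := by
      intro w hw
      have h1 := hout w hw k
      rw [(h.iterate_ne_infty (hne w hw k)).1] at h1
      exact le_of_not_ge fun hc => h1 (hfar' _ hc)
    have hd : DifferentiableOn ℂ g^[k] (closedBall z t) := fun w hw =>
      (h.hasDerivAt_iterate (hne w hw k)).differentiableAt.differentiableWithinAt
    have hC := Complex.norm_deriv_le_of_forall_mem_sphere_norm_le ht
      (hd.diffContOnCl_ball subset_rfl) fun w hw => hbd w (sphere_subset_closedBall hw)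
    rw [(h.hasDerivAt_iterate (hne z (mem_closedBall_self ht.le) k)).deriv] at hC
    exact (hz k).2.2.2.trans hC
  have hcl' : ∀ x ∉ basin f OnePoint.infty ∪ basin f b, x ∈ closure (basin f b) := by
    intro x hx
    by_contra hxc
    have hxi : x ≠ OnePoint.infty := by
      rintro rfl
      exact hx (Or.inl hinf_mem)
    obtain ⟨z, rfl⟩ := OnePoint.ne_infty_iff_exists.1 hxi
    have hz := hexpand z (fun hc => hx (Or.inl hc)) fun hc => hx (Or.inr hc)
    obtain ⟨t, ht, hball⟩ := Metric.nhds_basis_closedBall.mem_iff.1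
      ((isClosed_closure.isOpen_compl.preimage OnePoint.continuous_coe).mem_nhds hxc)
    have hout : ∀ w ∈ closedBall z t, ∀ k, f^[k] w ∉ basin f b :=
      fun w hw k hc => hball hw (subset_closure ((mem_basin_iff_iterate k).1 hc))
    have hb_mem : (b : OnePoint ℂ) ∈ basin f b := hnear' b (by simpa using hρ)
    have hMb : 0 < M + ‖b‖ := by positivity
    refine not_bddAbove_two_pow (a := ρ⁻¹ / t * (M + ‖b‖) ^ 2) fun k => ?_
    let H : ℂ → ℂ := fun w => recipCoord b (f^[k] w)
    have hHbd : ∀ w ∈ closedBall z t, ‖H w‖ ≤ ρ⁻¹ := by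
      intro w hw
      have h1 := hout w hw k
      simp only [H]
      generalize f^[k] w = y at h1
      induction y using OnePoint.rec with
      | infty => simpa [recipCoord] using hρ.le
      | coe v =>
        have : ρ ≤ ‖v - b‖ := le_of_not_gt fun hc => h1 (hnear' v hc)
        simp only [recipCoord, OnePoint.elim_some, norm_inv]
        exact inv_anti₀ hρ this
    have hHc : ContinuousOn H (closedBall z t) := fun w hw => by
      refine ContinuousAt.continuousWithinAt (ContinuousAt.comp (g := recipCoord b)
        (f := fun w : ℂ => f^[k] w) ?_
        ((h.continuous.iterate k).comp OnePoint.continuous_coe).continuousAt)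
      exact continuousAt_recipCoord fun hc => hout w hw k (by rwa [hc])
    have hHd : ∀ w ∈ closedBall z t, f^[k] w ≠ OnePoint.infty →
        HasDerivAt H (-(∏ j ∈ Finset.range k, deriv g (g^[j] w)) / (g^[k] w - b) ^ 2) w := by
      intro w hw hwi
      have hgb : g^[k] w - b ≠ 0 := by
        intro hc
        refine hout w hw k ?_
        rw [(h.iterate_ne_infty hwi).1, sub_eq_zero.1 hc]
        exact hb_mem
      have hev : ∀ᶠ w' : ℂ in 𝓝 w, f^[k] (w' : OnePoint ℂ) ≠ OnePoint.infty :=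
        ((h.continuous.iterate k).comp OnePoint.continuous_coe).continuousAt.eventually_ne hwi
      refine (((h.hasDerivAt_iterate hwi).sub_const b).inv hgb).congr_of_eventuallyEq ?_
      filter_upwards [hev] with w' hw'
      simp only [H]
      rw [(h.iterate_ne_infty hw').1]
      rfl
    have hzi : f^[k] z ≠ OnePoint.infty := by
      rw [(hz k).1]; exact OnePoint.coe_ne_infty _
    have hzm := mem_closedBall_self (x := z) ht.le
    have hdiff : DifferentiableOn ℂ H (ball z t) := by
      have htR : (Real.toNNReal t : ℝ) = t := Real.coe_toNNReal t ht.le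
      have hps := Complex.hasFPowerSeriesOnBall_of_differentiable_off_countable
        (R := Real.toNNReal t) (h.countable_iterate_eq_infty k) (by rwa [htR])
        (fun w hw => (hHd w (ball_subset_closedBall (by simpa [htR] using hw.1))
          hw.2).differentiableAt) (Real.toNNReal_pos.2 ht)
      have hdo := hps.differentiableOn
      rwa [Metric.eball_coe, htR] at hdo
    have hC := Complex.norm_deriv_le_of_forall_mem_sphere_norm_le ht
      ⟨hdiff, by rwa [closure_ball _ ht.ne']⟩ fun w hw => hHbd w (sphere_subset_closedBall hw)
    rw [(hHd z hzm hzi).deriv, norm_div, norm_neg, norm_pow, div_le_iff₀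
      (pow_pos (hρ.trans_le (hz k).2.2.1) 2)] at hC
    refine (hz k).2.2.2.trans (hC.trans ?_)
    have h3 : ‖g^[k] z - b‖ ≤ M + ‖b‖ := (norm_sub_le _ _).trans (by linarith [(hz k).2.1])
    gcongr
  refine ⟨hfar', hnear', hBo, hBo', ?_, ?_⟩
  · rw [hBo.frontier_eq]
    ext x
    refine ⟨fun hx hc => ?_, fun hx => ⟨hcl x hx, fun hc => hx (Or.inl hc)⟩⟩
    exact hc.elim hx.2 fun hb => (hdisj.closure_left hBo').le_bot ⟨hx.1, hb⟩
  · rw [hBo'.frontier_eq]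
    ext x
    refine ⟨fun hx hc => ?_, fun hx => ⟨hcl' x hx, fun hc => hx (Or.inr hc)⟩⟩
    exact hc.elim (fun hb => (hdisj.symm.closure_left hBo).le_bot ⟨hx.1, hb⟩) hx.2

/-- The value at `z` of the rational function `N / D` in the Riemann sphere. -/
def ratVal (N D : ℂ[X]) (z : ℂ) : OnePoint ℂ :=
  open Classical in
  if D.eval z = 0 then OnePoint.infty else ((N.eval z / D.eval z : ℂ) : OnePoint ℂ)

theorem ratVal_of_eval_eq_zero {N D : ℂ[X]} {z : ℂ} (h : D.eval z = 0) :
    ratVal N D z = OnePoint.infty :=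
  if_pos h

theorem ratVal_of_eval_ne_zero {N D : ℂ[X]} {z : ℂ} (h : D.eval z ≠ 0) :
    ratVal N D z = ((N.eval z / D.eval z : ℂ) : OnePoint ℂ) :=
  if_neg h

theorem ratVal_eq_coe {N D : ℂ[X]} {z w : ℂ} :
    ratVal N D z = w ↔ D.eval z ≠ 0 ∧ N.eval z / D.eval z = w := by
  by_cases h : D.eval z = 0
  · simp [ratVal_of_eval_eq_zero h, h]
  · simp [ratVal_of_eval_ne_zero h, h]

theorem tendsto_ratVal_infty {N D : ℂ[X]} {l : Filter ℂ}
    (h : ∀ r : ℝ, ∀ᶠ z in l, r * ‖D.eval z‖ < ‖N.eval z‖) :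
    Tendsto (ratVal N D) l (𝓝 OnePoint.infty) := by
  refine tendsto_nhds_infty_iff_norm.2 fun r => ?_
  filter_upwards [h r] with z hz w hw
  obtain ⟨hD, rfl⟩ := ratVal_eq_coe.1 hw
  rwa [norm_div, lt_div_iff₀ (norm_pos_iff.2 hD)]

theorem IsCoprime.eval_ne_zero {N D : ℂ[X]} (h : IsCoprime N D) {z : ℂ} (hz : D.eval z = 0) :
    N.eval z ≠ 0 := by
  intro hN
  obtain ⟨u, v, huv⟩ := h
  simpa [hz, hN] using congrArg (eval z) huv

theorem continuous_ratVal {N D : ℂ[X]} (h : IsCoprime N D) : Continuous (ratVal N D) := by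
  refine continuous_iff_continuousAt.2 fun z => ?_
  by_cases hz : D.eval z = 0
  · rw [ContinuousAt, ratVal_of_eval_eq_zero hz]
    refine tendsto_ratVal_infty fun r => ?_
    have hr : ContinuousAt (fun x : ℂ => r * ‖D.eval x‖) z := by fun_prop
    refine hr.eventually_lt (by fun_prop) ?_
    simpa [hz] using h.eval_ne_zero hz
  · have hc : ContinuousAt (fun x => N.eval x / D.eval x) z :=
      ContinuousAt.div (by fun_prop) (by fun_prop) hz
    refine (OnePoint.continuous_coe.continuousAt.comp hc).congr ?_
    filter_upwards [D.continuous.continuousAt.eventually_ne hz] with x hx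
    exact (ratVal_of_eval_ne_zero hx).symm

/-- The self-map of the sphere that fixes infinity and equals `N / D` elsewhere. -/
def ratMap (N D : ℂ[X]) (x : OnePoint ℂ) : OnePoint ℂ := x.elim OnePoint.infty (ratVal N D)

theorem continuous_ratMap {N D : ℂ[X]} (h : IsCoprime N D)
    (hinf : ∀ r : ℝ, ∀ᶠ z in Bornology.cobounded ℂ, r * ‖D.eval z‖ < ‖N.eval z‖) :
    Continuous (ratMap N D) := by
  refine (OnePoint.continuous_iff _).2 ⟨?_, continuous_ratVal h⟩
  rw [coclosedCompact_eq_cocompact, ← Metric.cobounded_eq_cocompact]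
  exact tendsto_ratVal_infty hinf

/-- The Möbius transformation `z ↦ 1 / (z - c)` of the Riemann sphere. -/
def recipHomeomorph (c : ℂ) : OnePoint ℂ ≃ₜ OnePoint ℂ := by
  classical
  refine Continuous.homeoOfEquivCompactToT2 (f :=
    { toFun := fun x => x.elim ((0 : ℂ) : OnePoint ℂ) (ratVal 1 (X - C c))
      invFun := fun x => x.elim (c : OnePoint ℂ) (ratVal (1 + C c * X) X)
      left_inv := ?_
      right_inv := ?_ }) ?_
  · intro x
    induction x using OnePoint.rec with
    | infty => exact ratVal_of_eval_eq_zero (by simp)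
    | coe z =>
      rcases eq_or_ne z c with rfl | hz
      · simp [ratVal]
      · have hz' : z - c ≠ 0 := sub_ne_zero.2 hz
        simp only [OnePoint.elim_some]
        rw [ratVal_of_eval_ne_zero (by simpa using hz'), OnePoint.elim_some,
          ratVal_of_eval_ne_zero (by simpa using hz')]
        simp only [eval_one, eval_sub, eval_X, eval_C, eval_add, eval_mul, OnePoint.coe_eq_coe]
        field_simp
        ring
  · intro x
    induction x using OnePoint.rec with
    | infty => exact ratVal_of_eval_eq_zero (by simp)
    | coe z =>
      rcases eq_or_ne z 0 with rfl | hz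
      · simp [ratVal]
      · simp only [OnePoint.elim_some]
        have hz' : (1 + c * z) / z - c ≠ 0 := by
          rw [show (1 + c * z) / z - c = z⁻¹ by field_simp; ring]
          exact inv_ne_zero hz
        rw [ratVal_of_eval_ne_zero (by simpa using hz), OnePoint.elim_some,
          ratVal_of_eval_ne_zero (by simpa using hz')]
        simp only [eval_one, eval_sub, eval_X, eval_C, eval_add, eval_mul, OnePoint.coe_eq_coe]
        field_simp
        ring
  · refine (OnePoint.continuous_iff _).2 ⟨?_, continuous_ratVal isCoprime_one_left⟩
    rw [coclosedCompact_eq_cocompact, ← Metric.cobounded_eq_cocompact]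
    have hlim : Tendsto (fun z : ℂ => (z - c)⁻¹) (Bornology.cobounded ℂ) (𝓝 0) :=
      tendsto_inv₀_cobounded.comp (tendsto_sub_const_cobounded c)
    refine ((OnePoint.continuous_coe.tendsto 0).comp hlim).congr' ?_
    filter_upwards [Bornology.isBounded_def.1 (Bornology.isBounded_singleton (x := c))] with z hz
    have hz' : z - c ≠ 0 := sub_ne_zero.2 hz
    simp [ratVal, hz']

theorem recipHomeomorph_self (c : ℂ) : recipHomeomorph c c = OnePoint.infty :=
  ratVal_of_eval_eq_zero (by simp)

theorem recipHomeomorph_coe {c z : ℂ} (h : z ≠ c) :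
    recipHomeomorph c z = ((z - c)⁻¹ : ℂ) := by
  have hz : z - c ≠ 0 := sub_ne_zero.2 h
  refine (ratVal_of_eval_ne_zero (by simpa using hz)).trans ?_
  simp

theorem recipHomeomorph_symm_coe {c w : ℂ} (h : w ≠ 0) :
    (recipHomeomorph c).symm w = (c + w⁻¹ : ℂ) := by
  rw [Homeomorph.symm_apply_eq, recipHomeomorph_coe (by simpa using h)]
  simp

/-- A nonconstant continuous self-map of the sphere that agrees with a quotient of polynomials off
the zeros of the denominator is a rational map. -/
theorem IsRationalMap.of_continuous {r : OnePoint ℂ → OnePoint ℂ} (hr : Continuous r)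
    {x y : OnePoint ℂ} (hxy : r x ≠ r y) {N D : ℂ[X]} (hD : D ≠ 0)
    (h : ∀ z : ℂ, D.eval z ≠ 0 → r z = ((N.eval z / D.eval z : ℂ) : OnePoint ℂ)) :
    IsRationalMap r := by
  classical
  obtain ⟨p, q, hcop, G, hG, rfl, rfl⟩ :
      ∃ p q : ℂ[X], IsCoprime p q ∧ ∃ G : ℂ[X], G ≠ 0 ∧ N = G * p ∧ D = G * q := by
    have hG : EuclideanDomain.gcd N D ≠ 0 := fun h0 => hD (EuclideanDomain.gcd_eq_zero_iff.1 h0).2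
    obtain ⟨p, hp⟩ := EuclideanDomain.gcd_dvd_left N D
    obtain ⟨q, hq⟩ := EuclideanDomain.gcd_dvd_right N D
    refine ⟨p, q, ⟨EuclideanDomain.gcdA N D, EuclideanDomain.gcdB N D, ?_⟩, _, hG, hp, hq⟩
    have hbez := EuclideanDomain.gcd_eq_gcd_ab N D
    refine mul_left_cancel₀ hG ?_
    linear_combination EuclideanDomain.gcdA N D * (-hp) + EuclideanDomain.gcdB N D * (-hq) - hbez
  have hdense : Dense {z : ℂ | (G * q).eval z = 0}ᶜ := by
    refine Set.Countable.dense_compl ℝ (Set.Finite.countable ?_)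
    exact Polynomial.finite_setOfPred_isRoot hD
  have hval : (fun z : ℂ => r z) = ratVal p q := by
    refine Continuous.ext_on hdense (hr.comp OnePoint.continuous_coe) (continuous_ratVal hcop) ?_
    intro z hz
    have hz' : (G * q).eval z ≠ 0 := hz
    have hz'' := hz'
    rw [eval_mul] at hz''
    simp only
    rw [h z hz', ratVal_of_eval_ne_zero (right_ne_zero_of_mul hz''), eval_mul, eval_mul,
      mul_div_mul_left _ _ (left_ne_zero_of_mul hz'')]
  refine ⟨hr, p, q, hcop, ?_, fun z hz => (congrFun hval z).trans (ratVal_of_eval_ne_zero hz)⟩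
  rintro ⟨hp0, hq0⟩
  obtain ⟨a, rfl⟩ := natDegree_eq_zero.1 hp0
  obtain ⟨b, rfl⟩ := natDegree_eq_zero.1 hq0
  have hconst : r = fun _ => ratVal (C a) (C b) 0 := by
    refine Continuous.ext_on (OnePoint.denseRange_coe (X := ℂ)) hr continuous_const ?_
    rintro _ ⟨z, rfl⟩
    rw [congrFun hval z]
    simp [ratVal]
  rw [hconst] at hxy
  exact hxy rfl

theorem eval_inv_eq_reverse_div (Q : ℂ[X]) {z : ℂ} (hz : z ≠ 0) :
    Q.eval z⁻¹ = Q.reverse.eval z / z ^ Q.natDegree := by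
  let _ : Invertible z⁻¹ := invertibleOfNonzero (inv_ne_zero hz)
  have h := eval₂_reverse_mul_pow (RingHom.id ℂ) z⁻¹ Q
  rw [invOf_eq_inv, inv_inv] at h
  rw [eq_div_iff (pow_ne_zero _ hz), ← eval₂_id, ← h, mul_assoc, ← mul_pow, inv_mul_cancel₀ hz,
    one_pow, mul_one, eval₂_id]

theorem isCoprime_X_sub_C_right {N : ℂ[X]} {q : ℂ} (h : N.eval q ≠ 0) :
    IsCoprime N (X - C q) :=
  (((irreducible_X_sub_C q).coprime_iff_not_dvd).2 fun hd => h (dvd_iff_isRoot.1 hd)).symm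

/-- A sum of principal parts with prescribed poles is a quotient of coprime polynomials. -/
theorem exists_isCoprime_eval_div_eq (S : Finset ℂ) (Q : ℂ → ℂ[X])
    (hQ : ∀ q ∈ S, 0 < (Q q).natDegree) (Q₀ : ℂ[X]) :
    ∃ N D : ℂ[X], IsCoprime N D ∧ (∀ z, D.eval z = 0 ↔ z ∈ S) ∧
      ∀ z ∉ S, N.eval z / D.eval z = Q₀.eval z + ∑ q ∈ S, (Q q).eval (z - q)⁻¹ := by
  induction S using Finset.induction_on with
  | empty => exact ⟨Q₀, 1, isCoprime_one_right, by simp, by simp⟩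
  | insert q S hqS ih =>
    obtain ⟨N, D, hcop, hD, hval⟩ := ih fun x hx => hQ x (Finset.mem_insert_of_mem hx)
    have hk := hQ q (Finset.mem_insert_self q S)
    set k := (Q q).natDegree with hkdef
    let T : ℂ[X] := (Q q).reverse.comp (X - C q)
    have hQ0 : Q q ≠ 0 := by
      intro h0
      simp [hkdef, h0] at hk
    have hDq : D.eval q ≠ 0 := fun h0 => hqS ((hD q).1 h0)
    have hTq : T.eval q ≠ 0 := by
      simpa [T, ← coeff_zero_eq_eval_zero] using hQ0
    have hLD : IsCoprime D ((X - C q) ^ k) := (isCoprime_X_sub_C_right hDq).pow_right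
    refine ⟨N * (X - C q) ^ k + D * T, D * (X - C q) ^ k, ?_, fun z => ?_, fun z hz => ?_⟩
    · refine IsCoprime.mul_right ?_ ?_
      · exact (hcop.mul_left hLD.symm).add_mul_left_left T
      · rw [add_comm, mul_comm N]
        exact (hLD.mul_left (isCoprime_X_sub_C_right hTq).pow_right).add_mul_left_left N
    · rw [eval_mul, mul_eq_zero, hD, Finset.mem_insert]
      simp [hk.ne', sub_eq_zero, or_comm]
    · rw [Finset.mem_insert, not_or] at hz
      have hzq : z - q ≠ 0 := sub_ne_zero.2 hz.1
      have hDz : D.eval z ≠ 0 := fun h0 => hz.2 ((hD z).1 h0)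
      rw [Finset.sum_insert hqS, eval_inv_eq_reverse_div _ hzq, ← hkdef, add_left_comm,
        ← hval z hz.2]
      simp only [eval_add, eval_mul, eval_pow, eval_sub, eval_X, eval_C, T, eval_comp]
      field_simp
      ring

theorem hasDerivAt_eval_div (N D : ℂ[X]) {z : ℂ} (hz : D.eval z ≠ 0) :
    HasDerivAt (fun x => N.eval x / D.eval x)
      ((derivative N * D - N * derivative D).eval z / D.eval z ^ 2) z := by
  have h := (N.hasDerivAt z).div (D.hasDerivAt z) hz
  rw [eval_sub, eval_mul, eval_mul]
  exact h

theorem eventually_cobounded_eval_ne_zero {D : ℂ[X]} (hD : D ≠ 0) :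
    ∀ᶠ z in Bornology.cobounded ℂ, D.eval z ≠ 0 :=
  Bornology.isBounded_def.1 (Polynomial.finite_setOfPred_isRoot hD).isBounded

/-- If a rational function growing at least linearly at infinity has no critical value on the unit
circle, its derivative is bounded below near the preimage of the unit circle. -/
theorem exists_le_norm_deriv_of_norm_near_one {N D : ℂ[X]} (hcop : IsCoprime N D) (hD : D ≠ 0)
    {c : ℝ} (hc : 0 < c)
    (hinf : ∀ᶠ z in Bornology.cobounded ℂ, c * ‖z‖ * ‖D.eval z‖ ≤ ‖N.eval z‖)
    (hcrit : ∀ z, ‖N.eval z‖ = ‖D.eval z‖ → (derivative N * D - N * derivative D).eval z ≠ 0) :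
    ∃ δ : ℝ, 0 < δ ∧ δ ≤ 1 / 4 ∧ ∀ z, D.eval z ≠ 0 → |‖N.eval z / D.eval z‖ - 1| < δ →
      δ ≤ ‖deriv (fun x => N.eval x / D.eval x) z‖ := by
  let K : Set ℂ := {z | ‖D.eval z‖ ≤ 2 * ‖N.eval z‖ ∧ ‖N.eval z‖ ≤ 2 * ‖D.eval z‖}
  have hKc : IsClosed K := by
    refine IsClosed.inter (s₁ := {z | ‖D.eval z‖ ≤ 2 * ‖N.eval z‖})
      (s₂ := {z | ‖N.eval z‖ ≤ 2 * ‖D.eval z‖}) ?_ ?_ <;>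
    exact isClosed_le (by fun_prop) (by fun_prop)
  have hKb : Bornology.IsBounded K := by
    rw [Bornology.isBounded_def]
    filter_upwards [hinf, eventually_cobounded_eval_ne_zero hD,
      eventually_cobounded_le_norm (3 / c)] with z h1 h2 h3 h4
    rw [div_le_iff₀ hc] at h3
    nlinarith [norm_pos_iff.2 h2, h4.2]
  have hKD : ∀ z ∈ K, D.eval z ≠ 0 := by
    intro z hz h0
    refine hcop.eval_ne_zero h0 (norm_le_zero_iff.1 ?_)
    simpa [h0] using hz.2
  obtain ⟨a, ha, hK⟩ := (Metric.isCompact_of_isClosed_isBounded hKc hKb).exists_forall_le'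
    (f := fun z => max |‖N.eval z / D.eval z‖ - 1|
      ‖(derivative N * D - N * derivative D).eval z / D.eval z ^ 2‖) (a := 0)
    (fun z hz => by
      have h1 : ContinuousAt (fun x => N.eval x / D.eval x) z :=
        ContinuousAt.div (by fun_prop) (by fun_prop) (hKD z hz)
      have h2 : ContinuousAt (fun x => (derivative N * D - N * derivative D).eval x /
          D.eval x ^ 2) z :=
        ContinuousAt.div (by fun_prop) (by fun_prop) (pow_ne_zero 2 (hKD z hz))
      refine ContinuousAt.continuousWithinAt (Filter.Tendsto.max ?_ h2.norm)
      exact (h1.norm.sub continuousAt_const).abs)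
    (fun z hz => by
      rcases eq_or_ne ‖N.eval z / D.eval z‖ 1 with h1 | h1
      · refine lt_max_of_lt_right (norm_pos_iff.2 (div_ne_zero (hcrit z ?_)
          (pow_ne_zero 2 (hKD z hz))))
        rwa [norm_div, div_eq_one_iff_eq (norm_ne_zero_iff.2 (hKD z hz))] at h1
      · exact lt_max_of_lt_left (abs_pos.2 (sub_ne_zero.2 h1)))
  refine ⟨min a (1 / 4), lt_min ha (by norm_num), min_le_right _ _, fun z hz hlt => ?_⟩
  rw [(hasDerivAt_eval_div N D hz).deriv]
  have hpos := norm_pos_iff.2 hz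
  obtain ⟨h1, h2⟩ := abs_lt.1 (hlt.trans_le (min_le_right _ _))
  have hzK : z ∈ K := by
    rw [norm_div] at h1 h2
    have h3 := (div_lt_iff₀ hpos).1 (show ‖N.eval z‖ / ‖D.eval z‖ < 5 / 4 by linarith)
    have h4 := (lt_div_iff₀ hpos).1 (show 3 / 4 < ‖N.eval z‖ / ‖D.eval z‖ by linarith)
    constructor <;> linarith
  rcases le_max_iff.1 (hK z hzK) with h | h
  · exact absurd (hlt.trans_le (min_le_left _ _)) h.not_gt
  · exact (min_le_left _ _).trans h

/-- The map `b + (N / D) ^ n` extends to the sphere as soon as `N / D` is large at infinity. -/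
theorem isPolarExtension_ratMap_pow {N D : ℂ[X]} (hcop : IsCoprime N D) (hD : D ≠ 0) (b : ℂ)
    {c : ℝ} (hc : 0 < c)
    (hinf : ∀ᶠ z in Bornology.cobounded ℂ, c * ‖z‖ * ‖D.eval z‖ ≤ ‖N.eval z‖)
    {n : ℕ} (hn : n ≠ 0) :
    IsPolarExtension (ratMap (N ^ n + C b * D ^ n) (D ^ n))
      (fun z => b + (N.eval z / D.eval z) ^ n) {z | D.eval z = 0} := by
  have hgrow : ∀ r : ℝ, ∀ᶠ z in Bornology.cobounded ℂ,
      r * ‖(D ^ n).eval z‖ < ‖(N ^ n + C b * D ^ n).eval z‖ := by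
    intro r
    filter_upwards [hinf, eventually_cobounded_eval_ne_zero hD,
      eventually_cobounded_le_norm ((|r| + ‖b‖ + 1) / c)] with z h1 h2 h3
    have hpos := norm_pos_iff.2 h2
    have hR : |r| + ‖b‖ + 1 ≤ ‖N.eval z / D.eval z‖ := by
      rw [div_le_iff₀ hc] at h3
      rw [norm_div, le_div_iff₀ hpos]
      nlinarith
    have hRn : |r| + ‖b‖ + 1 ≤ ‖(N.eval z / D.eval z) ^ n‖ := by
      rw [norm_pow]
      exact hR.trans (le_self_pow₀ (by linarith [abs_nonneg r, norm_nonneg b]) hn)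
    have hsub := norm_sub_le_norm_add ((N.eval z / D.eval z) ^ n) b
    have hval : (N ^ n + C b * D ^ n).eval z =
        ((N.eval z / D.eval z) ^ n + b) * (D ^ n).eval z := by
      simp only [eval_add, eval_pow, eval_mul, eval_C, div_pow]
      field_simp
    rw [hval, norm_mul]
    have hpos' : 0 < ‖(D ^ n).eval z‖ := by
      rw [eval_pow]
      exact norm_pos_iff.2 (pow_ne_zero n h2)
    exact mul_lt_mul_of_pos_right (by linarith [le_abs_self r]) hpos'
  have hcop' : IsCoprime (N ^ n + C b * D ^ n) (D ^ n) := by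
    rw [mul_comm]
    exact (hcop.pow (m := n) (n := n)).add_mul_left_left (C b)
  have hcoe : ∀ z, D.eval z ≠ 0 → ratMap (N ^ n + C b * D ^ n) (D ^ n) z =
      ((b + (N.eval z / D.eval z) ^ n : ℂ) : OnePoint ℂ) := by
    intro z hz
    have hz' : (D ^ n).eval z ≠ 0 := by
      rw [eval_pow]
      exact pow_ne_zero n hz
    refine (ratVal_of_eval_ne_zero hz').trans (congrArg _ ?_)
    simp only [eval_add, eval_pow, eval_mul, eval_C, div_pow]
    field_simp
    ring
  refine ⟨continuous_ratMap hcop' hgrow, rfl, fun z hz => ?_, hcoe, fun z hz => ?_, fun y => ?_⟩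
  · refine ratVal_of_eval_eq_zero ?_
    rw [eval_pow, show D.eval z = 0 from hz, zero_pow hn]
  · exact (((hasDerivAt_eval_div N D hz).pow n).const_add b).differentiableAt
  · have hDfin := (Polynomial.finite_setOfPred_isRoot hD).countable
    induction y using OnePoint.rec with
    | infty =>
      refine ((hDfin.image ((↑) : ℂ → OnePoint ℂ)).insert OnePoint.infty).mono fun x hx => ?_
      induction x using OnePoint.rec with
      | infty => exact mem_insert _ _
      | coe z =>
        refine mem_insert_of_mem _ ⟨z, ?_, rfl⟩
        by_contra h0
        have : ratMap (N ^ n + C b * D ^ n) (D ^ n) z = OnePoint.infty := hx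
        rw [hcoe z h0] at this
        exact OnePoint.coe_ne_infty _ this
    | coe w =>
      have hne : N ^ n + C b * D ^ n - C w * D ^ n ≠ 0 := by
        intro h0
        obtain ⟨z, hz⟩ := (hgrow ‖w‖).exists
        rw [sub_eq_zero.1 h0, eval_mul, norm_mul, eval_C] at hz
        exact lt_irrefl _ hz
      refine ((Polynomial.finite_setOfPred_isRoot hne).countable.image
        ((↑) : ℂ → OnePoint ℂ)).mono fun x hx => ?_
      induction x using OnePoint.rec with
      | infty => exact absurd hx (OnePoint.infty_ne_coe w)
      | coe z =>
        refine ⟨z, ?_, rfl⟩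
        obtain ⟨h1, h2⟩ := ratVal_eq_coe.1 (show ratVal _ _ z = w from hx)
        rw [div_eq_iff h1] at h2
        simp only [IsRoot, mem_ofPred_eq, eval_sub, h2]
        simp

/-- Raising a rational function that grows at infinity to a high power gives a map with exactly two
attracting basins, one containing `{2 ≤ ‖N / D‖}` and the other `{‖N / D‖ ≤ 3 / 4}`. -/
theorem exists_rationalMap_basins {N D : ℂ[X]} (hcop : IsCoprime N D) {b : ℂ}
    (hDb : D.eval b ≠ 0) (hNb : N.eval b = 0) {c : ℝ} (hc : 0 < c)
    (hinf : ∀ᶠ z in Bornology.cobounded ℂ, c * ‖z‖ * ‖D.eval z‖ ≤ ‖N.eval z‖)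
    (hcrit : ∀ z, ‖N.eval z‖ = ‖D.eval z‖ → (derivative N * D - N * derivative D).eval z ≠ 0) :
    ∃ (f : OnePoint ℂ → OnePoint ℂ) (N' D' : ℂ[X]), Continuous f ∧ N' ≠ 0 ∧ D' ≠ 0 ∧
      (∀ z : ℂ, D'.eval z ≠ 0 → f z = ((N'.eval z / D'.eval z : ℂ) : OnePoint ℂ)) ∧
      f OnePoint.infty = OnePoint.infty ∧
      (∀ z : ℂ, f z = OnePoint.infty ↔ D.eval z = 0) ∧ f b = b ∧
      IsOpen (basin f OnePoint.infty) ∧ IsOpen (basin f b) ∧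
      frontier (basin f OnePoint.infty) = (basin f OnePoint.infty ∪ basin f b)ᶜ ∧
      frontier (basin f b) = (basin f OnePoint.infty ∪ basin f b)ᶜ ∧
      OnePoint.infty ∈ basin f OnePoint.infty ∧
      (∀ z : ℂ, 2 * ‖D.eval z‖ ≤ ‖N.eval z‖ → (z : OnePoint ℂ) ∈ basin f OnePoint.infty) ∧
      (∀ z : ℂ, D.eval z ≠ 0 → ‖N.eval z‖ ≤ 3 / 4 * ‖D.eval z‖ →
        (z : OnePoint ℂ) ∈ basin f b) := by
  have hD : D ≠ 0 := by
    rintro rfl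
    simp at hDb
  obtain ⟨δ, hδ, hδ4, hderiv⟩ := exists_le_norm_deriv_of_norm_near_one hcop hD hc hinf hcrit
  set R : ℂ → ℂ := fun z => N.eval z / D.eval z with hR
  have hRd : ∀ z, D.eval z ≠ 0 → DifferentiableAt ℂ R z := fun z hz =>
    (hasDerivAt_eval_div N D hz).differentiableAt
  have hRb : R b = 0 := by simp [hR, hNb]
  obtain ⟨M, hM1, hfar⟩ : ∃ M : ℝ, 1 ≤ M ∧ ∀ z, M ≤ ‖z‖ →
      D.eval z ≠ 0 ∧ c * ‖z‖ ≤ ‖R z‖ ∧ 2 ≤ ‖R z‖ := by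
    have hev : ∀ᶠ z in Bornology.cobounded ℂ,
        D.eval z ≠ 0 ∧ c * ‖z‖ ≤ ‖R z‖ ∧ 2 ≤ ‖R z‖ := by
      filter_upwards [hinf, eventually_cobounded_eval_ne_zero hD,
        eventually_cobounded_le_norm (2 / c)] with z h1 h2 h3
      have h4 : c * ‖z‖ ≤ ‖R z‖ := by
        rwa [hR, norm_div, le_div_iff₀ (norm_pos_iff.2 h2)]
      rw [div_le_iff₀ hc] at h3
      exact ⟨h2, h4, by linarith⟩
    obtain ⟨M, -, hM⟩ := hasBasis_cobounded_norm.eventually_iff.1 hev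
    exact ⟨max M 1, le_max_right _ _, fun z hz => hM ((le_max_left _ _).trans hz)⟩
  obtain ⟨L, hL, ρ, hρ, hnear⟩ : ∃ L : ℝ, 0 < L ∧ ∃ ρ : ℝ, 0 < ρ ∧ ∀ z, ‖z - b‖ < ρ →
      D.eval z ≠ 0 ∧ ‖R z‖ ≤ L * ‖z - b‖ ∧ ‖R z‖ ≤ 2⁻¹ := by
    obtain ⟨L, hL, hO⟩ := (hRd b hDb).isBigO_sub.exists_pos
    have hsmall : ∀ᶠ z in 𝓝 b, ‖R z‖ < 2⁻¹ := by
      refine (hRd b hDb).continuousAt.norm.eventually_lt continuousAt_const ?_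
      simp [hRb]
    obtain ⟨ρ, hρ, h⟩ := Metric.eventually_nhds_iff.1
      ((D.continuous.continuousAt.eventually_ne hDb).and (hO.bound.and hsmall))
    refine ⟨L, hL, ρ, hρ, fun z hz => ?_⟩
    obtain ⟨h1, h2, h3⟩ := h (by rwa [dist_eq_norm] : dist z b < ρ)
    exact ⟨h1, by simpa [hRb] using h2, h3.le⟩
  obtain ⟨k, hk1, hk2, hk3, hk4, hk5⟩ : ∃ k : ℕ, 2 + ‖b‖ ≤ 2 ^ k * c ∧ 2⁻¹ ^ k * L ≤ 2⁻¹ ∧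
      (1 - δ) ^ (k + 1) < ρ ∧ M + ‖b‖ < (1 + δ) ^ (k + 1) ∧ 2 ≤ k * (ρ / 2 * δ) := by
    have e1 : Tendsto (fun k : ℕ => (2 : ℝ) ^ k * c) atTop atTop :=
      (tendsto_pow_atTop_atTop_of_one_lt one_lt_two).atTop_mul_const hc
    have e2 : Tendsto (fun k : ℕ => (2⁻¹ : ℝ) ^ k * L) atTop (𝓝 0) := by
      simpa using (tendsto_pow_atTop_nhds_zero_of_lt_one (r := (2⁻¹ : ℝ)) (by norm_num)
        (by norm_num)).mul_const L
    have e3 : Tendsto (fun k : ℕ => (1 - δ) ^ (k + 1)) atTop (𝓝 0) :=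
      (tendsto_add_atTop_iff_nat 1).2
        (tendsto_pow_atTop_nhds_zero_of_lt_one (by linarith) (by linarith))
    have e4 : Tendsto (fun k : ℕ => (1 + δ) ^ (k + 1)) atTop atTop :=
      (tendsto_add_atTop_iff_nat 1).2 (tendsto_pow_atTop_atTop_of_one_lt (by linarith))
    have e5 : Tendsto (fun k : ℕ => (k : ℝ) * (ρ / 2 * δ)) atTop atTop :=
      tendsto_natCast_atTop_atTop.atTop_mul_const (by positivity)
    exact ((e1.eventually_ge_atTop _).and ((e2.eventually_le_const (by norm_num)).and
      ((e3.eventually_lt_const hρ).and ((e4.eventually_gt_atTop _).and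
        (e5.eventually_ge_atTop _))))).exists
  have hext := isPolarExtension_ratMap_pow hcop hD b hc hinf k.succ_ne_zero
  set f := ratMap (N ^ (k + 1) + C b * D ^ (k + 1)) (D ^ (k + 1)) with hf
  have hM0 : 0 < M := by linarith
  have hgfar : ∀ z : ℂ, M ≤ ‖z‖ → z ∉ {z | D.eval z = 0} ∧
      2 * ‖z‖ ≤ ‖b + (N.eval z / D.eval z) ^ (k + 1)‖ := by
    intro z hz
    obtain ⟨h1, h2, h3⟩ := hfar z hz
    refine ⟨h1, ?_⟩
    have h4 : 2 ^ k * (c * ‖z‖) ≤ ‖R z ^ (k + 1)‖ := by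
      rw [norm_pow, pow_succ]
      gcongr
    have h5 := norm_sub_le_norm_add (R z ^ (k + 1)) b
    rw [add_comm]
    change _ ≤ ‖R z ^ (k + 1) + b‖
    nlinarith [norm_nonneg b]
  have hgnear : ∀ z : ℂ, ‖z - b‖ < ρ → z ∉ {z | D.eval z = 0} ∧
      ‖b + (N.eval z / D.eval z) ^ (k + 1) - b‖ ≤ 2⁻¹ * ‖z - b‖ := by
    intro z hz
    obtain ⟨h1, h2, h3⟩ := hnear z hz
    refine ⟨h1, ?_⟩
    rw [add_sub_cancel_left, norm_pow, pow_succ]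
    calc ‖R z‖ ^ k * ‖R z‖ ≤ 2⁻¹ ^ k * (L * ‖z - b‖) := by gcongr
      _ = 2⁻¹ ^ k * L * ‖z - b‖ := by ring
      _ ≤ 2⁻¹ * ‖z - b‖ := by gcongr
  have hgexp : ∀ z ∉ {z | D.eval z = 0}, ρ ≤ ‖b + (N.eval z / D.eval z) ^ (k + 1) - b‖ →
      ‖b + (N.eval z / D.eval z) ^ (k + 1)‖ ≤ M →
      2 ≤ ‖deriv (fun z => b + (N.eval z / D.eval z) ^ (k + 1)) z‖ := by
    intro z hz h1 h2
    have hz' : D.eval z ≠ 0 := hz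
    have hd : HasDerivAt (fun z => b + R z ^ (k + 1))
        ((k + 1 : ℕ) * R z ^ k * deriv R z) z :=
      ((hRd z hz').hasDerivAt.pow (k + 1)).const_add b
    change 2 ≤ ‖deriv (fun z => b + R z ^ (k + 1)) z‖
    rw [hd.deriv]
    rw [add_sub_cancel_left, norm_pow] at h1
    change ρ ≤ ‖R z‖ ^ (k + 1) at h1
    change ‖b + R z ^ (k + 1)‖ ≤ M at h2
    have h3 := norm_sub_le_norm_add (R z ^ (k + 1)) b
    rw [norm_pow, add_comm (R z ^ (k + 1))] at h3
    have h4 : 1 - δ < ‖R z‖ := lt_of_pow_lt_pow_left₀ (k + 1) (norm_nonneg _) (hk3.trans_le h1)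
    have h5 : ‖R z‖ < 1 + δ := lt_of_pow_lt_pow_left₀ (k + 1) (by linarith) (by linarith)
    have h6 := hderiv z hz' (abs_lt.2 ⟨by linarith, by linarith⟩)
    rw [norm_mul, norm_mul, norm_pow, Complex.norm_natCast]
    have h7 : ρ / 2 ≤ ‖R z‖ ^ k := by
      rw [pow_succ] at h1
      nlinarith [pow_nonneg (norm_nonneg (R z)) k]
    calc (2 : ℝ) ≤ k * (ρ / 2 * δ) := hk5
      _ ≤ (k + 1 : ℕ) * (‖R z‖ ^ k * ‖deriv R z‖) := by
        gcongr
        exact k.le_succ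
      _ = _ := by ring
  obtain ⟨hbfar, hbnear, ho, ho', hfr, hfr'⟩ := hext.basins hM0 hρ hgfar hgnear hgexp
  have hinfmem : OnePoint.infty ∈ basin f OnePoint.infty :=
    tendsto_const_nhds.congr fun j => (Function.iterate_fixed hext.map_infty j).symm
  refine ⟨f, N ^ (k + 1) + C b * D ^ (k + 1), D ^ (k + 1), hext.continuous, ?_,
    pow_ne_zero _ hD, fun z hz => ratVal_of_eval_ne_zero hz, rfl, fun z => ⟨fun hz => ?_,
      fun hz => hext.map_pole z hz⟩, ?_, ho, ho', hfr, hfr', hinfmem, fun z hz => ?_,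
      fun z hz hz' => ?_⟩
  · intro h0
    have h1 := hgfar M (by rw [Complex.norm_real, Real.norm_of_nonneg hM0.le])
    have h2 := hext.map_coe M h1.1
    rw [hf, h0] at h2
    obtain ⟨-, h3⟩ := ratVal_eq_coe.1 (show ratVal _ _ _ = _ from h2)
    rw [← h3, Complex.norm_real, Real.norm_of_nonneg hM0.le] at h1
    simp only [eval_zero, zero_div, norm_zero] at h1
    linarith [h1.2]
  · by_contra h0
    rw [hext.map_coe z h0] at hz
    exact OnePoint.coe_ne_infty _ hz
  · rw [hext.map_coe b hDb]
    simp [hNb]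
  · rw [← mem_basin_iff_apply]
    by_cases h0 : D.eval z = 0
    · rwa [hext.map_pole z h0]
    · rw [hext.map_coe z h0]
      refine hbfar _ ?_
      have h2 : 2 ≤ ‖R z‖ := by rwa [hR, norm_div, le_div_iff₀ (norm_pos_iff.2 h0)]
      have h3 : (1 + δ) ^ (k + 1) ≤ ‖R z ^ (k + 1)‖ := by
        rw [norm_pow]
        exact pow_le_pow_left₀ (by linarith) (by linarith) _
      have h4 := norm_sub_le_norm_add (R z ^ (k + 1)) b
      rw [add_comm]
      linarith
  · rw [← mem_basin_iff_apply, hext.map_coe z hz]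
    refine hbnear _ ?_
    have h2 : ‖R z‖ ≤ 3 / 4 := by rwa [hR, norm_div, div_le_iff₀ (norm_pos_iff.2 hz)]
    rw [add_sub_cancel_left, norm_pow]
    exact (pow_le_pow_left₀ (norm_nonneg _) (by linarith) _).trans_lt hk3

theorem exists_eventually_mul_norm_le_norm_eval {Q : ℂ[X]} (hQ : 0 < Q.natDegree) :
    ∃ c : ℝ, 0 < c ∧ ∀ᶠ z in Bornology.cobounded ℂ, c * ‖z‖ - ‖Q.coeff 0‖ ≤ ‖Q.eval z‖ := by
  obtain ⟨c, hc, hev⟩ : ∃ c : ℝ, 0 < c ∧ ∀ᶠ z in Bornology.cobounded ℂ, c ≤ ‖Q.divX.eval z‖ := by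
    rcases Nat.eq_zero_or_pos Q.divX.natDegree with h0 | h0
    · obtain ⟨a, ha⟩ := natDegree_eq_zero.1 h0
      have ha0 : a ≠ 0 := by
        rintro rfl
        rw [C_0, eq_comm, divX_eq_zero_iff] at ha
        rw [ha, natDegree_C] at hQ
        exact lt_irrefl _ hQ
      exact ⟨‖a‖, norm_pos_iff.2 ha0, Eventually.of_forall fun z => by simp [← ha]⟩
    · exact ⟨1, one_pos, (Polynomial.tendsto_norm_atTop _ (natDegree_pos_iff_degree_pos.1 h0)
        tendsto_norm_cobounded_atTop).eventually_ge_atTop 1⟩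
  refine ⟨c, hc, hev.mono fun z hz => ?_⟩
  have hval : Q.eval z = Q.divX.eval z * z + Q.coeff 0 := by
    conv_lhs => rw [← divX_mul_X_add Q]
    simp
  have h1 := norm_sub_le_norm_add (Q.divX.eval z * z) (Q.coeff 0)
  rw [norm_mul] at h1
  rw [hval]
  nlinarith [norm_nonneg z]

theorem eventually_half_mul_norm_le {c : ℝ} (hc : 0 < c) (K : ℝ) :
    ∀ᶠ z : ℂ in Bornology.cobounded ℂ, c / 2 * ‖z‖ ≤ c * ‖z‖ - K := by
  filter_upwards [eventually_cobounded_le_norm (2 * K / c)] with z hz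
  rw [div_le_iff₀ hc] at hz
  linarith

theorem derivative_mul_sub_ne_zero {N D : ℂ[X]} (hcop : IsCoprime N D) (hD : D ≠ 0)
    (hN : N ≠ 0) {b : ℂ} (hb : N.eval b = 0) :
    derivative N * D - N * derivative D ≠ 0 := by
  intro h0
  have hdvd : D ∣ derivative D :=
    hcop.symm.dvd_of_dvd_mul_left ⟨derivative N, by linear_combination -h0⟩
  have hD' : derivative D = 0 := dvd_derivative_iff.1 hdvd
  rw [hD', mul_zero, sub_zero, mul_eq_zero, or_iff_left hD] at h0
  obtain ⟨a, rfl⟩ := natDegree_eq_zero.1 (derivative_eq_zero.1 h0)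
  rw [eval_C] at hb
  exact hN (by rw [hb, C_0])

/-- A sum of principal parts, one of them at infinity, produces a map with two attracting basins
which separate the points where the sum is large from those where it is small. -/
theorem exists_rationalMap_of_principalParts (S : Finset ℂ) (Q : ℂ → ℂ[X])
    (hQ : ∀ q ∈ S, 0 < (Q q).natDegree) {Q₀ : ℂ[X]} (hQ₀ : 0 < Q₀.natDegree)
    {b : ℂ} (hb : b ∉ S) (hRb : ‖Q₀.eval b + ∑ q ∈ S, (Q q).eval (b - q)⁻¹‖ ≤ 1 / 4) :
    ∃ (f : OnePoint ℂ → OnePoint ℂ) (N' D' : ℂ[X]), Continuous f ∧ N' ≠ 0 ∧ D' ≠ 0 ∧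
      (∀ z : ℂ, D'.eval z ≠ 0 → f z = ((N'.eval z / D'.eval z : ℂ) : OnePoint ℂ)) ∧
      f OnePoint.infty = OnePoint.infty ∧
      (∀ z : ℂ, f z = OnePoint.infty ↔ z ∈ S) ∧ f b = b ∧
      IsOpen (basin f OnePoint.infty) ∧ IsOpen (basin f b) ∧
      frontier (basin f OnePoint.infty) = (basin f OnePoint.infty ∪ basin f b)ᶜ ∧
      frontier (basin f b) = (basin f OnePoint.infty ∪ basin f b)ᶜ ∧
      OnePoint.infty ∈ basin f OnePoint.infty ∧
      (∀ z ∉ S, 3 ≤ ‖Q₀.eval z + ∑ q ∈ S, (Q q).eval (z - q)⁻¹‖ →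
        (z : OnePoint ℂ) ∈ basin f OnePoint.infty) ∧
      (∀ z ∉ S, ‖Q₀.eval z + ∑ q ∈ S, (Q q).eval (z - q)⁻¹‖ ≤ 1 / 4 →
        (z : OnePoint ℂ) ∈ basin f b) := by
  set R : ℂ → ℂ := fun z => Q₀.eval z + ∑ q ∈ S, (Q q).eval (z - q)⁻¹ with hR
  obtain ⟨N, D, hcop, hDS, hval⟩ := exists_isCoprime_eval_div_eq S Q hQ (Q₀ - C (R b))
  have hval' : ∀ z ∉ S, N.eval z / D.eval z = R z - R b := by
    intro z hz
    rw [hval z hz, eval_sub, eval_C]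
    simp only [hR]
    ring
  have hDne : ∀ z ∉ S, D.eval z ≠ 0 := fun z hz h0 => hz ((hDS z).1 h0)
  have hDb := hDne b hb
  have hD : D ≠ 0 := by
    rintro rfl
    simp at hDb
  have hNb : N.eval b = 0 := by
    have h0 := hval' b hb
    rw [sub_self, div_eq_zero_iff] at h0
    exact h0.resolve_right hDb
  obtain ⟨c, hc, hgrow⟩ : ∃ c : ℝ, 0 < c ∧ ∀ᶠ z in Bornology.cobounded ℂ,
      c * ‖z‖ * ‖D.eval z‖ ≤ ‖N.eval z‖ := by
    obtain ⟨c, hc, hQc⟩ := exists_eventually_mul_norm_le_norm_eval hQ₀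
    have hlim : Tendsto (fun z : ℂ => ‖(∑ q ∈ S, (Q q).eval (z - q)⁻¹) - R b‖)
        (Bornology.cobounded ℂ) (𝓝 ‖(∑ q ∈ S, (Q q).eval 0) - R b‖) :=
      ((tendsto_finsetSum _ fun q _ => ((Q q).continuous.tendsto 0).comp
        (tendsto_inv₀_cobounded.comp (tendsto_sub_const_cobounded q))).sub_const _).norm
    set K := ‖(∑ q ∈ S, (Q q).eval 0) - R b‖ + 1
    refine ⟨c / 2, by positivity, ?_⟩
    filter_upwards [hQc, hlim.eventually_le_const (lt_add_one _),
      eventually_half_mul_norm_le hc (‖Q₀.coeff 0‖ + K),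
      eventually_cobounded_eval_ne_zero hD] with z h1 h2 h3 h4
    have hzS : z ∉ S := fun hz => h4 ((hDS z).2 hz)
    rw [← le_div_iff₀ (norm_pos_iff.2 h4), ← norm_div, hval' z hzS]
    have h5 := norm_sub_le_norm_add (Q₀.eval z) ((∑ q ∈ S, (Q q).eval (z - q)⁻¹) - R b)
    have h6 : R z - R b = Q₀.eval z + ((∑ q ∈ S, (Q q).eval (z - q)⁻¹) - R b) := by
      simp only [hR]
      ring
    rw [h6]
    linarith
  have hN : N ≠ 0 := by
    rintro rfl
    obtain ⟨z, hz1, hz2, hz3⟩ := (hgrow.and ((eventually_cobounded_eval_ne_zero hD).and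
      (eventually_cobounded_le_norm 1))).exists
    rw [eval_zero, norm_zero] at hz1
    have := mul_pos (mul_pos hc (one_pos.trans_le hz3)) (norm_pos_iff.2 hz2)
    linarith
  have hW := derivative_mul_sub_ne_zero hcop hD hN hNb
  -- rescale to avoid critical values on the unit circle
  obtain ⟨s, ⟨hs1, hs2⟩, hs⟩ := (Set.Icc_infinite
    (show (1 : ℝ) < 3 / 2 by norm_num)).exists_notMem_finite
    ((Polynomial.finite_setOfPred_isRoot hW).image fun z => ‖D.eval z‖ / ‖N.eval z‖)
  have hs0 : (s : ℂ) ≠ 0 := by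
    rw [Complex.ofReal_ne_zero]
    linarith
  have hsn : ∀ z, ‖(C (s : ℂ) * N).eval z‖ = s * ‖N.eval z‖ := fun z => by
    rw [eval_mul, eval_C, norm_mul, Complex.norm_real, Real.norm_of_nonneg (by linarith)]
  have hcop' : IsCoprime (C (s : ℂ) * N) D :=
    (isCoprime_mul_unit_left_left (isUnit_C.2 hs0.isUnit) N D).2 hcop
  obtain ⟨f, N', D', hfc, hN', hD', hf, hfi, hfp, hfb, h1, h2, h3, h4, h5, h6, h7⟩ :=
    exists_rationalMap_basins hcop' hDb (by simp [hNb]) hc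
      (hgrow.mono fun z hz => by
        rw [hsn]
        nlinarith [norm_nonneg (N.eval z)])
      (fun z hz => by
        rw [hsn] at hz
        have hW' : derivative (C (s : ℂ) * N) * D - C (s : ℂ) * N * derivative D =
            C (s : ℂ) * (derivative N * D - N * derivative D) := by
          rw [derivative_C_mul]
          ring
        rw [hW', eval_mul, eval_C]
        refine mul_ne_zero hs0 fun hroot => hs ⟨z, hroot, ?_⟩
        have hNz : ‖N.eval z‖ ≠ 0 := by
          intro h0
          rw [h0, mul_zero, eq_comm, norm_eq_zero] at hz
          exact hcop.eval_ne_zero hz (norm_eq_zero.1 h0)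
        simp only
        rw [← hz, mul_div_cancel_right₀ _ hNz])
  have hnorm : ∀ z ∉ S, ‖N.eval z‖ = ‖R z - R b‖ * ‖D.eval z‖ := fun z hz => by
    rw [← hval' z hz, norm_div, div_mul_cancel₀ _ (norm_ne_zero_iff.2 (hDne z hz))]
  refine ⟨f, N', D', hfc, hN', hD', hf, hfi, fun z => (hfp z).trans (hDS z), hfb, h1, h2, h3, h4,
    h5, fun z hz hz' => h6 z ?_, fun z hz hz' => h7 z (hDne z hz) ?_⟩
  · rw [hsn, hnorm z hz, ← mul_assoc]
    have := norm_sub_norm_le (R z) (R b)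
    refine mul_le_mul_of_nonneg_right ?_ (norm_nonneg _)
    nlinarith
  · rw [hsn, hnorm z hz, ← mul_assoc]
    have := norm_sub_le (R z) (R b)
    refine mul_le_mul_of_nonneg_right ?_ (norm_nonneg _)
    nlinarith [norm_nonneg (R z - R b)]

/-- The fixed points `p` and `w` of `r` have open basins with common frontier, containing `E` and
`F` respectively, and `P` is the full preimage of `p`. -/
structure SeparatesBasins (r : OnePoint ℂ → OnePoint ℂ) (P : Set (OnePoint ℂ)) (p w : OnePoint ℂ)
    (E F : Set (OnePoint ℂ)) : Prop where
  map_left : r p = p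
  map_right : r w = w
  ne : p ≠ w
  preimage_left : r ⁻¹' {p} = P
  isOpen_left : IsOpen (basin r p)
  isOpen_right : IsOpen (basin r w)
  frontier_left : frontier (basin r p) = (basin r p ∪ basin r w)ᶜ
  frontier_right : frontier (basin r w) = (basin r p ∪ basin r w)ᶜ
  subset_left : E ⊆ basin r p
  subset_right : F ⊆ basin r w

theorem basin_conj (φ : OnePoint ℂ ≃ₜ OnePoint ℂ) (r : OnePoint ℂ → OnePoint ℂ)
    (w : OnePoint ℂ) : basin (φ.symm ∘ r ∘ φ) (φ.symm w) = φ ⁻¹' basin r w := by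
  have hsc : Function.Semiconj φ (φ.symm ∘ r ∘ φ) r := fun x => by simp
  ext x
  constructor
  · intro hx
    have h := (φ.continuous.tendsto (φ.symm w)).comp hx
    rw [φ.apply_symm_apply] at h
    exact h.congr fun n => hsc.iterate_right n x
  · intro hx
    refine ((φ.symm.continuous.tendsto w).comp hx).congr fun n => ?_
    rw [Function.comp_apply, ← hsc.iterate_right n x, φ.symm_apply_apply]

theorem SeparatesBasins.conj {r : OnePoint ℂ → OnePoint ℂ} {P : Set (OnePoint ℂ)}
    {p w : OnePoint ℂ} {E F : Set (OnePoint ℂ)} (h : SeparatesBasins r P p w E F)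
    (φ : OnePoint ℂ ≃ₜ OnePoint ℂ) :
    SeparatesBasins (φ.symm ∘ r ∘ φ) (φ ⁻¹' P) (φ.symm p) (φ.symm w) (φ ⁻¹' E) (φ ⁻¹' F) where
  map_left := by simp [h.map_left]
  map_right := by simp [h.map_right]
  ne := φ.symm.injective.ne h.ne
  preimage_left := by
    rw [← h.preimage_left]
    ext x
    simp
  isOpen_left := by
    rw [basin_conj]
    exact h.isOpen_left.preimage φ.continuous
  isOpen_right := by
    rw [basin_conj]
    exact h.isOpen_right.preimage φ.continuous
  frontier_left := by
    rw [basin_conj, basin_conj, ← φ.preimage_frontier, h.frontier_left]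
    rfl
  frontier_right := by
    rw [basin_conj, basin_conj, ← φ.preimage_frontier, h.frontier_right]
    rfl
  subset_left := by
    rw [basin_conj]
    exact preimage_mono h.subset_left
  subset_right := by
    rw [basin_conj]
    exact preimage_mono h.subset_right

/-- A polynomial in a coordinate `ψ` with pole at `q ∈ U` that is small off `U` and large on a
given compact subset of `U`. -/
theorem exists_polynomial_lemniscate_coord (ψ : OnePoint ℂ ≃ₜ OnePoint ℂ) {q : OnePoint ℂ}
    (hψ : ψ q = OnePoint.infty) {U E : Set (OnePoint ℂ)} (hU : IsOpen U)
    (hconn : IsPreconnected U) (hq : q ∈ U) (hinf : Uᶜ.Infinite) (hE : IsCompact E) (hEU : E ⊆ U)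
    {B : ℝ} (hB : 0 < B) :
    ∃ Q : ℂ[X], 0 < Q.natDegree ∧ ∀ (x : OnePoint ℂ) (w : ℂ), ψ x = w →
      (x ∉ U → ‖Q.eval w‖ ≤ B⁻¹) ∧ (x ∈ E → B ≤ ‖Q.eval w‖) := by
  obtain ⟨Q, hdeg, h1, h2⟩ := exists_polynomial_lemniscate (U := ψ '' U) (E := ψ '' E)
    (ψ.isOpenMap U hU) (hconn.image ψ ψ.continuous.continuousOn) ⟨q, hq, hψ⟩
    (by
      rw [← image_compl_eq ψ.bijective]
      exact hinf.image ψ.injective.injOn)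
    (hE.image ψ.continuous) (image_mono hEU) hB
  refine ⟨Q, hdeg, fun x w hxw => ⟨fun hx => h1 w ?_, fun hx => h2 w ⟨x, hx, hxw⟩⟩⟩
  rwa [← hxw, ψ.injective.mem_set_image]

/-- Given disjoint domains `U q` around finitely many points `q ∈ P`, including infinity, whose union
has infinite complement, there is a map with an attracting fixed point at infinity whose preimages
are the points of `P` and whose basin approximates the union from the inside. -/
theorem exists_separatesBasins_infty (S : Finset ℂ) {P : Set (OnePoint ℂ)}
    (hP : P = insert OnePoint.infty ((↑) '' (S : Set ℂ))) {U : OnePoint ℂ → Set (OnePoint ℂ)}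
    (hUo : ∀ q ∈ P, IsOpen (U q)) (hUc : ∀ q ∈ P, IsPreconnected (U q)) (hqU : ∀ q ∈ P, q ∈ U q)
    (hdisj : ∀ q ∈ P, ∀ q' ∈ P, q ≠ q' → Disjoint (U q) (U q'))
    (hinf : (⋃ q ∈ P, U q)ᶜ.Infinite) {E : Set (OnePoint ℂ)} (hE : IsCompact E)
    (hEU : E ⊆ ⋃ q ∈ P, U q) :
    ∃ (f : OnePoint ℂ → OnePoint ℂ) (N D : ℂ[X]) (w : OnePoint ℂ), Continuous f ∧ N ≠ 0 ∧ D ≠ 0 ∧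
      (∀ z : ℂ, D.eval z ≠ 0 → f z = ((N.eval z / D.eval z : ℂ) : OnePoint ℂ)) ∧
      SeparatesBasins f P OnePoint.infty w E (⋃ q ∈ P, U q)ᶜ := by
  classical
  have hPi : OnePoint.infty ∈ P := by simp [hP]
  have hPc : ∀ c : ℂ, (c : OnePoint ℂ) ∈ P ↔ c ∈ S := fun c => by simp [hP]
  set B : ℝ := 4 * (S.card + 1) with hB
  have hB0 : 0 < B := by positivity
  have hpoly : ∀ (ψ : OnePoint ℂ ≃ₜ OnePoint ℂ) (q : OnePoint ℂ), q ∈ P →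
      ψ q = OnePoint.infty → ∃ Q : ℂ[X], 0 < Q.natDegree ∧
        ∀ (x : OnePoint ℂ) (w : ℂ), ψ x = w →
          (x ∉ U q → ‖Q.eval w‖ ≤ B⁻¹) ∧ (x ∈ E → x ∈ U q → B ≤ ‖Q.eval w‖) := by
    intro ψ q hq hψ
    have hV : IsOpen (⋃ q' ∈ P \ {q}, U q') := isOpen_biUnion fun q' hq' => hUo q' hq'.1
    obtain ⟨Q, hdeg, hQ⟩ := exists_polynomial_lemniscate_coord ψ hψ (E := E \ ⋃ q' ∈ P \ {q}, U q')
      (hUo q hq) (hUc q hq) (hqU q hq)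
      (hinf.mono (compl_subset_compl.2 (subset_biUnion_of_mem hq))) (hE.diff hV)
      (fun x hx => by
        obtain ⟨q', hq', hxq'⟩ := mem_iUnion₂.1 (hEU hx.1)
        rcases eq_or_ne q' q with rfl | hne
        · exact hxq'
        · exact absurd (mem_biUnion (show q' ∈ P \ {q} from ⟨hq', hne⟩) hxq') hx.2) hB0
    refine ⟨Q, hdeg, fun x w hxw => ⟨(hQ x w hxw).1, fun hxE hxU => (hQ x w hxw).2 ⟨hxE, ?_⟩⟩⟩
    rw [mem_iUnion₂]
    rintro ⟨q', hq', hxq'⟩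
    exact disjoint_left.1 (hdisj q' hq'.1 q hq hq'.2) hxq' hxU
  obtain ⟨Q₀, hQ₀, hQ₀v⟩ := hpoly (Homeomorph.refl _) OnePoint.infty hPi rfl
  have hpolyS : ∀ c : ℂ, ∃ Q : ℂ[X], c ∈ S → 0 < Q.natDegree ∧ ∀ z : ℂ, z ≠ c →
      ((z : OnePoint ℂ) ∉ U c → ‖Q.eval (z - c)⁻¹‖ ≤ B⁻¹) ∧
      ((z : OnePoint ℂ) ∈ E → (z : OnePoint ℂ) ∈ U c → B ≤ ‖Q.eval (z - c)⁻¹‖) := by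
    intro c
    by_cases hc : c ∈ S
    · obtain ⟨Q, h1, h2⟩ := hpoly (recipHomeomorph c) c ((hPc c).2 hc) (recipHomeomorph_self c)
      exact ⟨Q, fun _ => ⟨h1, fun z hz => h2 z _ (recipHomeomorph_coe hz)⟩⟩
    · exact ⟨0, fun h => absurd h hc⟩
  choose Q hQ using hpolyS
  have hBcard : (S.card + 1 : ℝ) * B⁻¹ = 1 / 4 := by
    rw [hB]
    field_simp
  have hne : ∀ z ∉ S, ∀ c ∈ S, z ≠ c := fun z hz c hc h => hz (h ▸ hc)
  have hsmall : ∀ z ∉ S, (z : OnePoint ℂ) ∉ ⋃ q ∈ P, U q →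
      ‖Q₀.eval z + ∑ c ∈ S, (Q c).eval (z - c)⁻¹‖ ≤ 1 / 4 := by
    intro z hz hzU
    have hzU' : ∀ q ∈ P, (z : OnePoint ℂ) ∉ U q := fun q hq h => hzU (mem_biUnion hq h)
    have h1 := (hQ₀v z z rfl).1 (hzU' _ hPi)
    have h2 : ‖∑ c ∈ S, (Q c).eval (z - c)⁻¹‖ ≤ S.card • B⁻¹ :=
      (norm_sum_le_of_le S fun c hc => ((hQ c hc).2 z (hne z hz c hc)).1
        (hzU' c ((hPc c).2 hc))).trans_eq (by simp)
    rw [nsmul_eq_mul] at h2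
    have := norm_add_le (Q₀.eval z) (∑ c ∈ S, (Q c).eval (z - c)⁻¹)
    linarith
  have hlarge : ∀ z ∉ S, (z : OnePoint ℂ) ∈ E →
      3 ≤ ‖Q₀.eval z + ∑ c ∈ S, (Q c).eval (z - c)⁻¹‖ := by
    intro z hz hzE
    have hB4 : 4 ≤ B := by
      rw [hB]
      have : (0 : ℝ) ≤ S.card := by positivity
      linarith
    have hBi : 0 < B⁻¹ := inv_pos.2 hB0
    obtain ⟨q, hq, hzq⟩ := mem_iUnion₂.1 (hEU hzE)
    have hout : ∀ q' ∈ P, q ≠ q' → (z : OnePoint ℂ) ∉ U q' := fun q' hq' hqq' =>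
      disjoint_left.1 (hdisj q hq q' hq' hqq') hzq
    induction q using OnePoint.rec with
    | infty =>
      have h1 := (hQ₀v z z rfl).2 hzE hzq
      have h2 : ‖∑ c ∈ S, (Q c).eval (z - c)⁻¹‖ ≤ S.card • B⁻¹ :=
        (norm_sum_le_of_le S fun c hc => ((hQ c hc).2 z (hne z hz c hc)).1
          (hout c ((hPc c).2 hc) (OnePoint.infty_ne_coe c))).trans_eq (by simp)
      rw [nsmul_eq_mul] at h2
      have := norm_sub_le_norm_add (Q₀.eval z) (∑ c ∈ S, (Q c).eval (z - c)⁻¹)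
      linarith
    | coe q =>
      have hqS := (hPc q).1 hq
      have h1 := ((hQ q hqS).2 z (hne z hz q hqS)).2 hzE hzq
      have h2 := (hQ₀v z z rfl).1 (hout _ hPi (OnePoint.coe_ne_infty q))
      have h3 : ‖∑ c ∈ S.erase q, (Q c).eval (z - c)⁻¹‖ ≤ (S.erase q).card • B⁻¹ :=
        (norm_sum_le_of_le _ fun c hc => ((hQ c (Finset.mem_of_mem_erase hc)).2 z
          (hne z hz c (Finset.mem_of_mem_erase hc))).1
          (hout c ((hPc c).2 (Finset.mem_of_mem_erase hc)) fun h =>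
            Finset.ne_of_mem_erase hc (OnePoint.coe_injective h).symm)).trans_eq (by simp)
      have h4 : ((S.erase q).card : ℝ) ≤ S.card := by
        exact_mod_cast Finset.card_le_card (Finset.erase_subset q S)
      rw [nsmul_eq_mul] at h3
      rw [← Finset.add_sum_erase S _ hqS, add_left_comm]
      have h5 := norm_sub_le_norm_add ((Q q).eval (z - q)⁻¹)
        (Q₀.eval z + ∑ c ∈ S.erase q, (Q c).eval (z - c)⁻¹)
      have h6 := norm_add_le (Q₀.eval z) (∑ c ∈ S.erase q, (Q c).eval (z - c)⁻¹)
      nlinarith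
  have hnotS : ∀ z : ℂ, (z : OnePoint ℂ) ∉ ⋃ q ∈ P, U q → z ∉ S := fun z hz hzS =>
    hz (mem_biUnion ((hPc z).2 hzS) (hqU _ ((hPc z).2 hzS)))
  obtain ⟨x, hx⟩ := hinf.nonempty
  have hxi : ∀ x ∈ (⋃ q ∈ P, U q)ᶜ, ∃ z : ℂ, (z : OnePoint ℂ) = x := by
    refine fun x hx => OnePoint.ne_infty_iff_exists.1 ?_
    rintro rfl
    exact hx (mem_biUnion hPi (hqU _ hPi))
  obtain ⟨b, rfl⟩ := hxi x hx
  obtain ⟨f, N, D, hfc, hN, hD, hf, hfi, hfp, hfb, ho, ho', hfr, hfr', him, hlg, hsm⟩ :=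
    exists_rationalMap_of_principalParts S Q (fun c hc => (hQ c hc).1) hQ₀ (hnotS b hx)
      (hsmall b (hnotS b hx) hx)
  refine ⟨f, N, D, b, hfc, hN, hD, hf, hfi, hfb, OnePoint.infty_ne_coe b, ?_, ho, ho', hfr, hfr',
    fun x hx => ?_, fun x hx => ?_⟩
  · ext x
    induction x using OnePoint.rec with
    | infty => simp [hfi, hPi]
    | coe z => simp [hfp, hPc]
  · induction x using OnePoint.rec with
    | infty => exact him
    | coe z =>
      by_cases hz : z ∈ S
      · rw [← mem_basin_iff_apply, (hfp z).2 hz]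
        exact him
      · exact hlg z hz (hlarge z hz hx)
  · obtain ⟨z, rfl⟩ := hxi x hx
    exact hsm z (hnotS z hx) (hsmall z (hnotS z hx) hx)

theorem isRationalMap_conj_recipHomeomorph {f : OnePoint ℂ → OnePoint ℂ} (hf : Continuous f)
    {x y : OnePoint ℂ} (hxy : f x ≠ f y) {N D : ℂ[X]} (hN : N ≠ 0) (hD : D ≠ 0)
    (h : ∀ z : ℂ, D.eval z ≠ 0 → f z = ((N.eval z / D.eval z : ℂ) : OnePoint ℂ)) (c : ℂ) :
    IsRationalMap ((recipHomeomorph c).symm ∘ f ∘ recipHomeomorph c) := by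
  set φ := recipHomeomorph c with hφ
  let T : ℂ[X] := X ^ (D.natDegree + 1) * N.reverse * D.reverse
  have hT : T ≠ 0 :=
    mul_ne_zero (mul_ne_zero (pow_ne_zero _ X_ne_zero) (by simpa using hN)) (by simpa using hD)
  refine IsRationalMap.of_continuous (x := φ.symm x) (y := φ.symm y)
    (N := (C c * T + D.reverse ^ 2 * X ^ (N.natDegree + 1)).comp (X - C c))
    (D := T.comp (X - C c))
    (φ.symm.continuous.comp (hf.comp φ.continuous)) ?_ ?_ fun z hz => ?_
  · simpa using hxy
  · rw [Ne, comp_eq_zero_iff, not_or, and_iff_right hT, not_and]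
    intro _ h0
    have := congrArg natDegree h0
    simp at this
  · rw [eval_comp] at hz
    simp only [eval_comp, eval_sub, eval_X, eval_C] at hz ⊢
    set u := z - c with hu
    have hz' : u ^ (D.natDegree + 1) * N.reverse.eval u * D.reverse.eval u ≠ 0 := by
      simpa [T] using hz
    have hDr := right_ne_zero_of_mul hz'
    have hNr := right_ne_zero_of_mul (left_ne_zero_of_mul hz')
    have hu0 : u ≠ 0 := ne_zero_pow (Nat.succ_ne_zero _)
      (left_ne_zero_of_mul (left_ne_zero_of_mul hz'))
    have hN' := eval_inv_eq_reverse_div N hu0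
    have hD' := eval_inv_eq_reverse_div D hu0
    have hDne : D.eval u⁻¹ ≠ 0 := by
      rw [hD']
      exact div_ne_zero hDr (pow_ne_zero _ hu0)
    have hNne : N.eval u⁻¹ ≠ 0 := by
      rw [hN']
      exact div_ne_zero hNr (pow_ne_zero _ hu0)
    rw [Function.comp_apply, Function.comp_apply, hφ, recipHomeomorph_coe (sub_ne_zero.1 hu0),
      ← hu, h _ hDne, recipHomeomorph_symm_coe (div_ne_zero hNne hDne), hN', hD',
      OnePoint.coe_eq_coe]
    simp only [T, eval_add, eval_mul, eval_pow, eval_X, eval_C]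
    field_simp
    ring

/-- Disjoint domains `U q` around finitely many points `q ∈ P` can be approximated from the inside
by the basin of any given point of `P`. -/
theorem exists_rationalMap_separatesBasins {P : Set (OnePoint ℂ)} (hPfin : P.Finite)
    {p : OnePoint ℂ} (hp : p ∈ P) {U : OnePoint ℂ → Set (OnePoint ℂ)}
    (hUo : ∀ q ∈ P, IsOpen (U q)) (hUc : ∀ q ∈ P, IsPreconnected (U q)) (hqU : ∀ q ∈ P, q ∈ U q)
    (hdisj : ∀ q ∈ P, ∀ q' ∈ P, q ≠ q' → Disjoint (U q) (U q'))
    (hinf : (⋃ q ∈ P, U q)ᶜ.Infinite) {E : Set (OnePoint ℂ)} (hE : IsCompact E)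
    (hEU : E ⊆ ⋃ q ∈ P, U q) :
    ∃ (r : OnePoint ℂ → OnePoint ℂ) (w : OnePoint ℂ), IsRationalMap r ∧
      SeparatesBasins r P p w E (⋃ q ∈ P, U q)ᶜ := by
  have hPeq : ∀ P : Set (OnePoint ℂ), ∀ hP : P.Finite, OnePoint.infty ∈ P →
      P = insert OnePoint.infty ((↑) ''
        (((hP.preimage OnePoint.coe_injective.injOn).toFinset : Finset ℂ) : Set ℂ)) := by
    intro P hP hi
    ext x
    induction x using OnePoint.rec with
    | infty => simp [hi]
    | coe z => simp
  induction p using OnePoint.rec with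
  | infty =>
    obtain ⟨f, N, D, w, hfc, -, hD, hf, hsep⟩ := exists_separatesBasins_infty _
      (hPeq P hPfin hp) hUo hUc hqU hdisj hinf hE hEU
    refine ⟨f, w, IsRationalMap.of_continuous hfc (x := OnePoint.infty) (y := w) ?_ hD hf, hsep⟩
    rw [hsep.map_left, hsep.map_right]
    exact hsep.ne
  | coe c =>
    set φ := recipHomeomorph c with hφ
    have hUn : (⋃ q ∈ φ '' P, φ '' U (φ.symm q)) = φ '' ⋃ q ∈ P, U q := by
      rw [biUnion_image, image_iUnion₂]
      simp
    have hpinf : OnePoint.infty ∈ φ '' P := ⟨c, hp, recipHomeomorph_self c⟩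
    obtain ⟨f, N, D, w, hfc, hN, hD, hf, hsep⟩ := exists_separatesBasins_infty _
      (hPeq (φ '' P) (hPfin.image φ) hpinf) (U := fun q => φ '' U (φ.symm q)) (E := φ '' E)
      (forall_mem_image.2 fun q hq => by simpa using hUo q hq)
      (forall_mem_image.2 fun q hq => by
        simpa using (hUc q hq).image φ φ.continuous.continuousOn)
      (forall_mem_image.2 fun q hq => by simpa using hqU q hq)
      (forall_mem_image.2 fun q hq => forall_mem_image.2 fun q' hq' hne => by
        simp only [φ.symm_apply_apply]
        exact (disjoint_image_iff φ.injective).2 (hdisj q hq q' hq' fun h => hne (by rw [h])))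
      (by
        rw [hUn, ← image_compl_eq φ.bijective]
        exact hinf.image φ.injective.injOn)
      (hE.image φ.continuous)
      (by
        rw [hUn]
        exact image_mono hEU)
    have hconj := hsep.conj φ
    rw [hUn, ← image_compl_eq φ.bijective, preimage_image_eq _ φ.injective,
      preimage_image_eq _ φ.injective, preimage_image_eq _ φ.injective,
      (φ.symm_apply_eq.2 (recipHomeomorph_self c).symm : φ.symm OnePoint.infty = c)] at hconj
    refine ⟨_, _, isRationalMap_conj_recipHomeomorph hfc (x := OnePoint.infty) (y := w) ?_ hN hD
      hf c, hconj⟩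
    rw [hsep.map_left, hsep.map_right]
    exact hsep.ne

theorem infinite_of_isOpen_onePoint {A : Set (OnePoint ℂ)} (hA : IsOpen A) (hne : A.Nonempty) :
    A.Infinite := by
  obtain ⟨z, hz⟩ := OnePoint.denseRange_coe.exists_mem_open hA hne
  exact ((infinite_of_mem_nhds z ((hA.preimage OnePoint.continuous_coe).mem_nhds hz)).image
    OnePoint.coe_injective.injOn).mono (image_preimage_subset _ _)

theorem SeparatesBasins.goodBasins {m : MetricSpace (OnePoint ℂ)}
    {ε : ℝ} {A₁ A₂ J E F P : Set (OnePoint ℂ)} {r : OnePoint ℂ → OnePoint ℂ} {p w : OnePoint ℂ}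
    (h : SeparatesBasins r P p w E F) (hF : A₂ ⊆ F)
    (happrox : ∀ B₁ B₂ : Set (OnePoint ℂ), IsOpen B₁ → IsOpen B₂ → Disjoint B₁ B₂ → E ⊆ B₁ →
      A₂ ⊆ B₂ → @Metric.hausdorffDist _ m.toPseudoMetricSpace A₁ B₁ < ε ∧
        @Metric.hausdorffDist _ m.toPseudoMetricSpace A₂ B₂ < ε ∧
        @Metric.hausdorffDist _ m.toPseudoMetricSpace J (B₁ ∪ B₂)ᶜ < ε) :
    GoodBasins m ε A₁ A₂ J r p w :=
  ⟨h.isOpen_left, h.isOpen_right, disjoint_basin r h.ne, h.frontier_left, h.frontier_right,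
    happrox _ _ h.isOpen_left h.isOpen_right (disjoint_basin r h.ne) h.subset_left
      (hF.trans h.subset_right)⟩

/-- A compact subset of an open set `A` with infinite complement is contained in the basin of a
point `p`, and the complement of `A` in another basin, where the preimages of `p` are prescribed
points in distinct components of `A`. -/
theorem exists_rationalMap_separatesBasins_connectedComponentIn {A P E : Set (OnePoint ℂ)}
    (hA : IsOpen A) (hPfin : P.Finite) (hPA : P ⊆ A) (hinj : InjOn (connectedComponentIn A) P)
    {p : OnePoint ℂ} (hp : p ∈ P) (hE : IsCompact E)
    (hEP : E ⊆ ⋃ q ∈ P, connectedComponentIn A q) (hinf : Aᶜ.Infinite) :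
    ∃ (r : OnePoint ℂ → OnePoint ℂ) (w : OnePoint ℂ), IsRationalMap r ∧
      SeparatesBasins r P p w E (⋃ q ∈ P, connectedComponentIn A q)ᶜ := by
  refine exists_rationalMap_separatesBasins hPfin hp (fun q _ => hA.connectedComponentIn)
    (fun q _ => isPreconnected_connectedComponentIn)
    (fun q hq => mem_connectedComponentIn (hPA hq)) (fun q hq q' hq' hne => ?_)
    (hinf.mono <| compl_subset_compl.2 <|
      iUnion₂_subset fun q _ => connectedComponentIn_subset A q) hE hEP
  refine Set.disjoint_left.2 fun x hx hx' => hne (hinj hq hq' ?_)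
  rw [connectedComponentIn_eq hx, connectedComponentIn_eq hx']

/-- Finitely many components of an open set `A` cover a compact subset of `A`; they can be
represented by points lying in distinct components. -/
theorem IsCompact.exists_finite_injOn_connectedComponentIn {X : Type*} [TopologicalSpace X]
    [LocallyConnectedSpace X] {A E : Set X} (hE : IsCompact E) (hA : IsOpen A) (hEA : E ⊆ A) :
    ∃ P ⊆ A, P.Finite ∧ InjOn (connectedComponentIn A) P ∧
      E ⊆ ⋃ q ∈ P, connectedComponentIn A q := by
  obtain ⟨t, htA, htfin, ht⟩ := hE.elim_finite_subcover_image (b := A)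
    (c := connectedComponentIn A) (fun _ _ => hA.connectedComponentIn)
    (fun x hx => mem_biUnion (hEA hx) (mem_connectedComponentIn (hEA hx)))
  obtain ⟨P, hPt, hP⟩ := exists_subset_bijOn t (connectedComponentIn A)
  refine ⟨P, hPt.trans htA, htfin.subset hPt, hP.injOn, ?_⟩
  rwa [← sUnion_image, hP.image_eq, sUnion_image]

/-- **Theorem C**: any pair of disjoint open sets with common boundary decomposing the
sphere can be approximated by the pair of attracting basins of a rational map; moreover
the poles/preimage structure over one attracting fixed point can be prescribed. -/
theorem julia_set_approximation
    (m : MetricSpace (OnePoint ℂ)) (hm : InducesSphereTopology m)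
    (ε : ℝ) (hε : 0 < ε)
    (A₁ A₂ J : Set (OnePoint ℂ))
    (h₁ : IsOpen A₁) (h₂ : IsOpen A₂)
    (hne₁ : A₁.Nonempty) (hne₂ : A₂.Nonempty)
    (hdisj : Disjoint A₁ A₂)
    (hJ₁ : frontier A₁ = J) (hJ₂ : frontier A₂ = J)
    (hcover : A₁ ∪ A₂ ∪ J = Set.univ) :
    (∃ r : OnePoint ℂ → OnePoint ℂ, IsRationalMap r ∧
      ∃ w₁ w₂ : OnePoint ℂ, w₁ ≠ w₂ ∧ r w₁ = w₁ ∧ r w₂ = w₂ ∧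
        GoodBasins m ε A₁ A₂ J r w₁ w₂) ∧
    (∀ P : Set (OnePoint ℂ), (setComponents A₁).Finite → P ⊆ A₁ →
      (∀ C ∈ setComponents A₁, ∃! z, z ∈ P ∩ C) →
      ∀ p ∈ P, ∃ r : OnePoint ℂ → OnePoint ℂ, IsRationalMap r ∧
        r p = p ∧ r ⁻¹' {p} = P ∧
        ∃ w₂ : OnePoint ℂ, p ≠ w₂ ∧ r w₂ = w₂ ∧ GoodBasins m ε A₁ A₂ J r p w₂) := by
  obtain ⟨C, hC, hCA, happrox⟩ : ∃ C : Set (OnePoint ℂ), IsCompact C ∧ C ⊆ A₁ ∧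
      ∀ B₁ B₂ : Set (OnePoint ℂ), IsOpen B₁ → IsOpen B₂ → Disjoint B₁ B₂ → C ⊆ B₁ → A₂ ⊆ B₂ →
        @Metric.hausdorffDist _ m.toPseudoMetricSpace A₁ B₁ < ε ∧
        @Metric.hausdorffDist _ m.toPseudoMetricSpace A₂ B₂ < ε ∧
        @Metric.hausdorffDist _ m.toPseudoMetricSpace J (B₁ ∪ B₂)ᶜ < ε := by
    rw [← m.replaceTopology_eq hm.symm]
    exact @exists_isCompact_forall_hausdorffDist_lt _ (m.replaceTopology hm.symm)
      (inferInstanceAs (CompactSpace (OnePoint ℂ)))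
      (inferInstanceAs (LocallyConnectedSpace (OnePoint ℂ))) ε hε A₁ A₂ J h₂ hdisj hJ₁ hJ₂ hcover
  have hinf : A₁ᶜ.Infinite :=
    (infinite_of_isOpen_onePoint h₂ hne₂).mono (subset_compl_iff_disjoint_left.2 hdisj)
  have hA₂ (P : Set (OnePoint ℂ)) : A₂ ⊆ (⋃ q ∈ P, connectedComponentIn A₁ q)ᶜ :=
    (subset_compl_iff_disjoint_left.2 hdisj).trans <| compl_subset_compl.2 <|
      iUnion₂_subset fun q _ => connectedComponentIn_subset A₁ q
  constructor
  · obtain ⟨a, ha⟩ := hne₁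
    obtain ⟨P, hPA, hPfin, hinj, hCP⟩ :=
      (hC.insert a).exists_finite_injOn_connectedComponentIn h₁ (insert_subset ha hCA)
    obtain ⟨p, hp, -⟩ := mem_iUnion₂.1 (hCP (mem_insert a C))
    obtain ⟨r, w, hr, hrw⟩ := exists_rationalMap_separatesBasins_connectedComponentIn h₁ hPfin hPA
      hinj hp hC ((subset_insert a C).trans hCP) hinf
    exact ⟨r, hr, p, w, hrw.ne, hrw.map_left, hrw.map_right, hrw.goodBasins (hA₂ P) happrox⟩
  · intro P hfin hPA huniq p hp
    have hinj : InjOn (connectedComponentIn A₁) P := fun q hq q' hq' h =>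
      (huniq _ ⟨q, hPA hq, rfl⟩).unique ⟨hq, mem_connectedComponentIn (hPA hq)⟩
        ⟨hq', h ▸ mem_connectedComponentIn (hPA hq')⟩
    have hPfin : P.Finite := Finite.of_finite_image
      (hfin.subset (image_subset_iff.2 fun q hq => ⟨q, hPA hq, rfl⟩)) hinj
    have hCP : C ⊆ ⋃ q ∈ P, connectedComponentIn A₁ q := fun x hx => by
      obtain ⟨q, ⟨hqP, hqx⟩, -⟩ := huniq _ ⟨x, hCA hx, rfl⟩
      refine mem_biUnion hqP ?_
      rw [← connectedComponentIn_eq hqx]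
      exact mem_connectedComponentIn (hCA hx)
    obtain ⟨r, w, hr, hrw⟩ := exists_rationalMap_separatesBasins_connectedComponentIn h₁ hPfin hPA
      hinj hp hC hCP hinf
    exact ⟨r, hr, hrw.map_left, hrw.preimage_left, w, hrw.ne, hrw.map_right,
      hrw.goodBasins (hA₂ P) happrox⟩

end
end
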